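/- arXiv:0708.3718 — 7 statements merged into one kernel-verified Lean document; each statement's English description precedes it below -/
import Mathlib

section
/- Let A and B be C*-algebras and let J : A_sa → B be a bounded real-linear map defined on the self-adjoint part of A which is a Jordan homomorphism, i.e. J(a²) = J(a)² for every self-adjoint a in A. Then J sends zero products to zero products: for all self-adjoint a, b in A with ab = 0 one has J(a)J(b) = 0. -/
/-!
Taking adjoints in `a * b = 0` gives `b * a = 0`, and linearizing the Jordan identity shows that
`J` sends such an orthogonal pair to an anticommuting pair. By the continuous functional calculus
`a = p² - q²` with `p = √a⁺`, `q = √a⁻` and `p * q = 0`, and the C*-identity makes both `p` and `q`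
orthogonal to `b`. Hence `J p` anticommutes with `J b`, so `J (p²) = (J p)²` commutes with `J b`;
since it anticommutes with `J b` as well (`p²` and `b` are orthogonal), `J (p²) * J b = 0`. The same
holds for `q²`, and `J a = J (p²) - J (q²)`.
-/

/-- Over a self-adjoint `p`, the square can be cancelled in `p² * b = 0`, because
`(p * b)⋆ * (p * b) = b⋆ * (p² * b)`. -/
theorem mul_eq_zero_of_sq_mul_eq_zero {A : Type*} [NonUnitalCStarAlgebra A] {p b : A}
    (hp : IsSelfAdjoint p) (h : p * p * b = 0) : p * b = 0 := by
  rw [← CStarRing.star_mul_self_eq_zero_iff, star_mul, hp.star_eq, mul_assoc, ← mul_assoc p, h,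
    mul_zero]

/-- Every self-adjoint element is a difference of squares of orthogonal self-adjoint elements. -/
theorem exists_orthogonal_sq_sub_sq {A : Type*} [NonUnitalCStarAlgebra A] {a : A}
    (ha : IsSelfAdjoint a) :
    ∃ p q : A, IsSelfAdjoint p ∧ IsSelfAdjoint q ∧ p * q = 0 ∧ a = p * p - q * q := by
  refine ⟨cfcₙ (fun x : ℝ ↦ √x) a, cfcₙ (fun x : ℝ ↦ √(-x)) a, cfcₙ_predicate _ a,
    cfcₙ_predicate _ a, ?_, ?_⟩
  · rw [← cfcₙ_mul (fun x : ℝ ↦ √x) (fun x : ℝ ↦ √(-x)) a]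
    have h : (fun x : ℝ ↦ √x * √(-x)) = fun _ ↦ 0 := by
      funext x
      rcases le_total x 0 with hx | hx
      · simp [Real.sqrt_eq_zero_of_nonpos hx]
      · simp [Real.sqrt_eq_zero_of_nonpos (neg_nonpos.2 hx)]
    rw [h, cfcₙ_const_zero]
  · rw [← cfcₙ_mul (fun x : ℝ ↦ √x) (fun x : ℝ ↦ √x) a,
      ← cfcₙ_mul (fun x : ℝ ↦ √(-x)) (fun x : ℝ ↦ √(-x)) a,
      ← cfcₙ_sub (fun x : ℝ ↦ √x * √x) (fun x : ℝ ↦ √(-x) * √(-x)) a]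
    have h : (fun x : ℝ ↦ √x * √x - √(-x) * √(-x)) = fun x ↦ x := by
      funext x
      rcases le_total x 0 with hx | hx
      · simp [Real.sqrt_eq_zero_of_nonpos hx, Real.mul_self_sqrt (neg_nonneg.2 hx)]
      · simp [Real.sqrt_eq_zero_of_nonpos (neg_nonpos.2 hx), Real.mul_self_sqrt hx]
    rw [h, cfcₙ_id' ℝ a]

/-- Let `A` and `B` be (not necessarily unital) C*-algebras and let
`J : A_sa → B` be a bounded real-linear map on the self-adjoint part of `A` which is a
Jordan homomorphism, i.e. `J(a²) = J(a)²` for every self-adjoint `a`.  Then `J` sends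
zero products to zero products: `a * b = 0` implies `J a * J b = 0`. -/
theorem jordan_hom_selfAdjoint_zero_product_preserving
    {A B : Type*} [NonUnitalCStarAlgebra A] [NonUnitalCStarAlgebra B]
    (J : selfAdjoint A →L[ℝ] B)
    (hJordan : ∀ a : selfAdjoint A,
      J ⟨(a : A) * (a : A), by have h := IsSelfAdjoint.star_mul_self (a : A); rwa [a.prop.star_eq] at h⟩ = J a * J a)
    (a b : selfAdjoint A) (hab : (a : A) * (b : A) = 0) :
    J a * J b = 0 := by
  have sq_mem (c : selfAdjoint A) : (c : A) * (c : A) ∈ selfAdjoint A := by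
    have h := IsSelfAdjoint.star_mul_self (c : A)
    rwa [c.prop.star_eq] at h
  have hJ (c : selfAdjoint A) : J ⟨(c : A) * (c : A), sq_mem c⟩ = J c * J c := hJordan c
  have anti (c : selfAdjoint A) (hc : (c : A) * (b : A) = 0) : J c * J b + J b * J c = 0 := by
    have hc' : (b : A) * (c : A) = 0 := by
      simpa [c.prop.star_eq, b.prop.star_eq] using congrArg star hc
    have e : (⟨((c + b : selfAdjoint A) : A) * ((c + b : selfAdjoint A) : A), sq_mem (c + b)⟩ :
        selfAdjoint A) = ⟨(c : A) * (c : A), sq_mem c⟩ + ⟨(b : A) * (b : A), sq_mem b⟩ := by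
      ext
      simp [mul_add, add_mul, hc, hc']
    have h := hJ (c + b)
    rw [e, map_add, map_add, hJ, hJ, mul_add, add_mul, add_mul] at h
    have h2 : J c * J c + J b * J b + (J c * J b + J b * J c) = J c * J c + J b * J b := by
      conv_rhs => rw [h]
      abel
    simpa using h2
  have sq_zero (c : selfAdjoint A) (hc : (c : A) * (b : A) = 0) :
      J ⟨(c : A) * (c : A), sq_mem c⟩ * J b = 0 := by
    have h1 := anti c hc
    have h2 := anti ⟨(c : A) * (c : A), sq_mem c⟩ (by simp [mul_assoc, hc])
    rw [hJ] at h2 ⊢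
    have h3 : J c * J b = -(J b * J c) := eq_neg_of_add_eq_zero_left h1
    have h4 : J c * J c * J b = J b * (J c * J c) := by
      rw [mul_assoc, h3, mul_neg, ← mul_assoc, h3, neg_mul, neg_neg, mul_assoc]
    rw [← h4, ← two_smul ℝ] at h2
    exact (smul_eq_zero.1 h2).resolve_left two_ne_zero
  obtain ⟨p, q, hp, hq, hpq, e⟩ := exists_orthogonal_sq_sub_sq a.prop
  have hqp : q * p = 0 := by simpa [hp.star_eq, hq.star_eq] using congrArg star hpq
  have hpp : IsSelfAdjoint (p * p) := sq_mem ⟨p, hp⟩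
  have hqq : IsSelfAdjoint (q * q) := sq_mem ⟨q, hq⟩
  -- `p² * a = p⁴`, so `p⁴ * b = 0`, and two cancellations leave `p * b = 0`; likewise for `q`.
  have hpb : p * b = 0 := by
    refine mul_eq_zero_of_sq_mul_eq_zero hp (mul_eq_zero_of_sq_mul_eq_zero hpp ?_)
    have h : p * p * (p * p) = p * p * a := by
      rw [e, mul_sub, mul_assoc p p (q * q), ← mul_assoc p q q, hpq, zero_mul, mul_zero, sub_zero]
    rw [h, mul_assoc, hab, mul_zero]
  have hqb : q * b = 0 := by
    refine mul_eq_zero_of_sq_mul_eq_zero hq (mul_eq_zero_of_sq_mul_eq_zero hqq ?_)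
    have h : q * q * (q * q) = -(q * q * a) := by
      rw [e, mul_sub, mul_assoc q q (p * p), ← mul_assoc q p p, hqp, zero_mul, mul_zero, zero_sub,
        neg_neg]
    rw [h, neg_mul, mul_assoc, hab, mul_zero, neg_zero]
  have ea : a = ⟨p * p, hpp⟩ - ⟨q * q, hqq⟩ := Subtype.ext e
  rw [ea, map_sub, sub_mul, sq_zero ⟨p, hp⟩ hpb, sq_zero ⟨q, hq⟩ hqb, sub_zero]
end

section
/- Let A be a unital C*-algebra, B a C*-algebra, and θ : A → B a bounded (complex-)linear map such that θ(a)θ(b) = 0 whenever a, b are self-adjoint elements of A with ab = 0. Then θ(1) commutes with θ(a) for every a in A, i.e. θ(1)θ(a) = θ(a)θ(1). -/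
/-!
By complex linearity it suffices to treat self-adjoint `a`. The continuous functional calculus then
yields a bounded real-linear map `T : C(K, ℝ) → B`, with `K` the spectrum of `a`, such that
`T f * T g = 0` whenever `f * g = 0`; the goal becomes `T f * T 1 = T 1 * T f`
for `f` the inclusion `K → ℝ`.

The key point is that `‖T f * T 1 - T 1 * T f‖ ≤ 12 ‖T‖²` with a bound *independent of `f`*
(`norm_commutator_le`); replacing `f` by `n • f` and letting `n → ∞` forces the commutator to vanish.

To get the uniform bound, translate `f` by a constant so that `0 ≤ f`, and write `1` as the sum of
the hat functions of `f` centred at the natural numbers, grouped into three classes according to the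
centre modulo `3`. Within a class the hats `p i` have disjoint supports, and so do slightly wider
plateau functions `r i` equal to `1` on the support of `p i`. On the support of `r i` the function
`f` is within `2` of the constant `i`. Since `T (p i) * T (r j) = 0` for `i ≠ j`, the locally constant
replacement of `f` can be moved freely from the left factor to the right one, so for `P = ∑ p i`
the difference `T (f * P) * T 1 - T P * T f` is bounded by `4 ‖T‖²` (`norm_block_le`).
-/

open Finset

/-- A sum of pairwise disjointly supported functions is no larger than its largest term. -/
lemma norm_sum_le_of_disjoint {K : Type*} [TopologicalSpace K] [CompactSpace K]
    (S : Finset ℕ) (u : ℕ → C(K, ℝ)) (C : ℝ) (hC : 0 ≤ C) (hu : ∀ i ∈ S, ∀ k, |u i k| ≤ C)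
    (hd : ∀ i ∈ S, ∀ j ∈ S, i ≠ j → u i * u j = 0) : ‖∑ i ∈ S, u i‖ ≤ C := by
  rw [ContinuousMap.norm_le _ hC]
  intro k
  rw [ContinuousMap.sum_apply, Real.norm_eq_abs]
  by_cases h : ∃ i ∈ S, u i k ≠ 0
  · obtain ⟨i, hi, hik⟩ := h
    rw [Finset.sum_eq_single i]
    · exact hu i hi k
    · intro j hj hji
      have := congrArg (fun v : C(K, ℝ) => v k) (hd j hj i hi hji)
      simp only [ContinuousMap.mul_apply, ContinuousMap.zero_apply] at this
      exact (mul_eq_zero.mp this).resolve_right hik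
    · exact fun h => absurd hi h
  · push Not at h
    rw [Finset.sum_eq_zero h]
    simpa using hC

/-- The estimate for one class of hats `p i` with plateaus `r i`: wherever `r i` is nonzero, `f` is
within `2` of the constant `i`. -/
lemma norm_block_le {K B : Type*} [TopologicalSpace K] [CompactSpace K]
    [NonUnitalCStarAlgebra B] (T : C(K, ℝ) →L[ℝ] B)
    (hT : ∀ f g : C(K, ℝ), f * g = 0 → T f * T g = 0) (f : C(K, ℝ))
    (S : Finset ℕ) (p r : ℕ → C(K, ℝ))
    (hp : ∀ i k, |p i k| ≤ 1) (hr : ∀ i k, |r i k| ≤ 1)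
    (hpr : ∀ i, p i * r i = p i)
    (hd : ∀ i ∈ S, ∀ j ∈ S, i ≠ j → r i * r j = 0)
    (hf : ∀ i k, r i k ≠ 0 → |f k - i| ≤ 2) :
    ‖T (f * ∑ i ∈ S, p i) * T 1 - T (∑ i ∈ S, p i) * T f‖ ≤ 4 * ‖T‖ ^ 2 := by
  have hpr' : ∀ i ∈ S, ∀ j ∈ S, i ≠ j → p i * r j = 0 := by
    intro i hi j hj hij
    rw [← hpr i, mul_assoc, hd i hi j hj hij, mul_zero]
  have hpp : ∀ i ∈ S, ∀ j ∈ S, i ≠ j → p i * p j = 0 := by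
    intro i hi j hj hij
    rw [← hpr j, mul_comm (p j), ← mul_assoc, hpr' i hi j hj hij, zero_mul]
  set P := ∑ i ∈ S, p i with hP
  set R := ∑ i ∈ S, r i with hR
  have hPR : P * R = P := by
    rw [hP, hR, Finset.sum_mul_sum]
    refine Finset.sum_congr rfl fun i hi => ?_
    rw [Finset.sum_eq_single i (fun j hj hji => hpr' i hi j hj hji.symm)
      (fun h => absurd hi h), hpr]
  have hbr : ∀ i k, |r i k * (f k - i)| ≤ 2 := by
    intro i k
    by_cases h : r i k = 0
    · simp [h]
    · rw [abs_mul]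
      nlinarith [hr i k, hf i k h, abs_nonneg (r i k), abs_nonneg (f k - i)]
  have hbp : ∀ i k, |p i k * (f k - i)| ≤ 2 := by
    intro i k
    have h := congrArg (fun v : C(K, ℝ) => v k) (hpr i)
    simp only [ContinuousMap.mul_apply] at h
    rw [← h, mul_assoc, abs_mul]
    nlinarith [hp i k, hbr i k, abs_nonneg (p i k), abs_nonneg (r i k * (f k - i))]
  -- `f` is replaced by the locally constant function with value `i` on the support of `r i`.
  set X := ∑ i ∈ S, p i * (f - ContinuousMap.const K (i : ℝ)) with hX
  set Y := ∑ i ∈ S, r i * (f - ContinuousMap.const K (i : ℝ)) with hY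
  have hc : ∀ (c : ℝ) (v : C(K, ℝ)), v * ContinuousMap.const K c = c • v := by
    intro c v; ext k; simp [mul_comm]
  have eX : f * P = X + ∑ i ∈ S, (i : ℝ) • p i := by
    rw [hX, hP, Finset.mul_sum, ← Finset.sum_add_distrib]
    refine Finset.sum_congr rfl fun i _ => ?_
    rw [← hc]; ring
  have eY : f * R = Y + ∑ i ∈ S, (i : ℝ) • r i := by
    rw [hY, hR, Finset.mul_sum, ← Finset.sum_add_distrib]
    refine Finset.sum_congr rfl fun i _ => ?_
    rw [← hc]; ring
  have nX : ‖X‖ ≤ 2 := by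
    refine norm_sum_le_of_disjoint S _ 2 (by norm_num) (fun i _ k => by simpa using hbp i k) ?_
    intro i hi j hj hij
    rw [mul_mul_mul_comm, hpp i hi j hj hij, zero_mul]
  have nY : ‖Y‖ ≤ 2 := by
    refine norm_sum_le_of_disjoint S _ 2 (by norm_num) (fun i _ k => by simpa using hbr i k) ?_
    intro i hi j hj hij
    rw [mul_mul_mul_comm, hd i hi j hj hij, zero_mul]
  have nP : ‖P‖ ≤ 1 :=
    norm_sum_le_of_disjoint S _ 1 (by norm_num) (fun i _ k => hp i k) hpp
  have nR : ‖R‖ ≤ 1 :=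
    norm_sum_le_of_disjoint S _ 1 (by norm_num) (fun i _ k => hr i k) hd
  have hloc : T (f * P) * T 1 = T (f * P) * T R := by
    have := hT (f * P) (1 - R) (by rw [mul_sub, mul_one, mul_assoc, hPR, sub_self])
    rwa [map_sub, mul_sub, sub_eq_zero] at this
  have hloc' : T P * T f = T P * T (f * R) := by
    have := hT P (f - f * R) (by rw [mul_sub, mul_left_comm, hPR, mul_comm, sub_self])
    rwa [map_sub, mul_sub, sub_eq_zero] at this
  have hdiag : T (∑ i ∈ S, (i : ℝ) • p i) * T R = T P * T (∑ i ∈ S, (i : ℝ) • r i) := by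
    simp only [hP, hR, map_sum, map_smul, Finset.sum_mul_sum]
    refine Finset.sum_congr rfl fun i hi => Finset.sum_congr rfl fun j hj => ?_
    rw [smul_mul_assoc, mul_smul_comm]
    by_cases hij : i = j
    · rw [hij]
    · rw [hT _ _ (hpr' i hi j hj hij), smul_zero, smul_zero]
  have key : T (f * P) * T 1 - T P * T f = T X * T R - T P * T Y := by
    rw [hloc, hloc', eX, eY, map_add, map_add, add_mul, mul_add, hdiag]
    abel
  have b : ∀ u v : C(K, ℝ), ‖T u * T v‖ ≤ ‖T‖ ^ 2 * (‖u‖ * ‖v‖) := by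
    intro u v
    calc ‖T u * T v‖ ≤ ‖T u‖ * ‖T v‖ := norm_mul_le _ _
      _ ≤ (‖T‖ * ‖u‖) * (‖T‖ * ‖v‖) := by gcongr <;> exact T.le_opNorm _
      _ = _ := by ring
  rw [key]
  have h1 : ‖X‖ * ‖R‖ ≤ 2 := by nlinarith [norm_nonneg X, norm_nonneg R]
  have h2 : ‖P‖ * ‖Y‖ ≤ 2 := by nlinarith [norm_nonneg P, norm_nonneg Y]
  have h3 := norm_sub_le (T X * T R) (T P * T Y)
  nlinarith [b X R, b P Y, sq_nonneg ‖T‖]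

/-- The function `t ↦ min (max t 0) 1`. -/
def clampUnit (t : ℝ) : ℝ := min (max t 0) 1

/-- Splitting `1` into three classes of disjointly supported hats along the level sets of `f` gives
three blocks, each bounded by `norm_block_le`. -/
lemma norm_commutator_le_of_nonneg {K B : Type*} [TopologicalSpace K] [CompactSpace K]
    [NonUnitalCStarAlgebra B] (T : C(K, ℝ) →L[ℝ] B)
    (hT : ∀ f g : C(K, ℝ), f * g = 0 → T f * T g = 0) (f : C(K, ℝ)) (hf : ∀ k, 0 ≤ f k) :
    ‖T f * T 1 - T 1 * T f‖ ≤ 12 * ‖T‖ ^ 2 := by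
  obtain ⟨N, hN⟩ := exists_nat_ge ‖f‖
  have hfN : ∀ k, f k ≤ N := fun k =>
    (le_abs_self _).trans ((f.norm_coe_le_norm k).trans hN)
  -- The hats are differences of consecutive ramps, so that their sum telescopes.
  let g : ℕ → C(K, ℝ) := fun i =>
    ⟨fun k => clampUnit (f k - i + 1), by unfold clampUnit; fun_prop⟩
  let p : ℕ → C(K, ℝ) := fun i => g i - g (i + 1)
  let r : ℕ → C(K, ℝ) := fun i =>
    ⟨fun k => clampUnit (3 - 2 * |f k - i|), by unfold clampUnit; fun_prop⟩
  have hpk : ∀ i k, p i k = clampUnit (f k - i + 1) - clampUnit (f k - i) := by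
    intro i k
    simp only [p, g, ContinuousMap.sub_apply, ContinuousMap.coe_mk]
    push_cast
    congr 2
    ring
  have hrk : ∀ i k, r i k = clampUnit (3 - 2 * |f k - i|) := fun _ _ => rfl
  have hp : ∀ i k, |p i k| ≤ 1 := by
    intro i k
    rw [hpk, abs_le]
    unfold clampUnit
    constructor <;> grind
  have hr : ∀ i k, |r i k| ≤ 1 := by
    intro i k
    rw [hrk, abs_le]
    unfold clampUnit
    constructor <;> grind
  have hr0 : ∀ i k, r i k ≠ 0 → |f k - i| < 3 / 2 := by
    intro i k h
    rw [hrk] at h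
    unfold clampUnit at h
    by_contra! h'
    exact h (by grind)
  have hpr : ∀ i, p i * r i = p i := by
    intro i
    ext k
    rw [ContinuousMap.mul_apply]
    by_cases h : |f k - i| ≤ 1
    · have : r i k = 1 := by rw [hrk]; unfold clampUnit; grind
      rw [this, mul_one]
    · have : p i k = 0 := by rw [hpk]; unfold clampUnit; grind
      rw [this, zero_mul]
  have hsum : ∑ i ∈ range (N + 1), p i = 1 := by
    rw [Finset.sum_range_sub']
    ext k
    have h0 := hf k
    have h1 := hfN k
    simp only [g, ContinuousMap.sub_apply, ContinuousMap.coe_mk, ContinuousMap.one_apply]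
    push_cast
    unfold clampUnit
    grind
  have hcls : ∑ c ∈ range 3, ∑ i ∈ range (N + 1) with i % 3 = c, p i = 1 := by
    rw [Finset.sum_fiberwise_of_maps_to, hsum]
    intro i _
    exact Finset.mem_range.mpr (Nat.mod_lt _ (by norm_num))
  have hblock : ∀ c, ‖T (f * ∑ i ∈ range (N + 1) with i % 3 = c, p i) * T 1
      - T (∑ i ∈ range (N + 1) with i % 3 = c, p i) * T f‖ ≤ 4 * ‖T‖ ^ 2 := by
    intro c
    refine norm_block_le T hT f _ p r hp hr hpr ?_ fun i k h => by linarith [hr0 i k h]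
    intro i hi j hj hij
    have hi' := (Finset.mem_filter.mp hi).2
    have hj' := (Finset.mem_filter.mp hj).2
    ext k
    rw [ContinuousMap.mul_apply, ContinuousMap.zero_apply]
    by_contra h
    have ha := abs_lt.mp (hr0 i k (left_ne_zero_of_mul h))
    have hb := abs_lt.mp (hr0 j k (right_ne_zero_of_mul h))
    have h1 : (i : ℝ) < j + 3 := by linarith
    have h2 : (j : ℝ) < i + 3 := by linarith
    norm_cast at h1 h2
    omega
  have hdec : T f * T 1 - T 1 * T f =
      ∑ c ∈ range 3, (T (f * ∑ i ∈ range (N + 1) with i % 3 = c, p i) * T 1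
      - T (∑ i ∈ range (N + 1) with i % 3 = c, p i) * T f) := by
    rw [Finset.sum_sub_distrib, ← Finset.sum_mul, ← Finset.sum_mul, ← map_sum, ← map_sum,
      ← Finset.mul_sum, hcls, mul_one]
  rw [hdec]
  refine (norm_sum_le_of_le _ fun c _ => hblock c).trans ?_
  rw [Finset.sum_const, Finset.card_range]
  simp only [nsmul_eq_mul]
  push_cast
  linarith

/-- The bound does not depend on `f`, so scaling `f` makes the commutator vanish. -/
lemma norm_commutator_le {K B : Type*} [TopologicalSpace K] [CompactSpace K]
    [NonUnitalCStarAlgebra B] (T : C(K, ℝ) →L[ℝ] B)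
    (hT : ∀ f g : C(K, ℝ), f * g = 0 → T f * T g = 0) (f : C(K, ℝ)) :
    ‖T f * T 1 - T 1 * T f‖ ≤ 12 * ‖T‖ ^ 2 := by
  have h := norm_commutator_le_of_nonneg T hT (f + ‖f‖ • (1 : C(K, ℝ))) fun k => by
    have := (abs_le.mp (f.norm_coe_le_norm k)).1
    simp only [ContinuousMap.add_apply, ContinuousMap.smul_apply, ContinuousMap.one_apply,
      smul_eq_mul, mul_one]
    linarith
  -- Adding a constant to `f` does not change the commutator.
  rwa [map_add, map_smul, add_mul, mul_add, smul_mul_assoc, mul_smul_comm,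
    add_sub_add_right_eq_sub] at h

lemma map_mul_map_one_comm {K B : Type*} [TopologicalSpace K] [CompactSpace K]
    [NonUnitalCStarAlgebra B] (T : C(K, ℝ) →L[ℝ] B)
    (hT : ∀ f g : C(K, ℝ), f * g = 0 → T f * T g = 0) (f : C(K, ℝ)) :
    T f * T 1 = T 1 * T f := by
  rw [← sub_eq_zero, ← norm_eq_zero]
  by_contra hne
  have hpos := (norm_nonneg (T f * T 1 - T 1 * T f)).lt_of_ne' hne
  obtain ⟨n, hn⟩ := exists_nat_gt (12 * ‖T‖ ^ 2 / ‖T f * T 1 - T 1 * T f‖)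
  have h := norm_commutator_le T hT ((n : ℝ) • f)
  rw [map_smul, smul_mul_assoc, mul_smul_comm, ← smul_sub, norm_smul, Real.norm_natCast] at h
  rw [div_lt_iff₀ hpos] at hn
  linarith

lemma theta_one_commutes_of_isSelfAdjoint
    {A B : Type*} [CStarAlgebra A] [NonUnitalCStarAlgebra B]
    (θ : A →L[ℂ] B)
    (hθ : ∀ a b : A, IsSelfAdjoint a → IsSelfAdjoint b → a * b = 0 → θ a * θ b = 0)
    (a : A) (ha : IsSelfAdjoint a) : θ 1 * θ a = θ a * θ 1 := by
  let Φ : C(spectrum ℝ a, ℝ) →L[ℝ] A :=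
    ⟨(cfcHom (R := ℝ) ha).toAlgHom.toLinearMap, cfcHom_continuous ha⟩
  have hΦ : ∀ f, Φ f = cfcHom (R := ℝ) ha f := fun _ => rfl
  have h := map_mul_map_one_comm ((θ.restrictScalars ℝ).comp Φ) (fun f g hfg => by
    refine hθ _ _ (cfcHom_predicate ha f) (cfcHom_predicate ha g) ?_
    change cfcHom (R := ℝ) ha f * cfcHom (R := ℝ) ha g = 0
    rw [← map_mul, hfg, map_zero]) ((ContinuousMap.id ℝ).restrict (spectrum ℝ a))
  simp only [ContinuousLinearMap.comp_apply, ContinuousLinearMap.coe_restrictScalars', hΦ,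
    map_one, cfcHom_id] at h
  exact h.symm


/-- Let `A` be a unital C*-algebra, `B` a (not necessarily unital)
C*-algebra, and `θ : A → B` a bounded linear map sending zero products of self-adjoint
elements to zero products.  Then `θ 1` commutes with `θ a` for every `a : A`. -/
theorem zpp_selfAdjoint_theta_one_commutes
    {A B : Type*} [CStarAlgebra A] [NonUnitalCStarAlgebra B]
    (θ : A →L[ℂ] B)
    (hθ : ∀ a b : A, IsSelfAdjoint a → IsSelfAdjoint b → a * b = 0 → θ a * θ b = 0)
    (a : A) :
    θ 1 * θ a = θ a * θ 1 := by
  have hre := theta_one_commutes_of_isSelfAdjoint θ hθ _ (realPart a).2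
  have him := theta_one_commutes_of_isSelfAdjoint θ hθ _ (imaginaryPart a).2
  rw [← realPart_add_I_smul_imaginaryPart a, map_add, map_smul, mul_add, add_mul,
    mul_smul_comm, smul_mul_assoc, hre, him]
end

section
/- Let A be a unital C*-algebra, B a C*-algebra, and θ : A → B a bounded (complex-)linear map such that θ(a)θ(b) = 0 whenever a, b are self-adjoint elements of A with ab = 0. Then θ(1)θ(a²) = (θ(a))² for every a in A. -/
/-!
The idea: for self-adjoint `a`, the continuous functional calculus turns
`(f, g) ↦ θ (f a) * θ (g a)` into a bounded bilinear map `φ` on `C(X, ℝ)`, `X = spectrum ℝ a`,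
with `φ f g = 0` whenever `f * g = 0`. It suffices to prove `φ f f = φ 1 (f * f)` for such `φ`;
the case of a general `a = x + i y` then follows by polarization.

The basic tool is `eq_zero_of_layer_additive`. Cut `0 ≤ f ≤ 1` into the layers `u = min f (1/2)`
and `v = f - u`. Then `u` is the constant `1/2` wherever `v` does not vanish, so `φ u v` is the
same as `φ (1/2) v`. A bounded, homogeneous function of degree at least two that is additive under
this cut vanishes, because each cut halves the available bound.

For `φ f f - φ 1 (f * f)`, additivity under cuts needs the symmetry `φ f 1 = φ 1 f`. So consider
the alternating form `E f g = φ f g - φ g f`. The cubic function `3 E(f², f) - E(f³, 1)` is always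
additive under cuts, hence zero (`alternating_cube`). Its polarization (`alternating_cyclic`) says
that `E` behaves like `∫ (f' g - f g') dν`, and so `E (c, s)` doubles when the point `(c, s)` of
the circle `c² + s² = 1` is replaced by its square `(c² - s², 2cs)`. Since `E` is bounded,
`E (c, s) = 0` for all such pairs (`alternating_circle`). Applying this to `s = t g` and
`c = √(1 - t² g²)` and letting `t → 0` gives `E (1, g) = 0`.
-/

namespace ZeroProduct

/-! ### Cutting functions into layers -/

open ContinuousMap

variable {X : Type*} [TopologicalSpace X] [CompactSpace X]
  {B : Type*} [NormedAddCommGroup B] [NormedSpace ℝ B]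

/-- A bounded function, homogeneous of degree at least two and additive under cutting into layers,
vanishes. For `0 ≤ f ≤ 1` each cut halves the available bound; a nonnegative `f` is rescaled to that
range, and a general `f` is split by sign. The hypothesis `hadd` applies to the two layers
`min f (1/2)` and `f - min f (1/2)` (with `c = 1/2`), and to the positive and negative parts (with
`c = 0`). -/
lemma eq_zero_of_layer_additive (Q : C(X, ℝ) → B) (k : ℕ) (hk : 2 ≤ k) (K : ℝ)
    (hbound : ∀ f : C(X, ℝ), ‖f‖ ≤ 1 → ‖Q f‖ ≤ K)
    (hhom : ∀ (r : ℝ) (f : C(X, ℝ)), Q (r • f) = r ^ k • Q f)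
    (hadd : ∀ (c : ℝ) (f g : C(X, ℝ)), f * g = c • g → Q (f + g) = Q f + Q g)
    (f : C(X, ℝ)) : Q f = 0 := by
  have hK : 0 ≤ K := (norm_nonneg _).trans (hbound 0 (by simp))
  have half : ∀ g : C(X, ℝ), ‖Q ((1 / 2 : ℝ) • g)‖ ≤ 1 / 4 * ‖Q g‖ := by
    intro g
    rw [hhom, norm_smul]
    gcongr
    rw [norm_pow, Real.norm_of_nonneg (by norm_num)]
    calc (1 / 2 : ℝ) ^ k ≤ (1 / 2) ^ 2 :=
          pow_le_pow_of_le_one (by norm_num) (by norm_num) hk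
      _ = 1 / 4 := by norm_num
  have key : ∀ (n : ℕ) (f : C(X, ℝ)), (∀ x, 0 ≤ f x ∧ f x ≤ 1) → ‖Q f‖ ≤ K * (1 / 2) ^ n := by
    intro n
    induction n with
    | zero =>
      intro f hf
      rw [pow_zero, mul_one]
      apply hbound
      rw [ContinuousMap.norm_le _ zero_le_one]
      intro x
      rw [Real.norm_of_nonneg (hf x).1]
      exact (hf x).2
    | succ n ih =>
      intro f hf
      -- `u` and `v` are twice the two layers of `f`, so that they again take values in `[0, 1]`.
      let u : C(X, ℝ) := ⟨fun x => min (2 * f x) 1, by fun_prop⟩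
      let v : C(X, ℝ) := ⟨fun x => 2 * f x - min (2 * f x) 1, by fun_prop⟩
      have hu : ∀ x, 0 ≤ u x ∧ u x ≤ 1 := fun x => by
        have := hf x
        exact ⟨le_min (by linarith) zero_le_one, min_le_right _ _⟩
      have hv : ∀ x, 0 ≤ v x ∧ v x ≤ 1 := fun x => by
        have := hf x
        change 0 ≤ 2 * f x - min (2 * f x) 1 ∧ 2 * f x - min (2 * f x) 1 ≤ 1
        rcases min_cases (2 * f x) 1 with h | h <;> constructor <;> linarith
      have huv : f = (1 / 2 : ℝ) • u + (1 / 2 : ℝ) • v := by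
        ext x
        change f x = 1 / 2 * min (2 * f x) 1 + 1 / 2 * (2 * f x - min (2 * f x) 1)
        ring
      have hQ := hadd (1 / 2) ((1 / 2 : ℝ) • u) ((1 / 2 : ℝ) • v) (by
        ext x
        change (1 / 2 * min (2 * f x) 1) * (1 / 2 * (2 * f x - min (2 * f x) 1))
          = 1 / 2 * (1 / 2 * (2 * f x - min (2 * f x) 1))
        rcases min_cases (2 * f x) 1 with h | h <;> rw [h.1] <;> ring)
      rw [← huv] at hQ
      have h1 := half u
      have h2 := half v
      have h3 := ih u hu
      have h4 := ih v hv
      have h5 := norm_add_le (Q ((1 / 2 : ℝ) • u)) (Q ((1 / 2 : ℝ) • v))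
      rw [hQ, pow_succ]
      linarith
  have unit : ∀ f : C(X, ℝ), (∀ x, 0 ≤ f x ∧ f x ≤ 1) → Q f = 0 := by
    intro f hf
    have lim : Filter.Tendsto (fun n : ℕ => K * (1 / 2 : ℝ) ^ n) Filter.atTop (nhds (K * 0)) :=
      (tendsto_pow_atTop_nhds_zero_of_lt_one (by norm_num) (by norm_num)).const_mul K
    rw [mul_zero] at lim
    exact norm_le_zero_iff.mp (ge_of_tendsto' lim fun n => key n f hf)
  have pos : ∀ f : C(X, ℝ), (∀ x, 0 ≤ f x) → Q f = 0 := by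
    intro f hf
    have hn : (0 : ℝ) < ‖f‖ + 1 := by positivity
    have h := hhom (‖f‖ + 1) ((‖f‖ + 1)⁻¹ • f)
    rw [smul_smul, mul_inv_cancel₀ hn.ne', one_smul, unit ((‖f‖ + 1)⁻¹ • f), smul_zero] at h
    · exact h
    · intro x
      have h1 : f x ≤ ‖f‖ := (le_abs_self _).trans (f.norm_coe_le_norm x)
      change 0 ≤ (‖f‖ + 1)⁻¹ * f x ∧ (‖f‖ + 1)⁻¹ * f x ≤ 1
      refine ⟨mul_nonneg (by positivity) (hf x), ?_⟩
      rw [inv_mul_le_iff₀ hn]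
      linarith
  let p : C(X, ℝ) := ⟨fun x => max (f x) 0, by fun_prop⟩
  let m : C(X, ℝ) := ⟨fun x => max (f x) 0 - f x, by fun_prop⟩
  have hp : Q p = 0 := pos p fun x => le_max_right _ _
  have hm : Q m = 0 := pos m fun x => sub_nonneg.mpr (le_max_left _ _)
  have hf : f = p + (-1 : ℝ) • m := by
    ext x
    change f x = max (f x) 0 + (-1) * (max (f x) 0 - f x)
    ring
  rw [hf, hadd 0, hhom, hp, hm, smul_zero, add_zero]
  ext x
  change max (f x) 0 * ((-1) * (max (f x) 0 - f x)) = 0 * ((-1) * (max (f x) 0 - f x))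
  rcases max_cases (f x) 0 with h | h <;> rw [h.1] <;> ring

/-- If `f` equals the constant `c` wherever `g` does not vanish, then `φ` cannot tell `f` from `c`
when paired with `g`. -/
lemma bilin_of_mul_eq_smul (φ : C(X, ℝ) →ₗ[ℝ] C(X, ℝ) →ₗ[ℝ] B)
    (hφ : ∀ f g, f * g = 0 → φ f g = 0) {c : ℝ} {f g : C(X, ℝ)} (h : f * g = c • g) :
    φ f g = c • φ 1 g := by
  have := hφ (f - c • 1) g (by rw [sub_mul, h, smul_mul_assoc, one_mul, sub_self])
  simpa [sub_eq_zero] using this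

lemma bilin_bound {φ : C(X, ℝ) →ₗ[ℝ] C(X, ℝ) →ₗ[ℝ] B} {M : ℝ} (hM0 : 0 ≤ M)
    (hM : ∀ f g, ‖φ f g‖ ≤ M * ‖f‖ * ‖g‖) {f g : C(X, ℝ)} {a b : ℝ}
    (hf : ‖f‖ ≤ a) (hg : ‖g‖ ≤ b) :
    ‖φ f g‖ ≤ M * a * b := by
  have : 0 ≤ a := (norm_nonneg f).trans hf
  refine (hM f g).trans ?_
  gcongr

/-! ### Alternating forms -/

/-- The coefficients are those for which the terms mixing two layers cancel. -/
lemma alternating_cube (E : C(X, ℝ) →ₗ[ℝ] C(X, ℝ) →ₗ[ℝ] B)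
    {M : ℝ} (hM0 : 0 ≤ M) (hM : ∀ f g, ‖E f g‖ ≤ M * ‖f‖ * ‖g‖)
    (halt : ∀ f g, E f g = -E g f) (hE : ∀ f g, f * g = 0 → E f g = 0)
    (f : C(X, ℝ)) :
    (3 : ℝ) • E (f * f) f - E (f * f * f) 1 = 0 := by
  refine eq_zero_of_layer_additive (fun f => (3 : ℝ) • E (f * f) f - E (f * f * f) 1) 3
    (by norm_num) (3 * M + M * ‖(1 : C(X, ℝ))‖) ?_ ?_ ?_ f
  · intro f hf
    have h2 : ‖f * f‖ ≤ 1 := (norm_mul_le _ _).trans (mul_le_one₀ hf (norm_nonneg _) hf)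
    have h3 : ‖f * f * f‖ ≤ 1 := (norm_mul_le _ _).trans (mul_le_one₀ h2 (norm_nonneg _) hf)
    refine (norm_sub_le _ _).trans (add_le_add ?_ ?_)
    · rw [norm_smul, Real.norm_of_nonneg (by norm_num)]
      gcongr
      exact bilin_bound hM0 hM h2 hf |>.trans_eq (by ring)
    · exact bilin_bound hM0 hM h3 le_rfl |>.trans_eq (by ring)
  · intro r f
    simp only [smul_mul_assoc, mul_smul_comm, map_smul, LinearMap.smul_apply]
    module
  · intro c f g h
    have h2 : f * f * g = (c * c) • g := by
      rw [mul_assoc, h, mul_smul_comm, h, smul_smul]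
    have h3 : f * (g * g) = c • (g * g) := by rw [← mul_assoc, h, smul_mul_assoc]
    have e1 : (f + g) * (f + g) = f * f + (2 * c) • g + g * g := by
      ext x
      have hx : f x * g x = c * g x := DFunLike.congr_fun h x
      change (f x + g x) * (f x + g x) = f x * f x + 2 * c * g x + g x * g x
      linear_combination 2 * hx
    have e2 : (f + g) * (f + g) * (f + g)
        = f * f * f + (3 * c * c) • g + (3 * c) • (g * g) + g * g * g := by
      ext x
      have hx : f x * g x = c * g x := DFunLike.congr_fun h x
      change (f x + g x) * (f x + g x) * (f x + g x)
        = f x * f x * f x + 3 * c * c * g x + 3 * c * (g x * g x) + g x * g x * g x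
      linear_combination 3 * (f x + c + g x) * hx
    have a1 := bilin_of_mul_eq_smul E hE h
    have a2 := bilin_of_mul_eq_smul E hE h2
    have a3 := bilin_of_mul_eq_smul E hE h3
    have b1 := halt g f
    have b2 := halt (g * g) f
    have b3 := halt 1 g
    have b4 := halt 1 (g * g)
    have b5 : E g g = 0 := by
      have := halt g g
      have h2 : (2 : ℝ) • E g g = 0 := by rw [two_smul]; exact eq_neg_iff_add_eq_zero.mp this
      exact (smul_eq_zero.mp h2).resolve_left two_ne_zero
    rw [a1, b3] at b1
    rw [a3, b4] at b2
    rw [b3] at a2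
    rw [e2, e1]
    simp only [map_add, map_smul, LinearMap.add_apply, LinearMap.smul_apply,
      a2, b1, b2, b5]
    module

/-- The polarized form of `alternating_cube`. -/
lemma alternating_cyclic (E : C(X, ℝ) →ₗ[ℝ] C(X, ℝ) →ₗ[ℝ] B)
    {M : ℝ} (hM0 : 0 ≤ M) (hM : ∀ f g, ‖E f g‖ ≤ M * ‖f‖ * ‖g‖)
    (halt : ∀ f g, E f g = -E g f) (hE : ∀ f g, f * g = 0 → E f g = 0)
    (f g h : C(X, ℝ)) :
    E (f * g) h + E (g * h) f + E (h * f) g = E (f * g * h) 1 := by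
  have q := alternating_cube E hM0 hM halt hE
  have q1 := q (f + g + h)
  have q2 := q (f + g)
  have q3 := q (f + h)
  have q4 := q (g + h)
  have q5 := q f
  have q6 := q g
  have q7 := q h
  simp only [mul_add, map_add, LinearMap.add_apply, mul_comm, mul_left_comm]
    at q1 q2 q3 q4 q5 q6 q7 ⊢
  linear_combination (norm := module) (1 / 6 : ℝ) • (q1 - q2 - q3 - q4 + q5 + q6 + q7)

/-- If `(c, s)` is a point of the circle then so is its square `(c² - s², 2cs)`, and `E` doubles. -/
lemma alternating_double (E : C(X, ℝ) →ₗ[ℝ] C(X, ℝ) →ₗ[ℝ] B)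
    {M : ℝ} (hM0 : 0 ≤ M) (hM : ∀ f g, ‖E f g‖ ≤ M * ‖f‖ * ‖g‖)
    (halt : ∀ f g, E f g = -E g f) (hE : ∀ f g, f * g = 0 → E f g = 0)
    {c s : C(X, ℝ)} (hcs : c * c + s * s = 1) :
    E (c * c - s * s) ((2 : ℝ) • (c * s)) = (2 : ℝ) • E c s := by
  have T := alternating_cyclic E hM0 hM halt hE
  have t1 := T c c (c * s)
  have t2 := T s s (c * s)
  have t3 := T (s * s) s c
  have t4 := T (c * c) c s
  have k1 : E (c * c * s) c + E (s * s * s) c = E s c := by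
    rw [← LinearMap.add_apply, ← map_add, ← add_mul, hcs, one_mul]
  have k2 : E (s * s * c) s + E (c * c * c) s = E c s := by
    rw [← LinearMap.add_apply, ← map_add, ← add_mul, add_comm (s * s), hcs, one_mul]
  rw [halt s c] at k1
  rw [halt (s * c) (s * s)] at t3
  rw [halt (c * s) (c * c)] at t4
  simp only [map_sub, map_smul, LinearMap.sub_apply, mul_comm, mul_left_comm]
    at t1 t2 t3 t4 k1 k2 ⊢
  -- `t1 - t2` gives `E(c² - s², cs)` up to `E(c²s, c) - E(s²c, s)` and the values `E(·, 1)`;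
  -- the other four identities eliminate these.
  linear_combination (norm := module) t1 - t2 - t4 + t3 + k2 - k1

/-- By `alternating_double`, `n` squarings of the point `(c, s)` give `‖E c s‖ ≤ M / 2 ^ n`. -/
lemma alternating_circle (E : C(X, ℝ) →ₗ[ℝ] C(X, ℝ) →ₗ[ℝ] B)
    {M : ℝ} (hM0 : 0 ≤ M) (hM : ∀ f g, ‖E f g‖ ≤ M * ‖f‖ * ‖g‖)
    (halt : ∀ f g, E f g = -E g f) (hE : ∀ f g, f * g = 0 → E f g = 0)
    {c s : C(X, ℝ)} (hcs : c * c + s * s = 1) : E c s = 0 := by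
  have nrm : ∀ {c s : C(X, ℝ)}, c * c + s * s = 1 → ‖c‖ ≤ 1 := by
    intro c s h
    rw [ContinuousMap.norm_le _ zero_le_one]
    intro x
    have hx : c x * c x + s x * s x = 1 := DFunLike.congr_fun h x
    rw [Real.norm_eq_abs, abs_le]
    constructor <;> nlinarith [mul_self_nonneg (s x)]
  have key : ∀ (n : ℕ) (c s : C(X, ℝ)), c * c + s * s = 1 → ‖E c s‖ ≤ M * (1 / 2) ^ n := by
    intro n
    induction n with
    | zero =>
      intro c s h
      exact bilin_bound hM0 hM (nrm h) (nrm ((add_comm _ _).trans h)) |>.trans_eq (by ring)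
    | succ n ih =>
      intro c s h
      have h1 := ih (c * c - s * s) ((2 : ℝ) • (c * s)) (by
        ext x
        have hx : c x * c x + s x * s x = 1 := DFunLike.congr_fun h x
        change (c x * c x - s x * s x) * (c x * c x - s x * s x)
          + (2 * (c x * s x)) * (2 * (c x * s x)) = 1
        linear_combination (c x * c x + s x * s x + 1) * hx)
      rw [alternating_double E hM0 hM halt hE h, norm_smul, Real.norm_of_nonneg (by norm_num)] at h1
      rw [pow_succ]
      linarith
  have lim : Filter.Tendsto (fun n : ℕ => M * (1 / 2 : ℝ) ^ n) Filter.atTop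
      (nhds (M * 0)) :=
    (tendsto_pow_atTop_nhds_zero_of_lt_one (by norm_num) (by norm_num)).const_mul _
  rw [mul_zero] at lim
  exact norm_le_zero_iff.mp (ge_of_tendsto' lim fun n => key n c s hcs)

/-- The first-order term of `E c (t g) = 0`, `c = √(1 - t² g²)`, as `t → 0`; here `1 - c` is of
order `t²`. -/
lemma alternating_one (E : C(X, ℝ) →ₗ[ℝ] C(X, ℝ) →ₗ[ℝ] B)
    {M : ℝ} (hM0 : 0 ≤ M) (hM : ∀ f g, ‖E f g‖ ≤ M * ‖f‖ * ‖g‖)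
    (halt : ∀ f g, E f g = -E g f) (hE : ∀ f g, f * g = 0 → E f g = 0)
    (g : C(X, ℝ)) : E 1 g = 0 := by
  have key : ∀ t : ℝ, 0 < t → t * ‖g‖ ≤ 1 → ‖E 1 g‖ ≤ M * (t * ‖g‖) ^ 2 * ‖g‖ := by
    intro t ht htg
    let c : C(X, ℝ) := ⟨fun x => Real.sqrt (1 - (t * g x) ^ 2), by fun_prop⟩
    have hle : ∀ x, (t * g x) ^ 2 ≤ (t * ‖g‖) ^ 2 := fun x => by
      rw [mul_pow, mul_pow, ← sq_abs (g x)]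
      gcongr
      exact g.norm_coe_le_norm x
    have h1 : (t * ‖g‖) ^ 2 ≤ 1 := pow_le_one₀ (by positivity) htg
    have hsq : ∀ x, c x * c x = 1 - (t * g x) ^ 2 := fun x =>
      Real.mul_self_sqrt (by linarith [hle x])
    have h0 := alternating_circle E hM0 hM halt hE (c := c) (s := t • g) (by
      ext x
      change c x * c x + t * g x * (t * g x) = 1
      rw [hsq]
      ring)
    have h0' : E c g = 0 := by
      rw [map_smul, smul_eq_zero] at h0
      exact h0.resolve_left ht.ne'
    have h2 : E 1 g = E (1 - c) g := by simp [h0']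
    rw [h2]
    refine bilin_bound hM0 hM ?_ le_rfl
    rw [ContinuousMap.norm_le _ (by positivity)]
    intro x
    have hc0 : 0 ≤ c x := Real.sqrt_nonneg _
    have := hsq x
    have := hle x
    have hc1 : c x ≤ 1 := by nlinarith [sq_nonneg (t * g x)]
    change |1 - c x| ≤ _
    rw [abs_of_nonneg (by linarith)]
    nlinarith
  have lim : Filter.Tendsto (fun t : ℝ => M * (t * ‖g‖) ^ 2 * ‖g‖) (nhdsWithin 0 (Set.Ioi 0))
      (nhds (M * (0 * ‖g‖) ^ 2 * ‖g‖)) :=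
    (Continuous.tendsto (by fun_prop) 0).mono_left nhdsWithin_le_nhds
  have small : Filter.Tendsto (fun t : ℝ => t * ‖g‖) (nhdsWithin 0 (Set.Ioi 0))
      (nhds (0 * ‖g‖)) :=
    (Continuous.tendsto (by fun_prop) 0).mono_left nhdsWithin_le_nhds
  have h := ge_of_tendsto lim (b := ‖E 1 g‖) (by
    filter_upwards [self_mem_nhdsWithin,
      small.eventually (Iic_mem_nhds (by simp : (0 : ℝ) * ‖g‖ < 1))] with t ht ht'
    exact key t ht ht')
  simpa using h

/-! ### The diagonal of a form vanishing on disjoint pairs -/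

/-- Once `φ g 1 = φ 1 g` is known, `f ↦ φ f f - φ 1 (f * f)` is additive under cutting into
layers. -/
lemma bilin_diag (φ : C(X, ℝ) →ₗ[ℝ] C(X, ℝ) →ₗ[ℝ] B)
    {M : ℝ} (hM0 : 0 ≤ M) (hM : ∀ f g, ‖φ f g‖ ≤ M * ‖f‖ * ‖g‖)
    (hφ : ∀ f g, f * g = 0 → φ f g = 0) (f : C(X, ℝ)) : φ f f = φ 1 (f * f) := by
  have comm : ∀ g, φ g 1 = φ 1 g := by
    intro g
    have h := alternating_one (φ - φ.flip) (M := M + M) (by positivity)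
      (fun f g => (norm_sub_le _ _).trans
        ((add_le_add (hM f g) (hM g f)).trans_eq (by ring))) (fun f g => by simp)
      (fun f g h => by simp [hφ f g h, hφ g f ((mul_comm _ _).trans h)]) g
    simpa [sub_eq_zero] using (sub_eq_zero.mp h).symm
  rw [← sub_eq_zero]
  refine eq_zero_of_layer_additive (fun f => φ f f - φ 1 (f * f)) 2 le_rfl
    (M + M * ‖(1 : C(X, ℝ))‖) ?_ ?_ ?_ f
  · intro f hf
    have h2 : ‖f * f‖ ≤ 1 := (norm_mul_le _ _).trans (mul_le_one₀ hf (norm_nonneg _) hf)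
    refine (norm_sub_le _ _).trans (add_le_add ?_ ?_)
    · exact bilin_bound hM0 hM hf hf |>.trans_eq (by ring)
    · exact bilin_bound hM0 hM le_rfl h2 |>.trans_eq (by ring)
  · intro r f
    simp only [smul_mul_assoc, mul_smul_comm, map_smul, LinearMap.smul_apply]
    module
  · intro c f g h
    have a1 := bilin_of_mul_eq_smul φ hφ h
    have a2 := bilin_of_mul_eq_smul φ.flip (fun f g h => hφ g f ((mul_comm _ _).trans h)) h
    rw [LinearMap.flip_apply, LinearMap.flip_apply, comm] at a2
    have e1 : (f + g) * (f + g) = f * f + (2 * c) • g + g * g := by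
      ext x
      have hx : f x * g x = c * g x := DFunLike.congr_fun h x
      change (f x + g x) * (f x + g x) = f x * f x + 2 * c * g x + g x * g x
      linear_combination 2 * hx
    rw [e1]
    simp only [map_add, map_smul, LinearMap.add_apply, a1, a2]
    module

end ZeroProduct

/-! ### C⋆-algebras -/

/-- Let `A` be a unital C*-algebra, `B` a (not necessarily unital)
C*-algebra, and `θ : A → B` a bounded linear map sending zero products of self-adjoint
elements to zero products.  Then `θ 1 * θ (a ^ 2) = (θ a) ^ 2` for every `a : A`. -/
theorem zpp_selfAdjoint_theta_one_mul_sq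
    {A B : Type*} [CStarAlgebra A] [NonUnitalCStarAlgebra B]
    (θ : A →L[ℂ] B)
    (hθ : ∀ a b : A, IsSelfAdjoint a → IsSelfAdjoint b → a * b = 0 → θ a * θ b = 0)
    (a : A) :
    θ 1 * θ (a * a) = θ a * θ a := by
  have sa : ∀ x : A, IsSelfAdjoint x → θ 1 * θ (x * x) = θ x * θ x := by
    intro x hx
    let ψ : C(spectrum ℝ x, ℝ) →ₗ[ℝ] B :=
      (θ.restrictScalars ℝ).toLinearMap ∘ₗ (cfcHom hx).toAlgHom.toLinearMap
    have hψ : ∀ f, ψ f = θ (cfcHom hx f) := fun _ => rfl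
    have hψn : ∀ f, ‖ψ f‖ ≤ ‖θ‖ * ‖f‖ := fun f => by
      rw [hψ, ← norm_cfcHom x f hx]
      exact θ.le_opNorm _
    have hself : ∀ f : C(spectrum ℝ x, ℝ), IsSelfAdjoint (cfcHom hx f) := fun f =>
      (IsSelfAdjoint.all f).map (cfcHom hx)
    have h := ZeroProduct.bilin_diag ((LinearMap.mul ℝ B).compl₁₂ ψ ψ) (M := ‖θ‖ * ‖θ‖)
      (by positivity)
      (fun f g => (norm_mul_le _ _).trans
        ((mul_le_mul (hψn f) (hψn g) (norm_nonneg _) (by positivity)).trans_eq (by ring)))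
      (fun f g hfg => hθ (cfcHom hx f) (cfcHom hx g) (hself f) (hself g) (by
        rw [← map_mul, hfg, map_zero]))
      ((ContinuousMap.id ℝ).restrict (spectrum ℝ x))
    simp only [LinearMap.compl₁₂_apply, LinearMap.mul_apply', hψ,
      map_mul, map_one, cfcHom_id hx] at h
    exact h.symm
  have pol : ∀ x y : A, IsSelfAdjoint x → IsSelfAdjoint y →
      θ 1 * θ (x * y + y * x) = θ x * θ y + θ y * θ x := by
    intro x y hx hy
    have h := sa (x + y) (hx.add hy)
    have h1 := sa x hx
    have h2 := sa y hy
    have e : (x + y) * (x + y) = x * x + (x * y + y * x) + y * y := by noncomm_ring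
    rw [e] at h
    simp only [map_add, mul_add, add_mul] at h ⊢
    linear_combination (norm := module) h - h1 - h2
  obtain ⟨x, y, hx, hy, rfl⟩ : ∃ x y : A, IsSelfAdjoint x ∧ IsSelfAdjoint y ∧
      a = x + Complex.I • y :=
    ⟨realPart a, imaginaryPart a, (realPart a).2, (imaginaryPart a).2,
      (realPart_add_I_smul_imaginaryPart a).symm⟩
  have h1 := sa x hx
  have h2 := sa y hy
  have h3 := pol x y hx hy
  have e : (x + Complex.I • y) * (x + Complex.I • y)
      = x * x + Complex.I • (x * y + y * x) - y * y := by
    simp only [mul_add, add_mul, smul_mul_assoc, mul_smul_comm, smul_smul, smul_add,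
      Complex.I_mul_I]
    module
  rw [e]
  have hI : θ (x + Complex.I • y) * θ (x + Complex.I • y)
      = θ x * θ x + Complex.I • (θ x * θ y + θ y * θ x) - θ y * θ y := by
    simp only [map_add, map_smul, mul_add, add_mul, smul_mul_assoc, mul_smul_comm, smul_smul,
      smul_add, Complex.I_mul_I]
    module
  rw [hI, map_sub, map_add, map_smul, mul_sub, mul_add, mul_smul_comm, h1, h2, h3]
end

section
/- Let A and B be unital C*-algebras and θ : A → B a bounded (complex-)linear map such that θ(a)θ(b) = 0 whenever a, b are self-adjoint elements of A with ab = 0. If θ(1) is invertible in B, then there exists a bounded linear Jordan homomorphism J : A → B (i.e. J(a²) = J(a)² for all a in A) such that θ(a) = θ(1)·J(a) for every a in A; namely J = θ(1)⁻¹θ. -/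
/-!
For self-adjoint `a`, the continuous functional calculus turns `θ` into a bounded real-linear map
`T : C(X, ℝ) → B`, `X` the spectrum of `a`, with `T f * T g = 0` whenever `f * g = 0`. The heart of
the proof is that such a `T` satisfies `T x * T h = T 1 * T (x * h)` for all `x`, `h`
(`ZeroProd.mul_eq`). Applied to the coordinate function this gives `θ a * θ 1 = θ 1 * θ a` and
`θ a * θ a = θ 1 * θ (a * a)`; polarization and the decomposition into real and imaginary parts
extend both identities to all of `A`, and they say that `θ(1)⁻¹ θ` is a Jordan homomorphism.

For `ZeroProd.mul_eq`, the defect `E y = T y * T h - T 1 * T (y * h)` is linear in `y` and vanishes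
on constants, so it is enough to bound `E y` by a constant independent of `y ≥ 1`: then
`n • E x = E (n • x + c)` stays bounded. For the uniform bound, split `1` into two families of bumps
in `y`, each family being a sum of translates `p_m = bump (y - t_m)` with well separated supports.
If `w_m` is a wider cutoff that equals `1` on the support of `p_m`, then
`T y * T (p_m * h) - T 1 * T (y * p_m * h)
  = T ((y - t_m) * w_m) * T (p_m * h) - T w_m * T ((y - t_m) * p_m * h)`.
As cross terms vanish, the sum over `m` of each product on the right is a product of two sums
(`ZeroProd.sum_mul`), and these are sums of disjointly supported functions of bounded size, so the
number of bumps does not enter the estimate.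
-/

namespace ZeroProd

/-! ### Bumps and cutoffs on the real line -/

/-- The ramp `t ↦ min 1 (max 0 t)`. -/
noncomputable def ramp : C(ℝ, ℝ) := ⟨fun t => min 1 (max 0 t), by fun_prop⟩

/-- Trapezoidal bump supported in `[0, 4]`; its translates by multiples of `3` sum to `1`. -/
noncomputable def bump : C(ℝ, ℝ) := ⟨fun t => ramp t - ramp (t - 3), by fun_prop⟩

/-- Cutoff equal to `1` on `[0, 4]` and supported in `[-1, 5]`. -/
noncomputable def cutoff : C(ℝ, ℝ) := ⟨fun t => ramp (t + 1) - ramp (t - 4), by fun_prop⟩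

lemma ramp_apply (t : ℝ) : ramp t = min 1 (max 0 t) := rfl
lemma bump_apply (t : ℝ) : bump t = ramp t - ramp (t - 3) := rfl
lemma cutoff_apply (t : ℝ) : cutoff t = ramp (t + 1) - ramp (t - 4) := rfl

lemma ramp_of_nonpos {t : ℝ} (h : t ≤ 0) : ramp t = 0 := by
  rw [ramp_apply, max_eq_left h]; norm_num

lemma ramp_of_one_le {t : ℝ} (h : 1 ≤ t) : ramp t = 1 := by
  rw [ramp_apply, max_eq_right (by linarith), min_eq_left h]

lemma ramp_nonneg (t : ℝ) : 0 ≤ ramp t := by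
  rw [ramp_apply]; exact le_min zero_le_one (le_max_left _ _)

lemma ramp_le_one (t : ℝ) : ramp t ≤ 1 := min_le_left _ _

lemma bump_eq_zero {t : ℝ} (h : t ≤ 0 ∨ 4 ≤ t) : bump t = 0 := by
  rw [bump_apply]
  rcases h with h | h
  · rw [ramp_of_nonpos h, ramp_of_nonpos (by linarith), sub_zero]
  · rw [ramp_of_one_le (by linarith), ramp_of_one_le (by linarith), sub_self]

lemma cutoff_eq_zero {t : ℝ} (h : t ≤ -1 ∨ 5 ≤ t) : cutoff t = 0 := by
  rw [cutoff_apply]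
  rcases h with h | h
  · rw [ramp_of_nonpos (by linarith), ramp_of_nonpos (by linarith), sub_zero]
  · rw [ramp_of_one_le (by linarith), ramp_of_one_le (by linarith), sub_self]

lemma cutoff_eq_one {t : ℝ} (h0 : 0 ≤ t) (h4 : t ≤ 4) : cutoff t = 1 := by
  rw [cutoff_apply, ramp_of_one_le (by linarith), ramp_of_nonpos (by linarith), sub_zero]

lemma abs_bump_le (t : ℝ) : |bump t| ≤ 1 := by
  rw [bump_apply, abs_le]
  constructor <;> linarith [ramp_nonneg t, ramp_le_one t, ramp_nonneg (t - 3), ramp_le_one (t - 3)]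

lemma abs_cutoff_le (t : ℝ) : |cutoff t| ≤ 1 := by
  rw [cutoff_apply, abs_le]
  constructor <;> linarith [ramp_nonneg (t + 1), ramp_le_one (t + 1), ramp_nonneg (t - 4),
    ramp_le_one (t - 4)]

/-- If `f` vanishes off `(-1, 5)` and is bounded by `C`, then so is any sum of translates of `f`
by distinct multiples of `6`, because the supports are disjoint. -/
lemma abs_sum_translates_le (f : ℝ → ℝ) {C : ℝ} (hf : ∀ t, |f t| ≤ C)
    (hs : ∀ t, t ≤ -1 ∨ 5 ≤ t → f t = 0) (v s : ℝ) (M : ℕ) :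
    |∑ m ∈ Finset.range M, f (v - (6 * m + s))| ≤ C := by
  by_cases h : ∃ m ∈ Finset.range M, f (v - (6 * m + s)) ≠ 0
  · obtain ⟨m, hm, hne⟩ := h
    rw [Finset.sum_eq_single_of_mem m hm]
    · exact hf _
    intro j _ hj
    apply hs
    have h1 : ¬ (v - (6 * m + s) ≤ -1 ∨ 5 ≤ v - (6 * m + s)) := fun h => hne (hs _ h)
    push Not at h1
    rcases lt_or_gt_of_ne hj with h | h
    · right
      have : (j : ℝ) + 1 ≤ m := by exact_mod_cast h
      linarith
    · left
      have : (m : ℝ) + 1 ≤ j := by exact_mod_cast h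
      linarith
  · push Not at h
    rw [Finset.sum_eq_zero h, abs_zero]
    exact (abs_nonneg _).trans (hf 0)

/-! ### Translated bumps on a topological space -/

variable {X B : Type*} [TopologicalSpace X] [CStarAlgebra B]

/-- The translates `f (y - (6 * m + s))` of `f`, as functions on `X`. -/
noncomputable def translate (y : C(X, ℝ)) (s : ℝ) (f : C(ℝ, ℝ)) (m : ℕ) : C(X, ℝ) :=
  ⟨fun x => f (y x - (6 * m + s)), by fun_prop⟩

lemma translate_apply (y : C(X, ℝ)) (s : ℝ) (f : C(ℝ, ℝ)) (m : ℕ) (x : X) :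
    translate y s f m x = f (y x - (6 * m + s)) := rfl

lemma translate_mul_eq_zero (y : C(X, ℝ)) (s : ℝ) (f g : C(ℝ, ℝ))
    (hf : ∀ t, t ≤ -1 ∨ 5 ≤ t → f t = 0) (hg : ∀ t, t ≤ -1 ∨ 5 ≤ t → g t = 0)
    {i j : ℕ} (hij : i ≠ j) : translate y s f i * translate y s g j = 0 := by
  ext x
  simp only [ContinuousMap.mul_apply, translate_apply, ContinuousMap.zero_apply]
  by_contra hne
  have h1 : ¬ (y x - (6 * i + s) ≤ -1 ∨ 5 ≤ y x - (6 * i + s)) :=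
    fun h => hne (by rw [hf _ h, zero_mul])
  have h2 : ¬ (y x - (6 * j + s) ≤ -1 ∨ 5 ≤ y x - (6 * j + s)) :=
    fun h => hne (by rw [hg _ h, mul_zero])
  push Not at h1 h2
  rcases lt_or_gt_of_ne hij with h | h
  · have : (i : ℝ) + 1 ≤ j := by exact_mod_cast h
    linarith
  · have : (j : ℝ) + 1 ≤ i := by exact_mod_cast h
    linarith

/-- The two families of bumps, with shifts `0` and `3`, form a partition of unity. -/
lemma sum_bump (y : C(X, ℝ)) (hy : ∀ x, 1 ≤ y x) (M : ℕ) (hM : ∀ x, y x ≤ M) :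
    ∑ m ∈ Finset.range M, translate y 0 bump m + ∑ m ∈ Finset.range M, translate y 3 bump m
      = 1 := by
  ext x
  rw [← Finset.sum_add_distrib, ContinuousMap.sum_apply]
  have : ∀ m ∈ Finset.range M, (translate y 0 bump m + translate y 3 bump m) x
      = ramp (y x - 6 * (m : ℕ)) - ramp (y x - 6 * ((m + 1 : ℕ) : ℝ)) := by
    intro m _
    rw [ContinuousMap.add_apply, translate_apply, translate_apply, bump_apply, bump_apply]
    have h1 : y x - (6 * m + 0) - 3 = y x - (6 * m + 3) := by ring
    have h2 : y x - (6 * m + 3) - 3 = y x - 6 * ((m + 1 : ℕ) : ℝ) := by push_cast; ring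
    rw [h1, h2, add_zero]
    ring
  rw [Finset.sum_congr rfl this, Finset.sum_range_sub' (fun m : ℕ => ramp (y x - 6 * (m : ℝ)))]
  have h0 := hy x
  have hMx := hM x
  rw [ramp_of_one_le (by push_cast; linarith), ramp_of_nonpos (by linarith), sub_zero]
  rfl

/-! ### Zero-product preserving maps on `C(X, ℝ)` -/

/-- If the cross terms have zero product, a sum of products is the product of the sums. -/
lemma sum_mul (T : C(X, ℝ) →L[ℝ] B) (hT : ∀ f g, f * g = 0 → T f * T g = 0)
    (M : ℕ) (f g : ℕ → C(X, ℝ)) (h : ∀ i j, i ≠ j → f i * g j = 0) :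
    ∑ m ∈ Finset.range M, T (f m) * T (g m)
      = T (∑ m ∈ Finset.range M, f m) * T (∑ m ∈ Finset.range M, g m) := by
  rw [map_sum, map_sum, Finset.sum_mul_sum]
  refine Finset.sum_congr rfl fun i hi => ?_
  rw [Finset.sum_eq_single_of_mem i hi]
  exact fun j _ hj => hT _ _ (h _ _ hj.symm)

variable [CompactSpace X]

lemma norm_sum_translate_le (y : C(X, ℝ)) (s : ℝ) (f : C(ℝ, ℝ)) {C : ℝ} (hf : ∀ t, |f t| ≤ C)
    (hs : ∀ t, t ≤ -1 ∨ 5 ≤ t → f t = 0) (M : ℕ) :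
    ‖∑ m ∈ Finset.range M, translate y s f m‖ ≤ C := by
  rw [ContinuousMap.norm_le _ ((abs_nonneg _).trans (hf 0))]
  intro x
  rw [ContinuousMap.sum_apply, Real.norm_eq_abs]
  exact abs_sum_translates_le f hf hs (y x) s M

/-- Estimate of the defect on one family of separated bumps, uniform in `y` and in the number
of bumps. -/
lemma norm_defect_family_le (T : C(X, ℝ) →L[ℝ] B) (hT : ∀ f g, f * g = 0 → T f * T g = 0)
    (y h : C(X, ℝ)) (s : ℝ) (M : ℕ) :
    ‖T y * T ((∑ m ∈ Finset.range M, translate y s bump m) * h)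
      - T 1 * T (y * ((∑ m ∈ Finset.range M, translate y s bump m) * h))‖
      ≤ 10 * ‖T‖ ^ 2 * ‖h‖ := by
  let p := translate y s bump
  let w := translate y s cutoff
  let zp : C(ℝ, ℝ) := ContinuousMap.id ℝ * bump
  let zw : C(ℝ, ℝ) := ContinuousMap.id ℝ * cutoff
  have zp_apply : ∀ t, zp t = t * bump t := fun t => rfl
  have zw_apply : ∀ t, zw t = t * cutoff t := fun t => rfl
  let P := translate y s zp
  let W := translate y s zw
  have sp : ∀ t : ℝ, t ≤ -1 ∨ 5 ≤ t → bump t = 0 := fun t ht =>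
    bump_eq_zero (ht.imp (fun h => by linarith) (fun h => by linarith))
  have sw : ∀ t : ℝ, t ≤ -1 ∨ 5 ≤ t → cutoff t = 0 := fun t ht => cutoff_eq_zero ht
  have szp : ∀ t : ℝ, t ≤ -1 ∨ 5 ≤ t → zp t = 0 := fun t ht => by
    rw [zp_apply, sp t ht, mul_zero]
  have szw : ∀ t : ℝ, t ≤ -1 ∨ 5 ≤ t → zw t = 0 := fun t ht => by
    rw [zw_apply, sw t ht, mul_zero]
  have key : ∀ (f : C(ℝ, ℝ)), (∀ t, |f t| ≤ 1) → (∀ t, t ≤ -1 ∨ 5 ≤ t → f t = 0) →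
      ∀ t, |t * f t| ≤ 5 := by
    intro f hf hs t
    by_cases ht : t ≤ -1 ∨ 5 ≤ t
    · rw [hs t ht]; norm_num
    · push Not at ht
      rw [abs_mul]
      have h5 : |t| ≤ 5 := abs_le.2 ⟨by linarith, by linarith⟩
      nlinarith [hf t, abs_nonneg t, abs_nonneg (f t)]
  have bzp : ∀ t, |zp t| ≤ 5 := key bump abs_bump_le sp
  have bzw : ∀ t, |zw t| ≤ 5 := key cutoff abs_cutoff_le sw
  have hwp : ∀ m, (1 - w m) * p m = 0 := by
    intro m
    ext x
    change (1 - cutoff (y x - (6 * m + s))) * bump (y x - (6 * m + s)) = 0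
    by_cases ht : y x - (6 * m + s) ≤ 0 ∨ 4 ≤ y x - (6 * m + s)
    · rw [bump_eq_zero ht, mul_zero]
    · push Not at ht
      rw [cutoff_eq_one ht.1.le ht.2.le, sub_self, zero_mul]
  have hW : ∀ m : ℕ, W m = (y - algebraMap ℝ C(X, ℝ) (6 * m + s)) * w m := fun m => rfl
  have hP : ∀ m : ℕ, P m = (y - algebraMap ℝ C(X, ℝ) (6 * m + s)) * p m := fun m => rfl
  have term : ∀ m, T y * T (p m * h) - T 1 * T (y * (p m * h))
      = T (W m) * T (p m * h) - T (w m) * T (P m * h) := by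
    intro m
    set c : ℝ := 6 * m + s
    have e1 : T (y - c • 1 - W m) * T (p m * h) = 0 := by
      apply hT
      rw [hW, Algebra.algebraMap_eq_smul_one]
      linear_combination (y - c • (1 : C(X, ℝ))) * h * hwp m
    have e2 : T (1 - w m) * T (y * (p m * h) - c • (p m * h)) = 0 := by
      apply hT
      have : y * (p m * h) - c • (p m * h) = (y - c • (1 : C(X, ℝ))) * h * p m := by
        rw [← smul_one_mul c (p m * h)]; ring
      rw [this]
      linear_combination (y - c • (1 : C(X, ℝ))) * h * hwp m
    have e3 : P m * h = y * (p m * h) - c • (p m * h) := by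
      rw [hP, Algebra.algebraMap_eq_smul_one, ← smul_one_mul c (p m * h)]; ring
    rw [e3]
    simp only [map_sub, map_smul, sub_mul, mul_sub, smul_mul_assoc, mul_smul_comm] at e1 e2 ⊢
    linear_combination (norm := module) e1 - e2
  have total : T y * T ((∑ m ∈ Finset.range M, p m) * h)
      - T 1 * T (y * ((∑ m ∈ Finset.range M, p m) * h))
      = T (∑ m ∈ Finset.range M, W m) * T ((∑ m ∈ Finset.range M, p m) * h)
        - T (∑ m ∈ Finset.range M, w m) * T ((∑ m ∈ Finset.range M, P m) * h) := by
    rw [Finset.sum_mul, Finset.sum_mul, ← sum_mul T hT, ← sum_mul T hT,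
      ← Finset.sum_sub_distrib, Finset.mul_sum, map_sum, map_sum, Finset.mul_sum, Finset.mul_sum,
      ← Finset.sum_sub_distrib]
    · exact Finset.sum_congr rfl fun m _ => term m
    · intro i j hij
      rw [← mul_assoc, translate_mul_eq_zero y s _ _ sw szp hij, zero_mul]
    · intro i j hij
      rw [← mul_assoc, translate_mul_eq_zero y s _ _ szw sp hij, zero_mul]
  have est : ∀ (f g : C(X, ℝ)) (a b : ℝ), ‖f‖ ≤ a → ‖g‖ ≤ b →
      ‖T f * T (g * h)‖ ≤ a * b * (‖T‖ ^ 2 * ‖h‖) := by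
    intro f g a b hf hg
    have ha : 0 ≤ a := (norm_nonneg _).trans hf
    calc ‖T f * T (g * h)‖ ≤ ‖T f‖ * ‖T (g * h)‖ := norm_mul_le _ _
      _ ≤ (‖T‖ * a) * (‖T‖ * (b * ‖h‖)) := by
          gcongr
          · exact T.le_opNorm_of_le hf
          · exact T.le_opNorm_of_le ((norm_mul_le _ _).trans (by gcongr))
      _ = _ := by ring
  change ‖T y * T ((∑ m ∈ Finset.range M, p m) * h)
      - T 1 * T (y * ((∑ m ∈ Finset.range M, p m) * h))‖ ≤ _
  rw [total]
  refine (norm_sub_le _ _).trans ?_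
  have i1 := est _ _ _ _ (norm_sum_translate_le y s zw bzw szw M)
    (norm_sum_translate_le y s bump abs_bump_le sp M)
  have i2 := est _ _ _ _ (norm_sum_translate_le y s cutoff abs_cutoff_le sw M)
    (norm_sum_translate_le y s zp bzp szp M)
  linarith

lemma norm_defect_le (T : C(X, ℝ) →L[ℝ] B) (hT : ∀ f g, f * g = 0 → T f * T g = 0)
    (y h : C(X, ℝ)) (hy : ∀ x, 1 ≤ y x) :
    ‖T y * T h - T 1 * T (y * h)‖ ≤ 20 * ‖T‖ ^ 2 * ‖h‖ := by
  obtain ⟨M, hM⟩ := exists_nat_ge ‖y‖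
  have hsum := sum_bump y hy M
    (fun x => ((le_abs_self _).trans (y.norm_coe_le_norm x)).trans hM)
  have i1 := norm_defect_family_le T hT y h 0 M
  have i2 := norm_defect_family_le T hT y h 3 M
  set p := ∑ m ∈ Finset.range M, translate y 0 bump m
  set q := ∑ m ∈ Finset.range M, translate y 3 bump m
  have e : T y * T h - T 1 * T (y * h) = (T y * T (p * h) - T 1 * T (y * (p * h)))
      + (T y * T (q * h) - T 1 * T (y * (q * h))) := by
    have hh : h = p * h + q * h := by rw [← add_mul, hsum, one_mul]
    conv_lhs => rw [hh]
    rw [mul_add, map_add, map_add, mul_add, mul_add]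
    abel
  rw [e]
  refine (norm_add_le _ _).trans ?_
  linarith

/-- A bounded linear map on `C(X, ℝ)` that sends zero products to zero products satisfies
`T x * T h = T 1 * T (x * h)`. -/
theorem mul_eq (T : C(X, ℝ) →L[ℝ] B) (hT : ∀ f g, f * g = 0 → T f * T g = 0)
    (x h : C(X, ℝ)) : T x * T h = T 1 * T (x * h) := by
  have bound : ∀ n : ℕ, n * ‖T x * T h - T 1 * T (x * h)‖ ≤ 20 * ‖T‖ ^ 2 * ‖h‖ := by
    intro n
    -- The constant added to `n • x` makes the function at least `1` without changing the defect.
    let c : ℝ := n * ‖x‖ + 1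
    have hb := norm_defect_le T hT ((n : ℝ) • x + c • 1) h (by
      intro t
      have h1 : -‖x‖ ≤ x t := neg_le_of_abs_le (x.norm_coe_le_norm t)
      have h2 : (n : ℝ) * -‖x‖ ≤ n * x t := by gcongr
      change 1 ≤ (n : ℝ) * x t + c * 1
      simp only [c]
      linarith)
    have e : T ((n : ℝ) • x + c • 1) * T h - T 1 * T (((n : ℝ) • x + c • 1) * h)
        = (n : ℝ) • (T x * T h - T 1 * T (x * h)) := by
      simp only [map_add, map_smul, add_mul, smul_mul_assoc, one_mul, mul_add, mul_smul_comm,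
        smul_sub]
      abel
    rwa [e, norm_smul, Real.norm_natCast] at hb
  by_contra hne
  have hpos : 0 < ‖T x * T h - T 1 * T (x * h)‖ := norm_pos_iff.2 (sub_ne_zero.2 hne)
  obtain ⟨n, hn⟩ := exists_nat_gt (20 * ‖T‖ ^ 2 * ‖h‖ / ‖T x * T h - T 1 * T (x * h)‖)
  rw [div_lt_iff₀ hpos] at hn
  exact absurd (bound n) (not_le.2 hn)

/-! ### Passage to C*-algebras -/

variable {A : Type*} [CStarAlgebra A]

lemma selfAdjoint_identities (θ : A →L[ℂ] B)
    (hθ : ∀ a b : A, IsSelfAdjoint a → IsSelfAdjoint b → a * b = 0 → θ a * θ b = 0)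
    (a : A) (ha : IsSelfAdjoint a) :
    θ a * θ 1 = θ 1 * θ a ∧ θ a * θ a = θ 1 * θ (a * a) := by
  let φ := cfcHom (R := ℝ) ha
  let T : C(spectrum ℝ a, ℝ) →L[ℝ] B :=
    (θ.restrictScalars ℝ).comp ⟨φ.toAlgHom.toLinearMap, cfcHom_continuous ha⟩
  have T_apply : ∀ f, T f = θ (φ f) := fun f => rfl
  have hT : ∀ f g, f * g = 0 → T f * T g = 0 := fun f g hfg =>
    hθ _ _ (cfcHom_predicate ha f) (cfcHom_predicate ha g) (by
      change φ f * φ g = 0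
      rw [← map_mul, hfg, map_zero])
  let x : C(spectrum ℝ a, ℝ) := (ContinuousMap.id ℝ).restrict (spectrum ℝ a)
  have hx : φ x = a := cfcHom_id ha
  have h1 := mul_eq T hT x 1
  have h2 := mul_eq T hT x x
  simp only [T_apply, mul_one, map_mul, map_one, hx] at h1 h2
  exact ⟨h1, h2⟩

lemma identities (θ : A →L[ℂ] B)
    (hθ : ∀ a b : A, IsSelfAdjoint a → IsSelfAdjoint b → a * b = 0 → θ a * θ b = 0) (x : A) :
    θ x * θ 1 = θ 1 * θ x ∧ θ x * θ x = θ 1 * θ (x * x) := by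
  have hsa := selfAdjoint_identities θ hθ
  obtain ⟨a, b, ha, hb, rfl⟩ : ∃ a b : A, IsSelfAdjoint a ∧ IsSelfAdjoint b ∧
      a + Complex.I • b = x :=
    ⟨realPart x, imaginaryPart x, (realPart x).2, (imaginaryPart x).2,
      realPart_add_I_smul_imaginaryPart x⟩
  obtain ⟨a1, a2⟩ := hsa a ha
  obtain ⟨b1, b2⟩ := hsa b hb
  have ab := (hsa (a + b) (ha.add hb)).2
  have polar : θ a * θ b + θ b * θ a = θ 1 * θ (a * b) + θ 1 * θ (b * a) := by
    simp only [map_add, add_mul, mul_add] at ab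
    rw [a2, b2] at ab
    rw [← sub_eq_zero] at ab ⊢
    rw [← ab]
    abel
  constructor
  · simp only [map_add, map_smul, add_mul, mul_add, smul_mul_assoc, mul_smul_comm, a1, b1]
  · have l : (θ a + Complex.I • θ b) * (θ a + Complex.I • θ b)
        = θ a * θ a + Complex.I • (θ a * θ b + θ b * θ a) - θ b * θ b := by
      simp only [add_mul, mul_add, smul_mul_assoc, mul_smul_comm, smul_smul, Complex.I_mul_I,
        smul_add, neg_smul, one_smul]
      abel
    have r : (a + Complex.I • b) * (a + Complex.I • b)
        = a * a + Complex.I • (a * b + b * a) - b * b := by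
      simp only [add_mul, mul_add, smul_mul_assoc, mul_smul_comm, smul_smul, Complex.I_mul_I,
        smul_add, neg_smul, one_smul]
      abel
    rw [r, map_add, map_smul, l, polar, a2, b2]
    simp only [map_add, map_sub, map_smul, mul_add, mul_sub, mul_smul_comm]

end ZeroProd

/-- Let `A`, `B` be unital C*-algebras and `θ : A → B` a bounded linear
map sending zero products of self-adjoint elements to zero products.  If `θ 1` is
invertible in `B`, then `θ = θ(1)·J` for a bounded linear Jordan homomorphism
`J : A → B`, namely `J = θ(1)⁻¹ θ`. -/
theorem zpp_selfAdjoint_eq_theta_one_mul_jordan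
    {A B : Type*} [CStarAlgebra A] [CStarAlgebra B]
    (θ : A →L[ℂ] B)
    (hθ : ∀ a b : A, IsSelfAdjoint a → IsSelfAdjoint b → a * b = 0 → θ a * θ b = 0)
    (hinv : IsUnit (θ 1)) :
    ∃ J : A →L[ℂ] B,
      (∀ a : A, J (a * a) = J a * J a) ∧
      (∀ a : A, θ a = θ 1 * J a) ∧
      (∀ a : A, J a = Ring.inverse (θ 1) * θ a) := by
  have hid := ZeroProd.identities θ hθ
  have hl : Ring.inverse (θ 1) * θ 1 = 1 := Ring.inverse_mul_cancel _ hinv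
  have hr : θ 1 * Ring.inverse (θ 1) = 1 := Ring.mul_inverse_cancel _ hinv
  refine ⟨(ContinuousLinearMap.mul ℂ B (Ring.inverse (θ 1))).comp θ, ?_, ?_, fun a => rfl⟩
  · intro a
    change Ring.inverse (θ 1) * θ (a * a)
      = Ring.inverse (θ 1) * θ a * (Ring.inverse (θ 1) * θ a)
    obtain ⟨h1, h2⟩ := hid a
    set u := θ 1
    set v := Ring.inverse u
    have hc : θ a * v = v * θ a := by
      calc θ a * v = v * (u * θ a) * v := by rw [← mul_assoc, hl, one_mul]
        _ = v * θ a * (u * v) := by rw [← h1]; simp only [mul_assoc]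
        _ = v * θ a := by rw [hr, mul_one]
    calc v * θ (a * a) = v * (v * (u * θ (a * a))) := by rw [← mul_assoc v u, hl, one_mul]
      _ = v * (v * θ a * θ a) := by rw [← h2, mul_assoc v]
      _ = v * (θ a * v * θ a) := by rw [hc]
      _ = v * θ a * (v * θ a) := by simp only [mul_assoc]
  · intro a
    change θ a = θ 1 * (Ring.inverse (θ 1) * θ a)
    rw [← mul_assoc, hr, one_mul]
end

section
/- Let A and B be C*-algebras and θ : A → B a surjective bounded (complex-)linear map such that θ(a)θ(b) = 0 whenever a, b are self-adjoint elements of A with ab = 0. Then the kernel of θ is a closed two-sided ideal of A. -/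
/-!
The kernel of `θ` is closed by continuity, and closed Jordan ideals of C*-algebras are two-sided
ideals (`jordan_ideal_isIdeal`), so the point is that the kernel is a Jordan ideal.

Fix a self-adjoint `a`. On the commutative algebra generated by `a`, the bounded bilinear map
`V f h = θ (f(a)) * θ (h(a))` vanishes whenever `f * h = 0`. Every such map is balanced,
`V (g * f) h = V f (g * h)` (`commutation`): the best constant bounding the defect over the unit
ball of `g` is shown to be at most `3 / 4` of itself. No measure theory or second dual is involved.

Suppose now that `e` and `b` are self-adjoint with `e * b = b`. The balancing identity, applied in
the algebra generated by `b`, gives `θ e * θ (b * b) = θ b * θ b = θ (b * b) * θ e`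
(`map_local_unit`). If `e` is also a local unit for `c`, it follows that
`θ (b * b) * (θ c * θ c) = θ (b * b) * θ e * θ (c * c) = θ b * θ b * θ (c * c)`. Pairs `b`, `c` with
a common local unit are dense, by means of an approximate unit, so the outer identity holds for all
self-adjoint `b` and `c` (`map_sq_mul`). Polarizing,
`θ (x * b + b * x) * (θ c * θ c) = (θ x * θ b + θ b * θ x) * θ (c * c)` for all `x`, `b`, `c`
(`map_jordan_mul_sq`).

If `θ x = 0`, the right-hand side vanishes. By surjectivity `y = θ (x * b + b * x)` satisfies
`y * (u * u) = 0` for every `u` in `B`, and this forces `y = 0`.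
-/

/-! ### Bilinear maps on `C(K, ℝ)` preserving zero products -/

set_option maxHeartbeats 1000000 in
/-- The contraction step for `commutation`: a bound `c` for the defect `V (g * f) h - V f (g * h)`,
uniform over the unit ball of `g`, improves to `3 / 4 * c`. By a partition of unity `f` is split
into a part living where `|g| ≤ 1 / 4`, on which `g` may be truncated to a function of norm at most
`1 / 4`, and parts living where `g` has a fixed sign. On the latter, multiplying `h` by the sign
of `g` turns `g` into `|g|`, and subtracting the constant `1 / 2`, which has no defect, leaves a
function of norm at most `1 / 2`. -/
theorem commutation_step {K E : Type*} [TopologicalSpace K] [CompactSpace K]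
    [NormedAddCommGroup E] [NormedSpace ℝ E]
    (V : C(K, ℝ) →ₗ[ℝ] C(K, ℝ) →ₗ[ℝ] E) (hV : ∀ f h, f * h = 0 → V f h = 0)
    {c : ℝ} (hc : 0 ≤ c)
    (hP : ∀ g f h, ‖g‖ ≤ 1 → ‖V (g * f) h - V f (g * h)‖ ≤ c * (‖f‖ * ‖h‖)) :
    ∀ g f h, ‖g‖ ≤ 1 → ‖V (g * f) h - V f (g * h)‖ ≤ (3 / 4 * c) * (‖f‖ * ‖h‖) := by
  have hscale : ∀ (r : ℝ), 0 < r → ∀ g f h, ‖g‖ ≤ r →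
      ‖V (g * f) h - V f (g * h)‖ ≤ r * (c * (‖f‖ * ‖h‖)) := by
    intro r hr g f h hg
    have h1 := hP (r⁻¹ • g) f h (by
      rw [norm_smul, norm_inv, Real.norm_of_nonneg hr.le]
      rw [inv_mul_le_iff₀ hr]; simpa using hg)
    simp only [smul_mul_assoc, map_smul, LinearMap.smul_apply, ← smul_sub] at h1
    rw [norm_smul, norm_inv, Real.norm_of_nonneg hr.le, inv_mul_le_iff₀ hr] at h1
    exact h1
  -- A factor of the right argument may be changed off the support of the left argument.
  have hswap : ∀ f k k' h : C(K, ℝ), k * f = k' * f → V f (k * h) = V f (k' * h) := by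
    intro f k k' h hk
    rw [← sub_eq_zero, ← map_sub]
    apply hV
    rw [← sub_mul, ← mul_assoc, mul_comm f, sub_mul, hk, sub_self, zero_mul]
  intro g f h hg
  have hgt : ∀ t, |g t| ≤ 1 := fun t => (g.norm_coe_le_norm t).trans hg
  -- `ρR`, `ρL` and `1 - (ρR + ρL)` form a partition of unity, supported in `g ≥ 1 / 8`,
  -- `g ≤ -1 / 8` and `|g| ≤ 1 / 4`. On the first two sets `σ` is the sign of `g`, on the third
  -- `κ` agrees with `g`.
  let ρR : C(K, ℝ) := ⟨fun t => max 0 (min 1 (8 * g t - 1)), by fun_prop⟩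
  let ρL : C(K, ℝ) := ⟨fun t => max 0 (min 1 (-8 * g t - 1)), by fun_prop⟩
  let σ : C(K, ℝ) := ⟨fun t => max (-1) (min 1 (8 * g t)), by fun_prop⟩
  let κ : C(K, ℝ) := ⟨fun t => max (-(1/4)) (min (1/4) (g t)), by fun_prop⟩
  let m : C(K, ℝ) := ⟨fun t => |g t| - 1 / 2, by fun_prop⟩
  have hκ : ‖κ‖ ≤ 1 / 4 := by
    rw [ContinuousMap.norm_le _ (by norm_num)]
    intro t
    simp only [κ, ContinuousMap.coe_mk, Real.norm_eq_abs]
    grind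
  have hm : ‖m‖ ≤ 1 / 2 := by
    rw [ContinuousMap.norm_le _ (by norm_num)]
    intro t
    have := hgt t
    simp only [m, ContinuousMap.coe_mk, Real.norm_eq_abs]
    grind
  have hσ : ‖σ‖ ≤ 1 := by
    rw [ContinuousMap.norm_le _ (by norm_num)]
    intro t
    simp only [σ, ContinuousMap.coe_mk, Real.norm_eq_abs]
    grind
  have hρ : ‖ρR + ρL‖ ≤ 1 := by
    rw [ContinuousMap.norm_le _ (by norm_num)]
    intro t
    simp only [ρR, ρL, ContinuousMap.add_apply, ContinuousMap.coe_mk, Real.norm_eq_abs]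
    grind
  have hη : ‖1 - (ρR + ρL)‖ ≤ 1 := by
    rw [ContinuousMap.norm_le _ (by norm_num)]
    intro t
    simp only [ρR, ρL, ContinuousMap.add_apply, ContinuousMap.sub_apply, ContinuousMap.one_apply,
      ContinuousMap.coe_mk, Real.norm_eq_abs]
    grind
  have e1 : g * (1 - (ρR + ρL)) = κ * (1 - (ρR + ρL)) := by
    ext t
    simp only [ρR, ρL, κ, ContinuousMap.add_apply, ContinuousMap.sub_apply,
      ContinuousMap.one_apply, ContinuousMap.coe_mk, ContinuousMap.mul_apply]
    rcases le_total (|g t|) (1 / 4) with h1 | h1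
    · congr 1; grind
    · rw [show (1 : ℝ) - (max 0 (min 1 (8 * g t - 1)) + max 0 (min 1 (-8 * g t - 1))) = 0 by grind]
      simp
  have e2 : g * ρR = (m + (1 / 2 : ℝ) • 1) * ρR := by
    ext t
    simp only [ρR, m, ContinuousMap.add_apply, ContinuousMap.smul_apply, smul_eq_mul,
      ContinuousMap.one_apply, ContinuousMap.coe_mk, ContinuousMap.mul_apply]
    rcases le_total 0 (g t) with h1 | h1
    · rw [abs_of_nonneg h1]; ring
    · rw [show max 0 (min 1 (8 * g t - 1)) = 0 by grind]; simp
  have e3 : g * ρL = -(m + (1 / 2 : ℝ) • 1) * ρL := by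
    ext t
    simp only [ρL, m, ContinuousMap.add_apply, ContinuousMap.smul_apply, smul_eq_mul,
      ContinuousMap.one_apply, ContinuousMap.coe_mk, ContinuousMap.mul_apply,
      ContinuousMap.neg_apply]
    rcases le_total (g t) 0 with h1 | h1
    · rw [abs_of_nonpos h1]; ring
    · rw [show max 0 (min 1 (-8 * g t - 1)) = 0 by grind]; simp
  have e4 : 1 * ρR = σ * ρR := by
    ext t
    simp only [ρR, σ, ContinuousMap.one_apply, ContinuousMap.coe_mk, ContinuousMap.mul_apply]
    rcases le_total (1 / 8) (g t) with h1 | h1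
    · congr 1; grind
    · rw [show max 0 (min 1 (8 * g t - 1)) = 0 by grind]; simp
  have e5 : 1 * ρL = -σ * ρL := by
    ext t
    simp only [ρL, σ, ContinuousMap.one_apply, ContinuousMap.coe_mk, ContinuousMap.mul_apply,
      ContinuousMap.neg_apply]
    rcases le_total (g t) (-(1 / 8)) with h1 | h1
    · congr 1; grind
    · rw [show max 0 (min 1 (-8 * g t - 1)) = 0 by grind]; simp
  clear_value ρR ρL σ κ m
  have key : V (g * f) h - V f (g * h) =
      (V (κ * ((1 - (ρR + ρL)) * f)) h - V ((1 - (ρR + ρL)) * f) (κ * h))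
      + (V (m * ((ρR + ρL) * f)) (σ * h) - V ((ρR + ρL) * f) (m * (σ * h))) := by
    -- `d1` is the part near the zero set of `g`; `d2` and `d3` are the parts where `g = |g|`,
    -- `σ = 1` and where `g = -|g|`, `σ = -1` respectively.
    have d1 : V (g * ((1 - (ρR + ρL)) * f)) h - V ((1 - (ρR + ρL)) * f) (g * h)
        = V (κ * ((1 - (ρR + ρL)) * f)) h - V ((1 - (ρR + ρL)) * f) (κ * h) := by
      rw [← mul_assoc, e1, mul_assoc, hswap _ g κ h (by rw [← mul_assoc, e1, mul_assoc])]
    have d2 : V (g * (ρR * f)) h - V (ρR * f) (g * h)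
        = V (m * (ρR * f)) (σ * h) - V (ρR * f) (m * (σ * h)) := by
      have s1 : V (m * (ρR * f)) (σ * h) = V (m * (ρR * f)) h := by
        have := hswap (m * (ρR * f)) 1 σ h (by
          linear_combination (m * f) * e4)
        rw [← this, one_mul]
      have s2 : V (ρR * f) (σ * h) = V (ρR * f) h := by
        have := hswap (ρR * f) 1 σ h (by linear_combination f * e4)
        rw [← this, one_mul]
      have s3 : V (ρR * f) (m * (σ * h)) = V (ρR * f) (m * h) := by
        have := hswap (ρR * f) 1 σ (m * h) (by linear_combination f * e4)
        rw [one_mul] at this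
        rw [this]; congr 1; ring
      have s4 := hswap (ρR * f) g (m + (1 / 2 : ℝ) • 1) h (by
        rw [← mul_assoc, e2, mul_assoc])
      rw [s1, s3, s4, ← mul_assoc, e2]
      simp only [add_mul, map_add, LinearMap.add_apply, smul_mul_assoc, one_mul, map_smul,
        LinearMap.smul_apply, mul_assoc]
      abel
    have d3 : V (g * (ρL * f)) h - V (ρL * f) (g * h)
        = V (m * (ρL * f)) (σ * h) - V (ρL * f) (m * (σ * h)) := by
      have s1 : V (m * (ρL * f)) (σ * h) = -V (m * (ρL * f)) h := by
        have := hswap (m * (ρL * f)) 1 (-σ) h (by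
          linear_combination (m * f) * e5)
        rw [one_mul] at this
        rw [this, neg_mul, map_neg, neg_neg]
      have s3 : V (ρL * f) (m * (σ * h)) = -V (ρL * f) (m * h) := by
        have := hswap (ρL * f) 1 (-σ) (m * h) (by linear_combination f * e5)
        rw [one_mul] at this
        rw [this, neg_mul, map_neg, neg_neg]; congr 1; ring
      have s4 := hswap (ρL * f) g (-(m + (1 / 2 : ℝ) • 1)) h (by
        rw [← mul_assoc, e3, mul_assoc])
      rw [s1, s3, s4, ← mul_assoc, e3]
      simp only [add_mul, map_add, LinearMap.add_apply, smul_mul_assoc, one_mul, map_smul,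
        LinearMap.smul_apply, mul_assoc, neg_mul, neg_add, map_neg, LinearMap.neg_apply]
      abel
    have hf : f = (1 - (ρR + ρL)) * f + ρR * f + ρL * f := by ring
    rw [← d1, add_mul ρR ρL f, mul_add m, map_add, map_add, LinearMap.add_apply,
      LinearMap.add_apply, add_sub_add_comm, ← d2, ← d3]
    conv_lhs => rw [hf]
    simp only [mul_add, map_add, LinearMap.add_apply]
    abel
  have b1 := hscale (1 / 4) (by norm_num) κ ((1 - (ρR + ρL)) * f) h hκ
  have b2 := hscale (1 / 2) (by norm_num) m ((ρR + ρL) * f) (σ * h) hm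
  have n1 : ‖(1 - (ρR + ρL)) * f‖ ≤ ‖f‖ :=
    (norm_mul_le _ _).trans (mul_le_of_le_one_left (norm_nonneg _) hη)
  have n2 : ‖(ρR + ρL) * f‖ ≤ ‖f‖ :=
    (norm_mul_le _ _).trans (mul_le_of_le_one_left (norm_nonneg _) hρ)
  have n3 : ‖σ * h‖ ≤ ‖h‖ :=
    (norm_mul_le _ _).trans (mul_le_of_le_one_left (norm_nonneg _) hσ)
  rw [key]
  calc _ ≤ _ := norm_add_le _ _
    _ ≤ 1 / 4 * (c * (‖f‖ * ‖h‖)) + 1 / 2 * (c * (‖f‖ * ‖h‖)) := by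
        refine add_le_add (b1.trans ?_) (b2.trans ?_) <;> gcongr
    _ = _ := by ring

/-- A bounded bilinear map on `C(K, ℝ)` that vanishes on pairs with product zero is balanced. The
real scalars suffice because zero products are only ever tested on real-valued functions. -/
theorem commutation {K E : Type*} [TopologicalSpace K] [CompactSpace K]
    [NormedAddCommGroup E] [NormedSpace ℝ E]
    (V : C(K, ℝ) →ₗ[ℝ] C(K, ℝ) →ₗ[ℝ] E) (hV : ∀ f h, f * h = 0 → V f h = 0)
    {C : ℝ} (hC : 0 ≤ C) (hb : ∀ f h, ‖V f h‖ ≤ C * (‖f‖ * ‖h‖)) (g f h : C(K, ℝ)) :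
    V (g * f) h = V f (g * h) := by
  have hn : ∀ n : ℕ, ∀ g f h, ‖g‖ ≤ 1 →
      ‖V (g * f) h - V f (g * h)‖ ≤ ((3 / 4) ^ n * (2 * C)) * (‖f‖ * ‖h‖) := by
    intro n
    induction n with
    | zero =>
      intro g f h hg
      have h1 : ‖g * f‖ ≤ ‖f‖ :=
        (norm_mul_le _ _).trans (mul_le_of_le_one_left (norm_nonneg _) hg)
      have h2 : ‖g * h‖ ≤ ‖h‖ :=
        (norm_mul_le _ _).trans (mul_le_of_le_one_left (norm_nonneg _) hg)
      calc _ ≤ _ := norm_sub_le _ _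
        _ ≤ C * (‖f‖ * ‖h‖) + C * (‖f‖ * ‖h‖) := by
          refine add_le_add ((hb _ _).trans ?_) ((hb _ _).trans ?_) <;> gcongr
        _ = _ := by ring
    | succ n ih =>
      have := commutation_step V hV (by positivity) ih
      intro g f h hg
      convert this g f h hg using 2
      ring
  have hz : ∀ g f h, ‖g‖ ≤ 1 → V (g * f) h = V f (g * h) := by
    intro g f h hg
    have hlim : Filter.Tendsto (fun n : ℕ => ((3 / 4 : ℝ) ^ n * (2 * C)) * (‖f‖ * ‖h‖))
        Filter.atTop (nhds 0) := by
      have := (tendsto_pow_atTop_nhds_zero_of_lt_one (r := (3 / 4 : ℝ)) (by norm_num)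
        (by norm_num)).mul_const ((2 * C) * (‖f‖ * ‖h‖))
      simpa [mul_assoc] using this
    have h0 := ge_of_tendsto' hlim (fun n => hn n g f h hg)
    exact sub_eq_zero.1 (norm_le_zero_iff.1 h0)
  have hr : (‖g‖ + 1) ≠ 0 := by positivity
  have := hz ((‖g‖ + 1)⁻¹ • g) f h (by
    rw [norm_smul, norm_inv, Real.norm_of_nonneg (by positivity),
      inv_mul_le_iff₀ (by positivity)]
    linarith)
  simp only [smul_mul_assoc, map_smul, LinearMap.smul_apply] at this
  exact smul_right_injective E (inv_ne_zero hr) this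

/-! ### Jordan ideals and polarization -/

/-- Every `x` lies in the closure of `x * star x * x * A`. With `w = star x * x` and
`q t = t / (ε ^ 2 + t ^ 2)`, the element `r = q(w)` is a regularized inverse of `w`. -/
theorem exists_norm_sub_sq_le {A : Type*} [NonUnitalCStarAlgebra A] (x : A) (ε : ℝ) (hε : 0 < ε) :
    ∃ r, ‖x - x * star x * x * r‖ ^ 2 ≤ ε := by
  have hden : ∀ t : ℝ, ε ^ 2 + t ^ 2 ≠ 0 := fun t => by positivity
  obtain ⟨w, hw⟩ : ∃ w, w = star x * x := ⟨_, rfl⟩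
  have hwsa : IsSelfAdjoint w := hw ▸ IsSelfAdjoint.star_mul_self x
  obtain ⟨q, hqd⟩ : ∃ q : ℝ → ℝ, ∀ t, q t = t / (ε ^ 2 + t ^ 2) := ⟨_, fun _ => rfl⟩
  obtain ⟨P, hPd⟩ : ∃ P : ℝ → ℝ, ∀ t, P t = t * q t := ⟨_, fun _ => rfl⟩
  have hq : Continuous q := by
    rw [funext hqd]; exact continuous_id.div (by fun_prop) hden
  have hP : Continuous P := by rw [funext hPd]; fun_prop
  have hq0 : q 0 = 0 := by simp [hqd]
  have hP0 : P 0 = 0 := by simp [hPd]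
  refine ⟨cfcₙ q w, ?_⟩
  obtain ⟨p, hp⟩ : ∃ p, p = cfcₙ P w := ⟨_, rfl⟩
  have hpq : p = w * cfcₙ q w := by
    rw [hp, funext hPd, cfcₙ_mul (fun t => t) q w, cfcₙ_id' ℝ w]
  have hps : star p = p := hp ▸ (cfcₙ_predicate P w : IsSelfAdjoint _)
  have hy : x - x * star x * x * cfcₙ q w = x - x * p := by
    rw [hpq, hw]; simp only [mul_assoc]
  have hws : star x * x = w := hw.symm
  rw [hy, sq, ← CStarRing.norm_star_mul_self]
  have hF : star (x - x * p) * (x - x * p)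
      = cfcₙ (fun t => (t - t * P t) - (P t * t - P t * t * P t)) w := by
    rw [cfcₙ_sub (fun t => t - t * P t) (fun t => P t * t - P t * t * P t) w,
      cfcₙ_sub (fun t => t) (fun t => t * P t) w,
      cfcₙ_sub (fun t => P t * t) (fun t => P t * t * P t) w,
      cfcₙ_mul (fun t => P t * t) P w, cfcₙ_mul (fun t => t) P w,
      cfcₙ_mul P (fun t => t) w, cfcₙ_id' ℝ w, ← hp, star_sub, star_mul, hps, ← hws]
    noncomm_ring
  rw [hF]
  refine norm_cfcₙ_le fun t ht => ?_
  have e1 : (t - t * P t) - (P t * t - P t * t * P t) = t * ε ^ 4 / (ε ^ 2 + t ^ 2) ^ 2 := by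
    have := hden t
    simp only [hPd, hqd]
    field_simp
    ring
  rw [e1, Real.norm_eq_abs, abs_div, abs_mul, abs_of_pos (show 0 < ε ^ 4 by positivity),
    abs_of_pos (show 0 < (ε ^ 2 + t ^ 2) ^ 2 by positivity), div_le_iff₀ (by positivity)]
  have h2 : |t| * ε ≤ ε ^ 2 + t ^ 2 := by
    nlinarith [sq_nonneg (|t| - ε), sq_abs t, abs_nonneg t]
  have h3 : ε ^ 2 ≤ ε ^ 2 + t ^ 2 := by nlinarith [sq_nonneg t]
  calc |t| * ε ^ 4 = ε * ((|t| * ε) * ε ^ 2) := by ring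
    _ ≤ ε * ((ε ^ 2 + t ^ 2) * (ε ^ 2 + t ^ 2)) := by gcongr
    _ = _ := by ring

/-- A closed Jordan ideal `J` of a C*-algebra is a two-sided ideal. The largest two-sided ideal `T`
inside `J` contains `y * y`, hence `y * a * y`, for all `y ∈ J`. So it contains `x * star x * x * r`
for `x ∈ J`, and these elements approximate `x`. No closedness of `J` under `star` is needed. -/
theorem jordan_ideal_isIdeal {A : Type*} [NonUnitalCStarAlgebra A] (J : Submodule ℂ A)
    (hcl : IsClosed (J : Set A)) (hJ : ∀ x ∈ J, ∀ a, x * a + a * x ∈ J) :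
    ∀ x ∈ J, ∀ a, a * x ∈ J ∧ x * a ∈ J := by
  have half : ∀ {y : A}, y + y ∈ J → y ∈ J := by
    intro y hy
    have := J.smul_mem (2⁻¹ : ℂ) hy
    rwa [← two_smul ℂ, smul_smul, inv_mul_cancel₀ two_ne_zero, one_smul] at this
  -- That `T` is closed under multiplication by all of `A` is `Tmul`, which uses `hJ`.
  let T : A → Prop := fun y => y ∈ J ∧ ∀ a, y * a ∈ J ∧ a * y ∈ J
  have Tadd : ∀ {y z}, T y → T z → T (y + z) := fun hy hz =>
    ⟨J.add_mem hy.1 hz.1, fun a => ⟨by rw [add_mul]; exact J.add_mem (hy.2 a).1 (hz.2 a).1,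
      by rw [mul_add]; exact J.add_mem (hy.2 a).2 (hz.2 a).2⟩⟩
  have Tneg : ∀ {y}, T y → T (-y) := fun hy =>
    ⟨J.neg_mem hy.1, fun a => ⟨by rw [neg_mul]; exact J.neg_mem (hy.2 a).1,
      by rw [mul_neg]; exact J.neg_mem (hy.2 a).2⟩⟩
  have Thalf : ∀ {y}, T (y + y) → T y := fun hy =>
    ⟨half hy.1, fun a => ⟨half (by rw [← add_mul]; exact (hy.2 a).1),
      half (by rw [← mul_add]; exact (hy.2 a).2)⟩⟩
  have Tmul : ∀ {y}, T y → ∀ a, T (y * a) ∧ T (a * y) := by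
    intro y hy a
    refine ⟨⟨(hy.2 a).1, fun b => ⟨?_, ?_⟩⟩, ⟨(hy.2 a).2, fun b => ⟨?_, ?_⟩⟩⟩
    · rw [mul_assoc]; exact (hy.2 _).1
    · have := J.sub_mem (hJ _ (hy.2 a).1 b) (hy.2 (a * b)).1
      rwa [mul_assoc y a b, add_sub_cancel_left] at this
    · have := J.sub_mem (hJ _ (hy.2 a).2 b) (hy.2 (b * a)).2
      rwa [mul_assoc b a y, add_sub_cancel_right] at this
    · rw [← mul_assoc]; exact (hy.2 _).2
  -- `[y², a] = y ∘ [y, a]` and `y² ∘ a` both lie in `J`.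
  have Tsq : ∀ y ∈ J, T (y * y) := by
    intro y hy
    have h0 : y * y ∈ J := half (hJ y hy y)
    refine ⟨h0, fun a => ?_⟩
    have h1 := hJ _ h0 a
    have h2 := hJ y hy (y * a - a * y)
    constructor
    · apply half
      convert J.add_mem h1 h2 using 1
      noncomm_ring
    · apply half
      convert J.sub_mem h1 h2 using 1
      noncomm_ring
  have Tjordan : ∀ y ∈ J, ∀ z ∈ J, T (y * z + z * y) := by
    intro y hy z hz
    have := Tadd (Tsq _ (J.add_mem hy hz)) (Tneg (Tadd (Tsq y hy) (Tsq z hz)))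
    convert this using 1
    noncomm_ring
  have Tsandwich : ∀ y ∈ J, ∀ a, T (y * a * y) := by
    intro y hy a
    apply Thalf
    have h1 := Tjordan y hy _ (hJ y hy a)
    have h2 := Tmul (Tsq y hy) a
    convert Tadd h1 (Tneg (Tadd h2.1 h2.2)) using 1
    noncomm_ring
  intro x hx
  have happ := exists_norm_sub_sq_le x
  have hlim : ∃ r : ℕ → A,
      Filter.Tendsto (fun n => x * star x * x * r n) Filter.atTop (nhds x) := by
    choose r hr using fun n : ℕ => happ (1 / ((n : ℝ) + 1)) (by positivity)
    refine ⟨r, ?_⟩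
    rw [tendsto_iff_norm_sub_tendsto_zero]
    have h2 : Filter.Tendsto (fun n => ‖x * star x * x * r n - x‖ ^ 2) Filter.atTop (nhds 0) := by
      refine squeeze_zero (fun _ => by positivity) (fun n => ?_)
        (tendsto_one_div_add_atTop_nhds_zero_nat (𝕜 := ℝ))
      rw [norm_sub_rev]; exact hr n
    simpa [Real.sqrt_sq] using h2.sqrt
  obtain ⟨r, hr⟩ := hlim
  have hT : ∀ n, T (x * star x * x * r n) := fun n => (Tmul (Tsandwich x hx _) _).1
  exact fun a => ⟨hcl.mem_of_tendsto (hr.const_mul a) (.of_forall fun n => ((hT n).2 a).2),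
    hcl.mem_of_tendsto (hr.mul_const a) (.of_forall fun n => ((hT n).2 a).1)⟩

/-- Polarization over the self-adjoint elements, which span `A` over `ℂ`. -/
theorem antisymm_of_selfAdjoint {A E : Type*} [NonUnitalCStarAlgebra A]
    [AddCommGroup E] [Module ℂ E] (q : A →ₗ[ℂ] A →ₗ[ℂ] E) (hq : ∀ a, IsSelfAdjoint a → q a a = 0) (a b : A) :
    q a b + q b a = 0 := by
  have hsa : ∀ a b, IsSelfAdjoint a → IsSelfAdjoint b → q a b + q b a = 0 := by
    intro a b ha hb
    have := hq (a + b) (ha.add hb)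
    simpa [hq a ha, hq b hb, add_comm] using this
  have hleft : ∀ a b, IsSelfAdjoint b → q a b + q b a = 0 := by
    intro a b hb
    have h1 := hsa _ b (realPart a).2 hb
    have h2 := hsa _ b (imaginaryPart a).2 hb
    rw [← realPart_add_I_smul_imaginaryPart a]
    simp only [map_add, map_smul, LinearMap.add_apply, LinearMap.smul_apply]
    rw [show ∀ u v w z : E, u + Complex.I • v + (w + Complex.I • z) = (u + w) + Complex.I • (v + z)
      from fun u v w z => by module, h1, h2]
    simp
  have h1 := hleft a _ (realPart b).2
  have h2 := hleft a _ (imaginaryPart b).2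
  rw [← realPart_add_I_smul_imaginaryPart b]
  simp only [map_add, map_smul, LinearMap.add_apply, LinearMap.smul_apply]
  rw [show ∀ u v w z : E, u + Complex.I • v + (w + Complex.I • z) = (u + w) + Complex.I • (v + z)
      from fun u v w z => by module, h1, h2]
  simp

/-! ### Restriction of `θ` to singly generated subalgebras -/

/-- For self-adjoint `a`, the linear map sending a continuous function `f` on the quasispectrum
of `a` to `cfcₙ (t ↦ t * f t) a`. The factor `t` makes the function vanish at `0`, so that `f` may be
arbitrary although `A` has no unit. -/
noncomputable def cfcMulId {A : Type*} [NonUnitalCStarAlgebra A] {a : A} (ha : IsSelfAdjoint a) :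
    C(quasispectrum ℝ a, ℝ) →ₗ[ℝ] A where
  toFun f := cfcₙHom ha ⟨⟨Subtype.val, continuous_subtype_val⟩ * f, by simp⟩
  map_add' f g := by
    rw [← map_add]; congr 1; ext t; simp [mul_add]
  map_smul' r f := by
    rw [RingHom.id_apply, ← map_smul]; congr 1; ext t; simp

theorem cfcMulId_restrict {A : Type*} [NonUnitalCStarAlgebra A] {a : A} (ha : IsSelfAdjoint a)
    {f : ℝ → ℝ} (hf : Continuous f) :
    cfcMulId ha ⟨fun t => f t, by fun_prop⟩ = cfcₙ (fun t => t * f t) a := by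
  rw [cfcₙ_apply (fun t => t * f t) a (by fun_prop) (by simp) ha]
  rfl

theorem norm_cfcMulId_le {A : Type*} [NonUnitalCStarAlgebra A] {a : A} (ha : IsSelfAdjoint a)
    (f : C(quasispectrum ℝ a, ℝ)) : ‖cfcMulId ha f‖ ≤ ‖a‖ * ‖f‖ := by
  change ‖cfcₙHom ha _‖ ≤ _
  rw [norm_cfcₙHom a _ ha, ContinuousMapZero.norm_def, ContinuousMap.norm_le _ (by positivity)]
  intro t
  refine (norm_mul_le _ _).trans ?_
  gcongr
  · exact NonUnitalIsometricContinuousFunctionalCalculus.norm_quasispectrum_le a t.2 ha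
  · exact f.norm_coe_le_norm t

theorem cfcMulId_mul_eq_zero {A : Type*} [NonUnitalCStarAlgebra A] {a : A} (ha : IsSelfAdjoint a)
    {f h : C(quasispectrum ℝ a, ℝ)} (hfh : f * h = 0) : cfcMulId ha f * cfcMulId ha h = 0 := by
  change cfcₙHom ha _ * cfcₙHom ha _ = 0
  rw [← map_mul, ← map_zero (cfcₙHom (R := ℝ) ha)]
  congr 1
  ext t
  have : f t * h t = 0 := DFunLike.congr_fun hfh t
  change ((t : ℝ) * f t) * ((t : ℝ) * h t) = 0
  linear_combination (t : ℝ) * t * this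

theorem isSelfAdjoint_cfcMulId {A : Type*} [NonUnitalCStarAlgebra A] {a : A} (ha : IsSelfAdjoint a)
    (f : C(quasispectrum ℝ a, ℝ)) : IsSelfAdjoint (cfcMulId ha f) := cfcₙHom_predicate ha _

/-- Continuous functional calculus form of `commutation`, applied to
`(f, h) ↦ θ (cfcMulId ha f) * θ (cfcMulId ha h)`. -/
theorem map_cfc_mul_map_cfc
    {A B : Type*} [NonUnitalCStarAlgebra A] [NonUnitalCStarAlgebra B] (θ : A →L[ℂ] B)
    (hθ : ∀ a b : A, IsSelfAdjoint a → IsSelfAdjoint b → a * b = 0 → θ a * θ b = 0)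
    {a : A} (ha : IsSelfAdjoint a) {f g h : ℝ → ℝ} (hf : Continuous f)
    (hg : Continuous g) (hh : Continuous h) :
    θ (cfcₙ (fun t => t * (g t * f t)) a) * θ (cfcₙ (fun t => t * h t) a)
      = θ (cfcₙ (fun t => t * f t) a) * θ (cfcₙ (fun t => t * (g t * h t)) a) := by
  let V := (LinearMap.mul ℝ B).compl₁₂
    (((θ : A →ₗ[ℂ] B).restrictScalars ℝ) ∘ₗ cfcMulId ha)
    (((θ : A →ₗ[ℂ] B).restrictScalars ℝ) ∘ₗ cfcMulId ha)
  have hVd : ∀ f h, V f h = θ (cfcMulId ha f) * θ (cfcMulId ha h) := fun _ _ => rfl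
  have key := commutation V
    (fun f h hfh => hθ _ _ (isSelfAdjoint_cfcMulId ha f) (isSelfAdjoint_cfcMulId ha h)
      (cfcMulId_mul_eq_zero ha hfh))
    (C := (‖θ‖ * ‖a‖) * (‖θ‖ * ‖a‖)) (by positivity)
    (fun f h => by
      have hb : ∀ f, ‖θ (cfcMulId ha f)‖ ≤ ‖θ‖ * ‖a‖ * ‖f‖ := fun f => by
        refine (θ.le_opNorm _).trans ?_
        rw [mul_assoc]; gcongr; exact norm_cfcMulId_le ha f
      rw [hVd]
      calc _ ≤ _ := norm_mul_le _ _
        _ ≤ (‖θ‖ * ‖a‖ * ‖f‖) * (‖θ‖ * ‖a‖ * ‖h‖) := by gcongr <;> exact hb _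
        _ = _ := by ring)
    ⟨fun t => g t, by fun_prop⟩ ⟨fun t => f t, by fun_prop⟩ ⟨fun t => h t, by fun_prop⟩
  rw [hVd, hVd] at key
  rw [← cfcMulId_restrict ha hf, ← cfcMulId_restrict ha hh,
    ← cfcMulId_restrict ha (f := fun t => g t * f t) (by fun_prop),
    ← cfcMulId_restrict ha (f := fun t => g t * h t) (by fun_prop)]
  exact key

/-- A self-adjoint local unit `e` of `b` behaves as though `θ e` were a multiplier carrying
`θ (b * b)` to `θ b * θ b`. When `b` is replaced by a `p` of the form `cfcₙ (t ↦ t * ψ t) b` with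
`ψ` vanishing near `0`, there is a `u` in the algebra generated by `b` with `u * p = p`; then
`e - u` annihilates `p * p`, which reduces the claim for `e` to the claim for `u`, an instance of
`map_cfc_mul_map_cfc`. -/
theorem map_local_unit
    {A B : Type*} [NonUnitalCStarAlgebra A] [NonUnitalCStarAlgebra B] (θ : A →L[ℂ] B)
    (hθ : ∀ a b : A, IsSelfAdjoint a → IsSelfAdjoint b → a * b = 0 → θ a * θ b = 0)
    {e b : A} (he : IsSelfAdjoint e) (hb : IsSelfAdjoint b) (heb : e * b = b) :
    θ e * θ (b * b) = θ b * θ b ∧ θ (b * b) * θ e = θ b * θ b := by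
  -- The identities hold for some `p` arbitrarily close to `b`.
  have hcut : ∀ ε : ℝ, 0 < ε → ∃ p, ‖b - p‖ ≤ ε ∧ θ e * θ (p * p) = θ p * θ p ∧
      θ (p * p) * θ e = θ p * θ p := by
    intro ε hε
    have hd1 : ∀ t : ℝ, max |t| ε ≠ 0 := fun t => (lt_max_of_lt_right hε).ne'
    have hd2 : ∀ t : ℝ, max (t ^ 2) (ε ^ 2) ≠ 0 := fun t =>
      (lt_max_of_lt_right (by positivity)).ne'
    -- `ψ` vanishes on `[-ε, ε]` and `|t - t * ψ t| ≤ ε`; `k` is a continuous function equal to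
    -- `1 / t` for `|t| ≥ ε`.
    obtain ⟨ψ, hψ⟩ : ∃ ψ : ℝ → ℝ, ∀ t, ψ t = 1 - ε / max |t| ε := ⟨_, fun _ => rfl⟩
    obtain ⟨k, hk⟩ : ∃ k : ℝ → ℝ, ∀ t, k t = t / max (t ^ 2) (ε ^ 2) := ⟨_, fun _ => rfl⟩
    have hψc : Continuous ψ := by
      rw [funext hψ]; exact continuous_const.sub (continuous_const.div (by fun_prop) hd1)
    have hkc : Continuous k := by
      rw [funext hk]; exact continuous_id.div (by fun_prop) hd2
    have hψ0 : ψ 0 = 0 := by simp [hψ, max_eq_right hε.le, hε.ne']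
    have hkψ : ∀ t, t * k t * ψ t = ψ t := by
      intro t
      rcases le_total |t| ε with h | h
      · rw [show ψ t = 0 by simp [hψ, max_eq_right h, hε.ne']]; simp
      · have ht : t ≠ 0 := by rintro rfl; simp at h; linarith
        have h2 : ε ^ 2 ≤ t ^ 2 := by rw [← sq_abs t]; gcongr
        rw [hk, max_eq_left h2]
        field_simp
    set p := cfcₙ (fun t => t * ψ t) b with hp
    set u := cfcₙ (fun t => t * k t) b with hu
    have hpp : p * p = cfcₙ (fun t => t * (ψ t * (t * ψ t))) b := by
      rw [hp, ← cfcₙ_mul (fun t => t * ψ t) (fun t => t * ψ t) b]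
      congr 1; ext t; ring
    have hpψ : p = b * cfcₙ ψ b := by
      rw [hp, cfcₙ_mul (fun t => t) ψ b, cfcₙ_id' ℝ b]
    have hpsa : IsSelfAdjoint p := cfcₙ_predicate _ b
    have husa : IsSelfAdjoint u := cfcₙ_predicate _ b
    have hppsa : IsSelfAdjoint (p * p) := by
      rw [hpp]; exact cfcₙ_predicate _ b
    have hep : e * p = p := by rw [hpψ, ← mul_assoc, heb]
    have hup : u * p = p := by
      rw [hu, hp, ← cfcₙ_mul (fun t => t * k t) (fun t => t * ψ t) b]
      congr 1; ext t; linear_combination t * hkψ t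
    have hz : (e - u) * (p * p) = 0 := by
      rw [← mul_assoc, sub_mul, hep, hup, sub_self, zero_mul]
    have hz' : (p * p) * (e - u) = 0 := by
      have := congrArg star hz
      rwa [star_mul, star_zero, hppsa.star_eq, (he.sub husa).star_eq] at this
    have h1 := hθ _ _ (he.sub husa) hppsa hz
    have h2 := hθ _ _ hppsa (he.sub husa) hz'
    rw [map_sub, sub_mul, sub_eq_zero] at h1
    rw [map_sub, mul_sub, sub_eq_zero] at h2
    refine ⟨p, ?_, ?_, ?_⟩
    · have : b - p = cfcₙ (fun t => t - t * ψ t) b := by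
        rw [cfcₙ_sub (fun t => t) (fun t => t * ψ t) b, cfcₙ_id' ℝ b]
      rw [this]
      refine norm_cfcₙ_le fun t _ => ?_
      have hm : 0 < max |t| ε := lt_max_of_lt_right hε
      rw [hψ, show t - t * (1 - ε / max |t| ε) = t * ε / max |t| ε by ring, Real.norm_eq_abs,
        abs_div, abs_mul, abs_of_pos hm, abs_of_pos hε, div_le_iff₀ hm, mul_comm]
      gcongr
      exact le_max_left _ _
    · have := map_cfc_mul_map_cfc θ hθ hb hkc (g := fun t => t * ψ t) (by fun_prop) hψc
      rw [h1, hpp]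
      have e1 : (fun t => t * (ψ t * (t * ψ t))) = fun t => t * (t * ψ t * ψ t) := by
        ext t; ring
      have e2 : (fun t => t * (t * ψ t * k t)) = fun t => t * ψ t := by
        ext t; linear_combination t * hkψ t
      rw [e2] at this
      rw [e1]; exact this.symm
    · have := map_cfc_mul_map_cfc θ hθ hb hψc (g := fun t => t * ψ t) (by fun_prop) hkc
      rw [h2, hpp]
      have e1 : (fun t => t * (ψ t * (t * ψ t))) = fun t => t * (t * ψ t * ψ t) := by
        ext t; ring
      have e2 : (fun t => t * (t * ψ t * k t)) = fun t => t * ψ t := by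
        ext t; linear_combination t * hkψ t
      rw [e2] at this
      rw [e1]; exact this
  choose p hp h1 h2 using fun n : ℕ => hcut (1 / ((n : ℝ) + 1)) (by positivity)
  have hlim : Filter.Tendsto p Filter.atTop (nhds b) := by
    rw [tendsto_iff_norm_sub_tendsto_zero]
    refine squeeze_zero (fun _ => norm_nonneg _) (fun n => ?_)
      (tendsto_one_div_add_atTop_nhds_zero_nat (𝕜 := ℝ))
    rw [norm_sub_rev]; exact hp n
  have l1 := (θ.continuous.tendsto _).comp (hlim.mul hlim)
  have l2 := (θ.continuous.tendsto _).comp hlim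
  constructor
  · exact tendsto_nhds_unique ((l1.const_mul (θ e)).congr h1) (l2.mul l2)
  · exact tendsto_nhds_unique ((l1.mul_const (θ e)).congr h2) (l2.mul l2)

/-! ### Identities for squares and Jordan products -/

/-- Given finitely many elements (here two), a self-adjoint contraction `v` that acts almost as a
unit on them and has itself a local unit `e`. If `z` is a member of the approximate unit, `v = φ(z)`
with `φ` zero on `[0, 1 / 4]` and `φ 1 = 1` has a local unit in the functional calculus of `z`.
Writing `t - φ t = l t * (1 - t)` with `l` bounded by `1` shows that `b - v * b` is small as soon as
`b - z * b` is. -/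
theorem exists_cut {A : Type*} [NonUnitalCStarAlgebra A] (b c : A) (δ : ℝ) (hδ : 0 < δ) :
    ∃ e v : A, IsSelfAdjoint e ∧ IsSelfAdjoint v ∧ e * v = v ∧ ‖v‖ ≤ 1 ∧
      ‖b - v * b‖ ≤ δ ∧ ‖c - v * c‖ ≤ δ := by
  let _ := CStarAlgebra.spectralOrder A
  have _ := CStarAlgebra.spectralOrderedRing A
  have hu := CStarAlgebra.increasingApproximateUnit A
  have hev : ∀ b : A, ∀ᶠ z in CStarAlgebra.approximateUnit A, ‖b - z * b‖ < δ / 2 := by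
    intro b
    have := (tendsto_iff_norm_sub_tendsto_zero.1 (hu.tendsto_mul_right b)).eventually_lt_const
      (show 0 < δ / 2 by positivity)
    simpa only [norm_sub_rev] using this
  obtain ⟨z, hz0, hz1, hzb, hzc⟩ :=
    (hu.eventually_nonneg.and (hu.eventually_norm.and ((hev b).and (hev c)))).exists
  have hzsa : IsSelfAdjoint z := .of_nonneg hz0
  have hsp : ∀ t ∈ quasispectrum ℝ z, 0 ≤ t ∧ t ≤ 1 := fun t ht =>
    ⟨quasispectrum_nonneg_of_nonneg z hz0 t ht, (le_abs_self t).trans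
      ((NonUnitalIsometricContinuousFunctionalCalculus.norm_quasispectrum_le z ht hzsa).trans hz1)⟩
  -- On `[0, 1]`, `l t` is `t / (1 - t)` for `t ≤ 1 / 4` and `1 / 3` afterwards; the `max` only
  -- keeps the denominator away from zero.
  obtain ⟨l, hl⟩ : ∃ l : ℝ → ℝ, ∀ t, l t = min (t / max (1 - t) (1 / 2)) (1 / 3) :=
    ⟨_, fun _ => rfl⟩
  have hden : ∀ t : ℝ, max (1 - t) (1 / 2) ≠ 0 := fun t =>
    (lt_max_of_lt_right (by norm_num)).ne'
  have hlc : Continuous l := by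
    rw [funext hl]; exact (continuous_id.div (by fun_prop) hden).min continuous_const
  have hl0 : l 0 = 0 := by simp [hl]
  have hlz : ‖cfcₙ l z‖ ≤ 1 := by
    refine norm_cfcₙ_le fun t ht => ?_
    have h1 : 0 ≤ t / max (1 - t) (1 / 2) :=
      div_nonneg (hsp t ht).1 (le_max_of_le_right (by norm_num))
    rw [hl, Real.norm_eq_abs, abs_le]
    constructor
    · have : (0 : ℝ) ≤ min (t / max (1 - t) (1 / 2)) (1 / 3) := le_min h1 (by norm_num)
      linarith
    · exact (min_le_right _ _).trans (by norm_num)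
  obtain ⟨φ, hφ⟩ : ∃ φ : ℝ → ℝ, ∀ t, φ t = max 0 ((4 * t - 1) / 3) := ⟨_, fun _ => rfl⟩
  have hφc : Continuous φ := by rw [funext hφ]; fun_prop
  have hφ0 : φ 0 = 0 := by rw [hφ]; norm_num
  have hlφ : z - cfcₙ φ z = cfcₙ l z - cfcₙ l z * z := by
    have h1 : cfcₙ (fun t => t - φ t) z = z - cfcₙ φ z := by
      rw [cfcₙ_sub (fun t => t) φ z, cfcₙ_id' ℝ z]
    have h2 : cfcₙ (fun t => l t - l t * t) z = cfcₙ l z - cfcₙ l z * z := by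
      rw [cfcₙ_sub l (fun t => l t * t) z, cfcₙ_mul l (fun t => t) z, cfcₙ_id' ℝ z]
    rw [← h1, ← h2]
    refine cfcₙ_congr fun t ht => ?_
    obtain ⟨t0, t1⟩ := hsp t ht
    simp only [hφ, hl]
    rcases le_total t (1 / 4) with h | h
    · rw [max_eq_left (by linarith), max_eq_left (show (1 / 2 : ℝ) ≤ 1 - t by linarith),
        min_eq_left (by rw [div_le_iff₀ (by linarith)]; linarith)]
      have : (1 - t) ≠ 0 := by linarith
      field_simp
      ring
    · rw [max_eq_right (by linarith), min_eq_right]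
      · ring
      · rw [le_div_iff₀ (lt_max_of_lt_right (by norm_num))]
        rcases max_cases (1 - t) (1 / 2) with h | h <;> linarith
  have hcut : ∀ b : A, ‖b - z * b‖ < δ / 2 → ‖b - cfcₙ φ z * b‖ ≤ δ := by
    intro b hb
    have : b - cfcₙ φ z * b = (b - z * b) + cfcₙ l z * (b - z * b) := by
      have h := congrArg (· * b) hlφ
      simp only [sub_mul] at h
      rw [mul_sub, ← mul_assoc, ← h]
      abel
    rw [this]
    calc _ ≤ _ := norm_add_le _ _
      _ ≤ ‖b - z * b‖ + 1 * ‖b - z * b‖ := by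
        gcongr
        exact (norm_mul_le _ _).trans (by gcongr)
      _ ≤ δ := by linarith
  refine ⟨cfcₙ (fun t : ℝ => min (4 * t) 1) z, cfcₙ φ z, cfcₙ_predicate _ z, cfcₙ_predicate _ z,
    ?_, ?_, hcut b hzb, hcut c hzc⟩
  · rw [← cfcₙ_mul (fun t : ℝ => min (4 * t) 1) φ z]
    congr 1
    ext t
    simp only [hφ]
    rcases le_total t (1 / 4) with h | h
    · rw [max_eq_left (by linarith)]; simp
    · rw [min_eq_right (by linarith), one_mul]
  · refine norm_cfcₙ_le fun t ht => ?_
    obtain ⟨t0, t1⟩ := hsp t ht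
    rw [hφ, Real.norm_eq_abs, abs_of_nonneg (le_max_left _ _)]
    exact max_le (by norm_num) (by linarith)

/-- If `e` is a common local unit of `b` and `c`, both sides equal `θ (b * b) * θ e * θ (c * c)`.
The general case follows by approximating `b` and `c` by `v * b * v` and `v * c * v`, with `v` as
in `exists_cut`. -/
theorem map_sq_mul
    {A B : Type*} [NonUnitalCStarAlgebra A] [NonUnitalCStarAlgebra B] (θ : A →L[ℂ] B)
    (hθ : ∀ a b : A, IsSelfAdjoint a → IsSelfAdjoint b → a * b = 0 → θ a * θ b = 0)
    {b c : A} (hb : IsSelfAdjoint b) (hc : IsSelfAdjoint c) :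
    θ (b * b) * (θ c * θ c) = θ b * θ b * θ (c * c) := by
  choose e v he hv hev hv1 hvb hvc using
    fun n : ℕ => exists_cut b c (1 / ((n : ℝ) + 1)) (by positivity)
  have hlim : ∀ b : A, IsSelfAdjoint b → (∀ n, ‖b - v n * b‖ ≤ 1 / ((n : ℝ) + 1)) →
      Filter.Tendsto (fun n => v n * b * v n) Filter.atTop (nhds b) := by
    intro b hb h
    have h0 := (tendsto_one_div_add_atTop_nhds_zero_nat (𝕜 := ℝ)).add
      (tendsto_one_div_add_atTop_nhds_zero_nat (𝕜 := ℝ))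
    rw [add_zero] at h0
    rw [tendsto_iff_norm_sub_tendsto_zero]
    refine squeeze_zero (fun _ => norm_nonneg _) (fun n => ?_) h0
    have h' : ‖b - b * v n‖ ≤ 1 / ((n : ℝ) + 1) := by
      have := h n
      rwa [← norm_star, star_sub, star_mul, hb.star_eq, (hv n).star_eq] at this
    rw [norm_sub_rev, show b - v n * b * v n = (b - v n * b) + v n * (b - b * v n) by
      noncomm_ring]
    calc _ ≤ _ := norm_add_le _ _
      _ ≤ ‖b - v n * b‖ + 1 * ‖b - b * v n‖ := by
        gcongr
        exact (norm_mul_le _ _).trans (by gcongr; exact hv1 n)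
      _ ≤ _ := by rw [one_mul]; exact add_le_add (h n) h'
  have hn : ∀ n, θ ((v n * b * v n) * (v n * b * v n)) * (θ (v n * c * v n) * θ (v n * c * v n))
      = θ (v n * b * v n) * θ (v n * b * v n) * θ ((v n * c * v n) * (v n * c * v n)) := by
    intro n
    have hsa : ∀ b : A, IsSelfAdjoint b → IsSelfAdjoint (v n * b * v n) := fun b hb => by
      rw [IsSelfAdjoint, star_mul, star_mul, hb.star_eq, (hv n).star_eq, mul_assoc]
    have hel : ∀ b : A, e n * (v n * b * v n) = v n * b * v n := fun b => by
      rw [← mul_assoc, ← mul_assoc, hev n]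
    have h1 := (map_local_unit θ hθ (he n) (hsa b hb) (hel b)).2
    have h2 := (map_local_unit θ hθ (he n) (hsa c hc) (hel c)).1
    rw [← h1, ← h2]
    exact (mul_assoc _ _ _).symm
  have lb := hlim b hb hvb
  have lc := hlim c hc hvc
  have tb := (θ.continuous.tendsto _).comp lb
  have tc := (θ.continuous.tendsto _).comp lc
  have tbb := (θ.continuous.tendsto _).comp (lb.mul lb)
  have tcc := (θ.continuous.tendsto _).comp (lc.mul lc)
  exact tendsto_nhds_unique ((tbb.mul (tc.mul tc)).congr hn) ((tb.mul tb).mul tcc)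

/-- Polarization of `map_sq_mul` in both variables; the self-adjointness assumptions disappear. -/
theorem map_jordan_mul_sq
    {A B : Type*} [NonUnitalCStarAlgebra A] [NonUnitalCStarAlgebra B] (θ : A →L[ℂ] B)
    (hθ : ∀ a b : A, IsSelfAdjoint a → IsSelfAdjoint b → a * b = 0 → θ a * θ b = 0)
    (b b' c : A) :
    θ (b * b' + b' * b) * (θ c * θ c) = (θ b * θ b' + θ b' * θ b) * θ (c * c) := by
  let L : A →ₗ[ℂ] B := θ
  have step1 : ∀ c, IsSelfAdjoint c → ∀ b b',
      θ (b * b' + b' * b) * (θ c * θ c) = (θ b * θ b' + θ b' * θ b) * θ (c * c) := by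
    intro c hc b b'
    let q : A →ₗ[ℂ] A →ₗ[ℂ] B :=
      ((LinearMap.mul ℂ A).compr₂ L).compr₂ ((LinearMap.mul ℂ B).flip (θ c * θ c))
        - ((LinearMap.mul ℂ B).compl₁₂ L L).compr₂ ((LinearMap.mul ℂ B).flip (θ (c * c)))
    have hq : ∀ a b, q a b = θ (a * b) * (θ c * θ c) - θ a * θ b * θ (c * c) := fun _ _ => rfl
    have := antisymm_of_selfAdjoint q
      (fun a ha => by rw [hq, sub_eq_zero]; exact map_sq_mul θ hθ ha hc) b b'
    rw [hq, hq] at this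
    rw [← sub_eq_zero, ← this, map_add]
    noncomm_ring
  let q : A →ₗ[ℂ] A →ₗ[ℂ] B :=
    ((LinearMap.mul ℂ B).compl₁₂ L L).compr₂ (LinearMap.mul ℂ B (θ (b * b' + b' * b)))
      - ((LinearMap.mul ℂ A).compr₂ L).compr₂ (LinearMap.mul ℂ B (θ b * θ b' + θ b' * θ b))
  have hq : ∀ a c, q a c = θ (b * b' + b' * b) * (θ a * θ c)
      - (θ b * θ b' + θ b' * θ b) * θ (a * c) := fun _ _ => rfl
  have := antisymm_of_selfAdjoint q
    (fun a ha => by rw [hq, sub_eq_zero]; exact step1 a ha b b') c c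
  rw [hq, ← two_smul ℂ, smul_eq_zero_iff_right two_ne_zero, sub_eq_zero] at this
  exact this

/-- Taking `u = star y * y` gives `(star y * y) ^ 3 = 0`, so `star y * y = 0`. -/
theorem eq_zero_of_mul_sq {B : Type*} [NonUnitalCStarAlgebra B] (y : B)
    (h : ∀ u, y * (u * u) = 0) : y = 0 := by
  have hs : IsSelfAdjoint (star y * y) := IsSelfAdjoint.star_mul_self y
  have h1 := h (star y * y)
  have h2 : (star y * y) * ((star y * y) * (star y * y)) = 0 := by
    rw [mul_assoc (star y) y, h1, mul_zero]
  have h3 : ∀ s : B, IsSelfAdjoint s → s * s = 0 → s = 0 := fun s hs h => by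
    rw [← CStarRing.star_mul_self_eq_zero_iff, hs.star_eq, h]
  rw [← CStarRing.star_mul_self_eq_zero_iff]
  -- `(star y * y) ^ 2` is self-adjoint and squares to zero, because `(star y * y) ^ 3 = 0`.
  apply h3 _ hs
  apply h3
  · rw [IsSelfAdjoint, star_mul, hs.star_eq]
  · rw [mul_assoc, h2, mul_zero]

/-! ### The kernel -/

/-- Let `A`, `B` be (not necessarily unital) C*-algebras and `θ : A → B`
a surjective bounded linear map sending zero products of self-adjoint elements to zero
products.  Then the kernel of `θ` is a closed two-sided ideal of `A`. -/
theorem zpp_selfAdjoint_ker_isTwoSidedIdeal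
    {A B : Type*} [NonUnitalCStarAlgebra A] [NonUnitalCStarAlgebra B]
    (θ : A →L[ℂ] B) (hsurj : Function.Surjective θ)
    (hθ : ∀ a b : A, IsSelfAdjoint a → IsSelfAdjoint b → a * b = 0 → θ a * θ b = 0) :
    IsClosed {x : A | θ x = 0} ∧
      ∀ a x : A, θ x = 0 → θ (a * x) = 0 ∧ θ (x * a) = 0 := by
  have hcl : IsClosed {x : A | θ x = 0} := isClosed_eq θ.continuous continuous_const
  refine ⟨hcl, fun a x hx => ?_⟩
  refine jordan_ideal_isIdeal (LinearMap.ker (θ : A →ₗ[ℂ] B)) hcl (fun x hx b => ?_) x hx a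
  replace hx : θ x = 0 := hx
  refine eq_zero_of_mul_sq (θ (x * b + b * x)) fun u => ?_
  obtain ⟨c, rfl⟩ := hsurj u
  rw [map_jordan_mul_sq θ hθ, hx]
  simp
end

section
/- Two C*-algebras A and B are isomorphic as Jordan algebras if and only if there is a bounded bijective (complex-)linear map θ : A → B such that θ(a)θ(b) = 0 whenever a, b are self-adjoint elements of A with ab = 0. Here 'isomorphic as Jordan algebras' means there exists a bounded bijective linear map J : A → B with J(a²) = J(a)² for all a in A. -/
/-!
Forward direction: a Jordan isomorphism `J` itself preserves zero products of self-adjoint elements.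
If `cb = bc = 0`, then `J c` and `J b` anticommute, and so do `J c ^ 2` and `J b`; together these
force `J(c²) J(b) = 0`. For self-adjoint `a` with `ab = 0`, apply this to the square roots of the
positive and negative parts of `a` (`zpp_of_jordan`).

Converse: the idea is that `θ = h J` where `h`, a substitute for `θ(1)`, is an invertible
central multiplier of `B`; it appears below as the operator `S` of multiplication by `h`.

* On a commutative algebra of functions, a bounded bilinear map `φ` which vanishes on pairs with zero
  product satisfies `φ(1, wv) = φ(w, v)` (`balanced`). To see this, take a partition of unity `ρᵢ`
  subordinate to the level sets of `w` at scale `1/n`, and replace `w` by a constant near the support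
  of each `ρᵢ`. The errors do not accumulate with the number of pieces: `∑ φ(αᵢ, βᵢ)` is the average
  over signs of `φ(∑ εᵢαᵢ, ∑ εᵢβᵢ)` (`norm_add_sum_le_of_signs`), and at each point only boundedly
  many of the functions involved are nonzero.
* Applied to functional calculus, this gives `θ(f)θ(x²) = θ(x)² = θ(x²)θ(f)` whenever `f, x` are
  self-adjoint and `fx = x` (`local_identity`).
* Truncating an approximate unit of `A` yields contractions `F` and elements `G` with `FG = G` and
  `G` still an approximate unit (`exists_local_units`). Since `GxG → x`, the local identity shows that
  `θ(F)y` and `yθ(F)` converge in norm to a common limit `S y` for every `y = θ(x²)`, hence for every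
  `y` in `B`. The limit `S` is a bounded two-sided multiplier with `S(θ(x²)) = θ(x)²`
  (`exists_multiplier`).
* `S` is surjective because squares span `B`, and injective by the multiplier property. Then
  `J = S⁻¹θ` is a Jordan isomorphism, because `S²(J(x)²) = θ(x)² = S²(J(x²))`.
-/

open Filter Topology
open scoped BoundedContinuousFunction

/-! ### Bilinear maps vanishing on pairs of functions with zero product -/

/-- A diagonal sum `∑ φ(αᵢ, βᵢ)` is the average of `φ(∑ εᵢαᵢ, ∑ εᵢβᵢ)` over all signs `εᵢ = ±1`, so a
bound uniform in the coefficients `|εᵢ| ≤ 1` bounds the sum. The offsets `u, v` carry the induction. -/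
lemma norm_add_sum_le_of_signs {ι V E : Type*} [AddCommGroup V] [Module ℝ V]
    [NormedAddCommGroup E] [NormedSpace ℝ E] (φ : V →ₗ[ℝ] V →ₗ[ℝ] E) (K : ℝ) (α β : ι → V)
    (s : Finset ι) : ∀ u v : V,
    (∀ ε : ι → ℝ, (∀ i, |ε i| ≤ 1) →
      ‖φ (u + ∑ i ∈ s, ε i • α i) (v + ∑ i ∈ s, ε i • β i)‖ ≤ K) →
    ‖φ u v + ∑ i ∈ s, φ (α i) (β i)‖ ≤ K := by
  classical
  induction s using Finset.induction_on with
  | empty => intro u v h; simpa using h 0 (by simp)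
  | insert j s hj ih =>
    intro u v h
    have key : ∀ η : ℝ, |η| ≤ 1 →
        ‖φ (u + η • α j) (v + η • β j) + ∑ i ∈ s, φ (α i) (β i)‖ ≤ K := by
      intro η hη
      refine ih _ _ fun ε hε => ?_
      have := h (Function.update ε j η) (fun i => by
        by_cases hi : i = j
        · subst hi; simpa using hη
        · simpa [hi] using hε i)
      rw [Finset.sum_insert hj, Finset.sum_insert hj] at this
      have e : ∀ γ : ι → V, ∑ i ∈ s, Function.update ε j η i • γ i = ∑ i ∈ s, ε i • γ i := by
        intro γ
        refine Finset.sum_congr rfl fun i hi => ?_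
        rw [Function.update_of_ne (ne_of_mem_of_not_mem hi hj)]
      rw [e, e, Function.update_self, ← add_assoc, ← add_assoc] at this
      exact this
    have h1 := key 1 (by simp)
    have h2 := key (-1) (by simp)
    rw [Finset.sum_insert hj]
    set S := ∑ i ∈ s, φ (α i) (β i)
    have : φ u v + (φ (α j) (β j) + S) = (1 / 2 : ℝ) •
        ((φ (u + (1 : ℝ) • α j) (v + (1 : ℝ) • β j) + S) +
          (φ (u + (-1 : ℝ) • α j) (v + (-1 : ℝ) • β j) + S)) := by
      simp only [map_add, map_smul, LinearMap.add_apply, LinearMap.smul_apply]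
      module
    rw [this, norm_smul]
    have := norm_add_le (φ (u + (1 : ℝ) • α j) (v + (1 : ℝ) • β j) + S)
      (φ (u + (-1 : ℝ) • α j) (v + (-1 : ℝ) • β j) + S)
    rw [Real.norm_of_nonneg (by norm_num)]
    linarith

/-- The retraction of `ℝ` onto `[0, 1]`. -/
noncomputable def clamp01 (t : ℝ) : ℝ := max 0 (min t 1)

lemma clamp01_continuous : Continuous clamp01 := by unfold clamp01; fun_prop
lemma clamp01_mono : Monotone clamp01 := fun a b h => by unfold clamp01; gcongr
lemma clamp01_nonneg (t : ℝ) : 0 ≤ clamp01 t := le_max_left _ _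
lemma clamp01_le_one (t : ℝ) : clamp01 t ≤ 1 := by unfold clamp01; simp
lemma clamp01_of_le {t : ℝ} (h : t ≤ 0) : clamp01 t = 0 := by
  unfold clamp01; simp [h]
lemma clamp01_of_ge {t : ℝ} (h : 1 ≤ t) : clamp01 t = 1 := by
  unfold clamp01; simp [h]

/-- Telescoping sum behind the partition of unity by translates of `hat`. -/
lemma sum_clamp01 (y : ℝ) (m : ℕ) :
    ∑ i ∈ Finset.range m, (clamp01 (y - i + 1) - clamp01 (y - i)) =
      clamp01 (y + 1) - clamp01 (y - m + 1) := by
  induction m with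
  | zero => simp
  | succ m ih =>
    rw [Finset.sum_range_succ, ih]
    have : y - ((m + 1 : ℕ) : ℝ) + 1 = y - m := by push_cast; ring
    rw [this]; ring

lemma sum_clamp01_le (y : ℝ) (m : ℕ) :
    ∑ i ∈ Finset.range m, (clamp01 (y - i + 1) - clamp01 (y - i)) ≤ 1 := by
  rw [sum_clamp01]
  linarith [clamp01_nonneg (y - m + 1), clamp01_le_one (y + 1)]

/-- The tent function `max 0 (1 - |s|)`, written as a difference so that sums of translates telescope. -/
noncomputable def hat (s : ℝ) : ℝ := clamp01 (s + 1) - clamp01 s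
/-- A trapezoidal cutoff supported in `[-2, 2]` and equal to `1` on the support `[-1, 1]` of `hat`. -/
noncomputable def wideHat (s : ℝ) : ℝ := clamp01 (s + 2) - clamp01 (s - 1)

lemma hat_nonneg (s : ℝ) : 0 ≤ hat s := sub_nonneg.2 (clamp01_mono (by linarith))
lemma wideHat_nonneg (s : ℝ) : 0 ≤ wideHat s := sub_nonneg.2 (clamp01_mono (by linarith))
lemma hat_le_one (s : ℝ) : hat s ≤ 1 := by
  unfold hat; linarith [clamp01_nonneg s, clamp01_le_one (s + 1)]
lemma wideHat_le_one (s : ℝ) : wideHat s ≤ 1 := by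
  unfold wideHat; linarith [clamp01_nonneg (s - 1), clamp01_le_one (s + 2)]
lemma hat_eq_zero {s : ℝ} (h : 1 ≤ |s|) : hat s = 0 := by
  unfold hat
  rcases le_abs.1 h with h | h
  · rw [clamp01_of_ge h, clamp01_of_ge (by linarith), sub_self]
  · rw [clamp01_of_le (by linarith), clamp01_of_le (by linarith), sub_self]
lemma wideHat_eq_zero {s : ℝ} (h : 2 ≤ |s|) : wideHat s = 0 := by
  unfold wideHat
  rcases le_abs.1 h with h | h
  · rw [clamp01_of_ge (by linarith), clamp01_of_ge (by linarith), sub_self]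
  · rw [clamp01_of_le (by linarith), clamp01_of_le (by linarith), sub_self]
lemma hat_mul_one_sub_wideHat (s : ℝ) : hat s * (1 - wideHat s) = 0 := by
  rcases le_total 1 |s| with h | h
  · rw [hat_eq_zero h, zero_mul]
  · have := abs_le.1 h
    unfold wideHat
    rw [clamp01_of_ge (by linarith), clamp01_of_le (by linarith)]; simp
lemma abs_mul_hat_le (s : ℝ) : |s| * hat s ≤ hat s := by
  rcases le_total 1 |s| with h | h
  · rw [hat_eq_zero h]; simp
  · nlinarith [hat_nonneg s]
lemma abs_mul_wideHat_le (s : ℝ) : |s| * wideHat s ≤ 2 * wideHat s := by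
  rcases le_total 2 |s| with h | h
  · rw [wideHat_eq_zero h]; simp
  · nlinarith [wideHat_nonneg s]
lemma hat_continuous : Continuous hat := by
  unfold hat; have := clamp01_continuous; fun_prop
lemma wideHat_continuous : Continuous wideHat := by
  unfold wideHat; have := clamp01_continuous; fun_prop
lemma sum_hat_le (y : ℝ) (m : ℕ) : ∑ i ∈ Finset.range m, hat (y - i) ≤ 1 := sum_clamp01_le y m
lemma sum_hat {y : ℝ} {m : ℕ} (h0 : 0 ≤ y) (hm : y + 1 ≤ m) :
    ∑ i ∈ Finset.range m, hat (y - i) = 1 := by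
  have := sum_clamp01 y m
  rw [clamp01_of_ge (by linarith), clamp01_of_le (t := y - m + 1) (by linarith)] at this
  rw [sub_zero] at this
  exact this
lemma wideHat_eq (s : ℝ) : wideHat s = hat (s + 1) + hat s + hat (s - 1) := by
  unfold wideHat hat; ring_nf
lemma sum_wideHat_le (y : ℝ) (m : ℕ) : ∑ i ∈ Finset.range m, wideHat (y - i) ≤ 3 := by
  simp only [wideHat_eq, Finset.sum_add_distrib]
  have h1 := sum_hat_le (y + 1) m
  have h2 := sum_hat_le y m
  have h3 := sum_hat_le (y - 1) m
  have e1 : ∀ i : ℕ, y - i + 1 = y + 1 - i := fun i => by ring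
  have e2 : ∀ i : ℕ, y - i - 1 = y - 1 - i := fun i => by ring
  simp only [e1, e2]; linarith

section
variable {X E : Type*} [TopologicalSpace X] [NormedAddCommGroup E] [NormedSpace ℝ E]

/-- The partition of unity argument: `φ(1, wv) - φ(w, v)` is `O(1/n)` for every `n`. -/
lemma balanced_nonneg (φ : (X →ᵇ ℝ) →ₗ[ℝ] (X →ᵇ ℝ) →ₗ[ℝ] E) (C : ℝ) (hC : 0 ≤ C)
    (hφ : ∀ u v, ‖φ u v‖ ≤ C * ‖u‖ * ‖v‖) (h0 : ∀ u v, u * v = 0 → φ u v = 0)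
    (w v : X →ᵇ ℝ) (hw : ∀ x, 0 ≤ w x) : φ 1 (w * v) = φ w v := by
  have main : ∀ n : ℕ, 0 < n → ‖φ 1 (w * v) - φ w v‖ ≤ (7 * C * ‖v‖) * (1 / n) := by
    intro n hn
    have hn' : (0 : ℝ) < n := by exact_mod_cast hn
    obtain ⟨m, hm⟩ := exists_nat_ge (n * ‖w‖ + 1)
    have hwle : ∀ x, w x ≤ ‖w‖ := fun x => (le_abs_self _).trans (w.norm_coe_le_norm x)
    let s : ℕ → X → ℝ := fun i x => n * w x - i
    have hs : ∀ i, Continuous (s i) := fun i => by fun_prop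
    let ρ : ℕ → X →ᵇ ℝ := fun i => .ofNormedAddCommGroup (fun x => hat (s i x))
      (hat_continuous.comp (hs i)) 1 (fun x => by
        rw [Real.norm_eq_abs, abs_of_nonneg (hat_nonneg _)]; exact hat_le_one _)
    let χ : ℕ → X →ᵇ ℝ := fun i => .ofNormedAddCommGroup (fun x => wideHat (s i x))
      (wideHat_continuous.comp (hs i)) 1 (fun x => by
        rw [Real.norm_eq_abs, abs_of_nonneg (wideHat_nonneg _)]; exact wideHat_le_one _)
    have hρ : ∀ i x, ρ i x = hat (n * w x - i) := fun i x => rfl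
    have hχ : ∀ i x, χ i x = wideHat (n * w x - i) := fun i x => rfl
    let d : ℕ → X →ᵇ ℝ := fun i => w - ((i : ℝ) / n) • (1 : X →ᵇ ℝ)
    have hd : ∀ i x, d i x = (n * w x - i) / n := fun i x => by
      simp [d]; field_simp
    have hsum : ∀ x, ∑ i ∈ Finset.range m, ρ i x = 1 := fun x =>
      sum_hat (mul_nonneg hn'.le (hw x)) (by
        have := mul_le_mul_of_nonneg_left (hwle x) hn'.le
        linarith)
    have hone : ∑ i ∈ Finset.range m, ρ i = 1 := by
      ext x; simpa using hsum x
    -- Near the support of `ρ i` replace `w` by the constant `i / n`; `d i` is the error made. The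
    -- cutoff `χ i` may be inserted because `ρ i * (1 - χ i) = 0`.
    have e1 : φ 1 (w * v) - φ w v =
        ∑ i ∈ Finset.range m, φ (ρ i) (χ i * d i * v) - φ (∑ i ∈ Finset.range m, d i * ρ i) v := by
      have a1 : φ 1 (w * v) = ∑ i ∈ Finset.range m, φ (ρ i) (w * v) := by
        rw [← hone, map_sum, LinearMap.sum_apply]
      have a2 : φ w v = ∑ i ∈ Finset.range m, φ (w * ρ i) v := by
        rw [← LinearMap.sum_apply, ← map_sum, ← Finset.mul_sum, hone, mul_one]
      rw [a1, a2, map_sum, LinearMap.sum_apply, ← Finset.sum_sub_distrib,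
        ← Finset.sum_sub_distrib]
      refine Finset.sum_congr rfl fun i _ => ?_
      have z : φ (ρ i) ((1 - χ i) * (d i * v)) = 0 := h0 _ _ (by
        ext x
        have := hat_mul_one_sub_wideHat (n * w x - i)
        simp only [BoundedContinuousFunction.coe_mul, BoundedContinuousFunction.coe_sub,
          Pi.mul_apply, Pi.sub_apply, BoundedContinuousFunction.coe_one, Pi.one_apply,
          BoundedContinuousFunction.coe_zero, Pi.zero_apply, hρ, hχ]
        rw [← mul_assoc, this, zero_mul])
      have b1 : χ i * d i * v = d i * v - (1 - χ i) * (d i * v) := by ring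
      have b2 : d i * v = w * v - ((i : ℝ) / n) • v := by
        simp only [d]; rw [sub_mul, smul_mul_assoc, one_mul]
      have b3 : d i * ρ i = w * ρ i - ((i : ℝ) / n) • ρ i := by
        simp only [d]; rw [sub_mul, smul_mul_assoc, one_mul]
      rw [b1, map_sub, z, sub_zero, b2, b3]
      simp only [map_sub, map_smul, LinearMap.sub_apply, LinearMap.smul_apply]
      abel
    have e2 : ‖∑ i ∈ Finset.range m, d i * ρ i‖ ≤ 1 / n := by
      refine (BoundedContinuousFunction.norm_le (by positivity)).2 fun x => ?_
      rw [BoundedContinuousFunction.coe_sum, Finset.sum_apply]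
      refine (norm_sum_le _ _).trans ?_
      calc _ ≤ ∑ i ∈ Finset.range m, (1 / n) * ρ i x := by
            refine Finset.sum_le_sum fun i _ => ?_
            rw [BoundedContinuousFunction.mul_apply, hd, hρ, norm_mul, Real.norm_eq_abs,
              Real.norm_eq_abs, abs_of_nonneg (hat_nonneg _), abs_div, abs_of_pos hn']
            have := abs_mul_hat_le (n * w x - i)
            have := mul_le_mul_of_nonneg_left this (one_div_nonneg.2 hn'.le)
            calc _ = 1 / n * (|n * w x - i| * hat (n * w x - i)) := by ring
              _ ≤ _ := this
        _ = 1 / n := by rw [← Finset.mul_sum, hsum, mul_one]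
    -- At each point `∑ χ i ≤ 3` and `|d i| ≤ 2 / n` on the support of `χ i`, whence the factor `6 / n`.
    have e3 : ‖φ 0 0 + ∑ i ∈ Finset.range m, φ (ρ i) (χ i * d i * v)‖ ≤
        C * 1 * (6 / n * ‖v‖) := by
      refine norm_add_sum_le_of_signs φ _ _ _ _ 0 0 fun ε hε => ?_
      rw [zero_add, zero_add]
      refine (hφ _ _).trans ?_
      gcongr
      · refine (BoundedContinuousFunction.norm_le (by positivity)).2 fun x => ?_
        rw [BoundedContinuousFunction.coe_sum, Finset.sum_apply]
        refine (norm_sum_le _ _).trans ?_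
        rw [← hsum x]
        refine Finset.sum_le_sum fun i _ => ?_
        rw [BoundedContinuousFunction.smul_apply, norm_smul, Real.norm_eq_abs, hρ,
          Real.norm_eq_abs, abs_of_nonneg (hat_nonneg _)]
        exact mul_le_of_le_one_left (hat_nonneg _) (hε i)
      · refine (BoundedContinuousFunction.norm_le (by positivity)).2 fun x => ?_
        rw [BoundedContinuousFunction.coe_sum, Finset.sum_apply]
        refine (norm_sum_le _ _).trans ?_
        calc _ ≤ ∑ i ∈ Finset.range m, (2 / n * ‖v‖) * χ i x := by
              refine Finset.sum_le_sum fun i _ => ?_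
              rw [BoundedContinuousFunction.smul_apply, norm_smul,
                BoundedContinuousFunction.mul_apply, BoundedContinuousFunction.mul_apply,
                norm_mul, norm_mul, hd, hχ]
              simp only [Real.norm_eq_abs]
              rw [abs_of_nonneg (wideHat_nonneg _), abs_div, abs_of_pos hn']
              have h1 := abs_mul_wideHat_le (n * w x - i)
              have h2 : |v x| ≤ ‖v‖ := v.norm_coe_le_norm x
              have h3 := wideHat_nonneg (n * w x - i)
              calc _ ≤ 1 * (wideHat (n * w x - i) * (|n * w x - i| / n) * |v x|) := by
                    gcongr; exact hε i
                _ = 1 / n * (|n * w x - i| * wideHat (n * w x - i)) * |v x| := by ring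
                _ ≤ 1 / n * (2 * wideHat (n * w x - i)) * ‖v‖ := by gcongr
                _ = _ := by ring
          _ ≤ 2 / n * ‖v‖ * 3 := by
              rw [← Finset.mul_sum]
              gcongr
              exact sum_wideHat_le (n * w x) m
          _ = _ := by ring
    rw [e1]
    have e4 := hφ (∑ i ∈ Finset.range m, d i * ρ i) v
    have e5 : C * ‖∑ i ∈ Finset.range m, d i * ρ i‖ * ‖v‖ ≤ C * (1 / n) * ‖v‖ := by gcongr
    rw [map_zero, zero_add] at e3
    refine (norm_sub_le _ _).trans ?_
    calc _ ≤ C * 1 * (6 / n * ‖v‖) + C * (1 / n) * ‖v‖ := add_le_add e3 (e4.trans e5)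
      _ = _ := by ring
  have lim : Tendsto (fun n : ℕ => (7 * C * ‖v‖) * (1 / (n : ℝ))) atTop (𝓝 0) := by
    simpa using tendsto_one_div_atTop_nhds_zero_nat.const_mul (7 * C * ‖v‖)
  have := ge_of_tendsto lim (eventually_atTop.2 ⟨1, fun n hn => main n hn⟩)
  exact sub_eq_zero.1 (norm_le_zero_iff.1 this)

/-- A bounded bilinear map on bounded continuous functions that vanishes on pairs with zero product
satisfies `φ(1, wv) = φ(w, v)`. Adding a constant to `w` does not change the claim, so `w` may be
taken nonnegative. -/
lemma balanced (φ : (X →ᵇ ℝ) →ₗ[ℝ] (X →ᵇ ℝ) →ₗ[ℝ] E) (C : ℝ) (hC : 0 ≤ C)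
    (hφ : ∀ u v, ‖φ u v‖ ≤ C * ‖u‖ * ‖v‖) (h0 : ∀ u v, u * v = 0 → φ u v = 0)
    (w v : X →ᵇ ℝ) : φ 1 (w * v) = φ w v := by
  have := balanced_nonneg φ C hC hφ h0 (w + ‖w‖ • 1) v (fun x => by
    have := neg_le_of_abs_le (w.norm_coe_le_norm x)
    simp; linarith)
  rw [add_mul, smul_mul_assoc, one_mul] at this
  simpa only [map_add, map_smul, LinearMap.add_apply, LinearMap.smul_apply,
    add_left_inj] using this
end

/-! ### Functional calculus with a local unit -/

section
variable {A : Type*} [NonUnitalCStarAlgebra A]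

/-- The elements `a` with `fa = af = r a` form a closed star subalgebra, hence it is stable under the
functional calculus. Used with `r = 1` (local units) and `r = 0` (orthogonality). -/
lemma mul_cfcn_of_mul_eq_smul {f x : A} (hf : IsSelfAdjoint f) (hx : IsSelfAdjoint x) (r : ℝ)
    (h : f * x = r • x) (k : ℝ → ℝ) :
    f * cfcₙ k x = r • cfcₙ k x ∧ cfcₙ k x * f = r • cfcₙ k x := by
  let S : NonUnitalStarSubalgebra ℝ A :=
    { carrier := {a | f * a = r • a ∧ a * f = r • a}
      add_mem' := fun {a b} ha hb => by
        simp only [Set.mem_ofPred_eq] at ha hb ⊢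
        rw [mul_add, add_mul, ha.1, ha.2, hb.1, hb.2, smul_add]; simp
      zero_mem' := by simp
      mul_mem' := fun {a b} ha hb => by
        simp only [Set.mem_ofPred_eq] at ha hb ⊢
        rw [← mul_assoc, ha.1, mul_assoc, hb.2, smul_mul_assoc, mul_smul_comm]; simp
      smul_mem' := fun c a ha => by
        simp only [Set.mem_ofPred_eq] at ha ⊢
        rw [mul_smul_comm, smul_mul_assoc, ha.1, ha.2, smul_comm]; simp
      star_mem' := fun {a} ha => by
        simp only [Set.mem_ofPred_eq] at ha ⊢
        constructor
        · rw [← hf.star_eq, ← star_mul, ha.2, star_smul]; simp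
        · rw [← hf.star_eq, ← star_mul, ha.1, star_smul]; simp }
  have hS : IsClosed (S : Set A) := by
    change IsClosed {a | f * a = r • a ∧ a * f = r • a}
    exact (isClosed_eq (by fun_prop) (by fun_prop)).inter
      (isClosed_eq (by fun_prop) (by fun_prop))
  have hxS : x ∈ S := by
    refine ⟨h, ?_⟩
    have := congrArg star h
    rwa [star_mul, hf.star_eq, hx.star_eq, star_smul, hx.star_eq, star_trivial] at this
  exact cfcₙ_mem (hs := hS) k hxS

/-- The map `k ↦ k(x)` on functions that need not vanish at `0`, where the constant function `1` is sent
to `f`. When `fx = x` it preserves zero products, although it is not multiplicative unless `f² = f`. -/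
noncomputable def localCalculus (f x : A) : (ℝ →ᵇ ℝ) →ₗ[ℝ] A where
  toFun k := k 0 • f + cfcₙ (fun t => k t - k 0) x
  map_add' k l := by
    have : (fun t => (k + l) t - (k + l) 0) = fun t => (k t - k 0) + (l t - l 0) := by
      ext t; simp; ring
    rw [this, cfcₙ_add (f := fun t => k t - k 0) (g := fun t => l t - l 0)
      (hf := by fun_prop) (hf0 := by simp) (hg := by fun_prop) (hg0 := by simp),
      BoundedContinuousFunction.add_apply, add_smul]
    abel
  map_smul' c k := by
    have : (fun t => (c • k) t - (c • k) 0) = fun t => c • (k t - k 0) := by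
      ext t; simp; ring
    rw [this, cfcₙ_smul c (fun t => k t - k 0) x (by fun_prop) (by simp),
      BoundedContinuousFunction.smul_apply, RingHom.id_apply, smul_add, smul_assoc]

lemma localCalculus_apply (f x : A) (k : ℝ →ᵇ ℝ) :
    localCalculus f x k = k 0 • f + cfcₙ (fun t => k t - k 0) x := rfl

lemma isSelfAdjoint_localCalculus {f x : A} (hf : IsSelfAdjoint f) (k : ℝ →ᵇ ℝ) :
    IsSelfAdjoint (localCalculus f x k) := by
  rw [localCalculus_apply]
  exact ((IsSelfAdjoint.all _).smul hf).add (cfcₙ_predicate _ _)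

lemma norm_localCalculus_le (f x : A) (k : ℝ →ᵇ ℝ) :
    ‖localCalculus f x k‖ ≤ (‖f‖ + 2) * ‖k‖ := by
  rw [localCalculus_apply]
  have h0 := k.norm_coe_le_norm 0
  have h1 : ‖cfcₙ (fun t => k t - k 0) x‖ ≤ 2 * ‖k‖ := norm_cfcₙ_le fun t _ => by
    have := norm_sub_le (k t) (k 0)
    have := k.norm_coe_le_norm t
    linarith
  have h2 : ‖k 0 • f‖ ≤ ‖k‖ * ‖f‖ := by rw [norm_smul]; gcongr
  have := norm_add_le (k 0 • f) (cfcₙ (fun t => k t - k 0) x)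
  linarith

lemma localCalculus_mul_eq_zero {f x : A} (hf : IsSelfAdjoint f) (hx : IsSelfAdjoint x)
    (h : f * x = x) {k l : ℝ →ᵇ ℝ} (hkl : k * l = 0) :
    localCalculus f x k * localCalculus f x l = 0 := by
  have hcfc := mul_cfcn_of_mul_eq_smul hf hx 1 (by simpa using h)
  simp only [one_smul] at hcfc
  have hpt : ∀ t, k t * l t = 0 := fun t => by
    rw [← BoundedContinuousFunction.mul_apply, hkl]; rfl
  have hm : cfcₙ (fun t => k t - k 0) x * cfcₙ (fun t => l t - l 0) x +
      (k 0 • cfcₙ (fun t => l t - l 0) x + l 0 • cfcₙ (fun t => k t - k 0) x) = 0 := by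
    rw [← cfcₙ_mul (fun t => k t - k 0) (fun t => l t - l 0) x (by fun_prop) (by simp)
      (by fun_prop) (by simp),
      ← cfcₙ_smul (k 0) (fun t => l t - l 0) x (by fun_prop) (by simp),
      ← cfcₙ_smul (l 0) (fun t => k t - k 0) x (by fun_prop) (by simp),
      ← cfcₙ_add (fun t => k 0 • (l t - l 0)) (fun t => l 0 • (k t - k 0)) x
        (by fun_prop) (by simp) (by fun_prop) (by simp),
      ← cfcₙ_add (fun t => (k t - k 0) * (l t - l 0))
        (fun t => k 0 • (l t - l 0) + l 0 • (k t - k 0)) x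
        (by fun_prop) (by simp) (by fun_prop) (by simp)]
    have : (fun t => (k t - k 0) * (l t - l 0) + (k 0 • (l t - l 0) + l 0 • (k t - k 0))) =
        fun _ => (0 : ℝ) := by
      ext t
      simp only [smul_eq_mul]
      linear_combination hpt t - hpt 0
    rw [this, cfcₙ_const_zero]
  rw [localCalculus_apply, localCalculus_apply, add_mul, mul_add, mul_add, smul_mul_assoc,
    smul_mul_assoc, mul_smul_comm, mul_smul_comm, (hcfc _).1, (hcfc _).2, smul_smul, hpt 0,
    zero_smul, zero_add, ← hm]
  abel

variable {B : Type*} [NonUnitalCStarAlgebra B]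

/-- If `f` acts as a unit on the self-adjoint element `x`, then `θ(f)θ(x²) = θ(x)² = θ(x²)θ(f)`: this is
`balanced` for `φ(u, v) = θ(u(x))θ(v(x))` and for its flip. -/
lemma local_identity (θ : A →L[ℂ] B)
    (hθ : ∀ a b : A, IsSelfAdjoint a → IsSelfAdjoint b → a * b = 0 → θ a * θ b = 0)
    {f x : A} (hf : IsSelfAdjoint f) (hx : IsSelfAdjoint x) (h : f * x = x) :
    θ f * θ (x * x) = θ x * θ x ∧ θ (x * x) * θ f = θ x * θ x := by
  let Ψ := localCalculus f x
  let θΨ : (ℝ →ᵇ ℝ) →ₗ[ℝ] B := (θ : A →ₗ[ℂ] B).restrictScalars ℝ ∘ₗ Ψ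
  let φ : (ℝ →ᵇ ℝ) →ₗ[ℝ] (ℝ →ᵇ ℝ) →ₗ[ℝ] B := (LinearMap.mul ℝ B).compl₁₂ θΨ θΨ
  have hφ : ∀ u v, φ u v = θ (Ψ u) * θ (Ψ v) := fun u v => rfl
  have hb : ∀ u, ‖θ (Ψ u)‖ ≤ ‖θ‖ * (‖f‖ + 2) * ‖u‖ := fun u => by
    rw [mul_assoc]
    exact (θ.le_opNorm _).trans (by gcongr; exact norm_localCalculus_le f x u)
  let C := (‖θ‖ * (‖f‖ + 2)) * (‖θ‖ * (‖f‖ + 2))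
  have hC : 0 ≤ C := by positivity
  have hbound : ∀ u v, ‖φ u v‖ ≤ C * ‖u‖ * ‖v‖ := fun u v => by
    rw [hφ]
    calc _ ≤ ‖θ (Ψ u)‖ * ‖θ (Ψ v)‖ := norm_mul_le _ _
      _ ≤ (‖θ‖ * (‖f‖ + 2) * ‖u‖) * (‖θ‖ * (‖f‖ + 2) * ‖v‖) := by
        gcongr <;> exact hb _
      _ = _ := by ring
  have h0 : ∀ u v, u * v = 0 → φ u v = 0 := fun u v huv =>
    hθ _ _ (isSelfAdjoint_localCalculus hf u) (isSelfAdjoint_localCalculus hf v)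
      (localCalculus_mul_eq_zero hf hx h huv)
  -- A bounded function that is the identity on the spectrum of `x`
  let w : ℝ →ᵇ ℝ := .ofNormedAddCommGroup (fun t => max (-‖x‖) (min t ‖x‖)) (by fun_prop) ‖x‖
    (fun t => by
      rw [Real.norm_eq_abs, abs_le]
      have := norm_nonneg x
      exact ⟨le_max_left _ _, max_le (by linarith) (min_le_right _ _)⟩)
  have hw : ∀ t, w t = max (-‖x‖) (min t ‖x‖) := fun t => rfl
  have hw0 : w 0 = 0 := by rw [hw]; simp
  have hwt : ∀ t ∈ quasispectrum ℝ x, w t = t := fun t ht => by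
    have : |t| ≤ ‖x‖ := by
      have := NonUnitalIsometricContinuousFunctionalCalculus.norm_quasispectrum_le x ht hx
      simpa using this
    have := abs_le.1 this
    rw [hw, min_eq_left this.2, max_eq_right this.1]
  have Ψ1 : Ψ 1 = f := by
    change localCalculus f x 1 = f
    rw [localCalculus_apply]; simp
  have Ψw : Ψ w = x := by
    change localCalculus f x w = x
    rw [localCalculus_apply, hw0, zero_smul, zero_add,
      cfcₙ_congr (g := fun t => t) (fun t ht => by simp [hwt t ht]), cfcₙ_id' ℝ x]
  have Ψww : Ψ (w * w) = x * x := by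
    change localCalculus f x (w * w) = x * x
    have : cfcₙ (fun t : ℝ => t * t) x = x * x := by
      rw [cfcₙ_mul (fun t => t) (fun t => t) x, cfcₙ_id' ℝ x]
    rw [localCalculus_apply, BoundedContinuousFunction.mul_apply, hw0, zero_mul, zero_smul,
      zero_add, ← this]
    exact cfcₙ_congr (fun t ht => by simp [hwt t ht])
  have r1 := balanced φ C hC hbound h0 w w
  have r2 := balanced φ.flip C hC (fun u v => by
      rw [LinearMap.flip_apply, mul_right_comm]; exact hbound v u)
    (fun u v huv => by rw [LinearMap.flip_apply]; exact h0 v u (by rwa [mul_comm])) w w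
  rw [LinearMap.flip_apply, LinearMap.flip_apply] at r2
  simp only [hφ, Ψ1, Ψw, Ψww] at r1 r2
  exact ⟨r1, r2⟩

variable (A) in
/-- A C*-algebra has an approximate unit `G` together with contractions `F` satisfying `FG = G`. For an
approximate unit `e` and `δ → 0`, take `G` to be the soft thresholding of `e` at level `δ`, which is
within `δ` of `e`, and `F = min(|e|/δ, 1)`, which is `1` where `G` is nonzero. -/
lemma exists_local_units : ∃ (l : Filter (A × ℝ)) (F G : A × ℝ → A), l.NeBot ∧
    (∀ᶠ p in l, IsSelfAdjoint (F p) ∧ IsSelfAdjoint (G p) ∧ ‖F p‖ ≤ 1 ∧ ‖G p‖ ≤ 2 ∧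
      F p * G p = G p) ∧
    ∀ x, Tendsto (fun p => G p * x) l (𝓝 x) ∧ Tendsto (fun p => x * G p) l (𝓝 x) := by
  let _ := CStarAlgebra.spectralOrder A
  let _ := CStarAlgebra.spectralOrderedRing A
  have hl := CStarAlgebra.increasingApproximateUnit A
  let l := CStarAlgebra.approximateUnit A ×ˢ 𝓝[>] (0 : ℝ)
  let F : A × ℝ → A := fun p => cfcₙ (fun t => min (|t| / p.2) 1) p.1
  let G : A × ℝ → A := fun p => cfcₙ (fun t => t - max (-p.2) (min t p.2)) p.1
  have hsa : ∀ᶠ p : A × ℝ in l, IsSelfAdjoint p.1 ∧ 0 < p.2 :=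
    (hl.eventually_isSelfAdjoint.prod_mk (eventually_mem_nhdsWithin (a := (0 : ℝ)) (s := Set.Ioi 0)))
  have hfst : Tendsto (fun p : A × ℝ => G p - p.1) l (𝓝 0) := by
    have h2 : Tendsto (fun p : A × ℝ => p.2) l (𝓝 0) :=
      tendsto_nhds_of_tendsto_nhdsWithin tendsto_snd
    refine squeeze_zero_norm' ?_ h2
    filter_upwards [hsa] with p hp
    have : G p - p.1 = cfcₙ (fun t => t - max (-p.2) (min t p.2) - t) p.1 := by
      rw [cfcₙ_sub (fun t => t - max (-p.2) (min t p.2)) (fun t => t) p.1 (by fun_prop)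
        (by simp [hp.2.le]) (by fun_prop) (by simp), cfcₙ_id' ℝ p.1 hp.1]
    rw [this]
    refine norm_cfcₙ_le fun t _ => ?_
    rw [sub_right_comm, sub_self, zero_sub, norm_neg, Real.norm_eq_abs, abs_le]
    exact ⟨le_max_left _ _, max_le (by linarith [hp.2]) (min_le_right _ _)⟩
  refine ⟨l, F, G, inferInstance, ?_, fun x => ⟨?_, ?_⟩⟩
  · have hfst' : ∀ᶠ p : A × ℝ in l, ‖G p - p.1‖ ≤ 1 := by
      have := hfst.norm
      rw [norm_zero] at this
      exact this.eventually_le_const one_pos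
    have hnorm : ∀ᶠ p : A × ℝ in l, ‖p.1‖ ≤ 1 := tendsto_fst.eventually hl.eventually_norm
    filter_upwards [hsa, hfst', hnorm] with p hp hp1 hp2
    refine ⟨cfcₙ_predicate _ _, cfcₙ_predicate _ _, norm_cfcₙ_le fun t _ => ?_, ?_, ?_⟩
    · rw [Real.norm_eq_abs, abs_of_nonneg (le_min (div_nonneg (abs_nonneg t) hp.2.le) zero_le_one)]
      exact min_le_right _ _
    · have := norm_add_le (G p - p.1) p.1
      rw [sub_add_cancel] at this
      linarith
    · rw [← cfcₙ_mul _ _ p.1 (by fun_prop) (by simp) (by fun_prop) (by simp [hp.2.le])]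
      refine cfcₙ_congr fun t _ => ?_
      rcases le_total |t| p.2 with h | h
      · have := abs_le.1 h
        rw [min_eq_left this.2, max_eq_right this.1]; simp
      · rw [min_eq_right ((one_le_div hp.2).2 h), one_mul]
  · have h1 : Tendsto (fun p : A × ℝ => p.1 * x) l (𝓝 x) :=
      (hl.tendsto_mul_right x).comp tendsto_fst
    have := (hfst.mul_const x).add h1
    simpa [sub_mul] using this
  · have h1 : Tendsto (fun p : A × ℝ => x * p.1) l (𝓝 x) :=
      (hl.tendsto_mul_left x).comp tendsto_fst
    have := (hfst.const_mul x).add h1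
    simpa [mul_sub] using this

/-- Positive elements are squares of self-adjoint ones and span the algebra. -/
lemma span_sa_squares (p : Submodule ℂ A) (h : ∀ x : A, IsSelfAdjoint x → x * x ∈ p) : p = ⊤ := by
  let _ := CStarAlgebra.spectralOrder A
  let _ := CStarAlgebra.spectralOrderedRing A
  rw [eq_top_iff, ← CStarAlgebra.span_nonneg, Submodule.span_le]
  intro a ha
  have := h (CFC.sqrt a) (CFC.sqrt_nonneg a).isSelfAdjoint
  rwa [CFC.sqrt_mul_sqrt_self a ha] at this
end

/-! ### The multiplier and the Jordan isomorphism -/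

section
variable {A B : Type*} [NonUnitalCStarAlgebra A] [NonUnitalCStarAlgebra B]

/-- The multiplier `S` of `B` playing the role of multiplication by `θ(1)`, obtained as the limit of
`θ(F)y` and of `yθ(F)`. Having the same limit on both sides makes `S` central. -/
lemma exists_multiplier (θ : A →L[ℂ] B) (hs : Function.Surjective θ)
    (hθ : ∀ a b : A, IsSelfAdjoint a → IsSelfAdjoint b → a * b = 0 → θ a * θ b = 0) :
    ∃ S : B →L[ℂ] B, (∀ y z, S (y * z) = S y * z) ∧ (∀ y z, S (y * z) = y * S z) ∧
      ∀ x, IsSelfAdjoint x → S (θ (x * x)) = θ x * θ x := by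
  obtain ⟨l, F, G, hl, hFG, hG⟩ := exists_local_units A
  have hbdd : ∀ᶠ p in l, ‖θ (F p)‖ ≤ ‖θ‖ := by
    filter_upwards [hFG] with p hp
    exact θ.unit_le_opNorm _ hp.2.2.1
  have hsq : ∀ x : A, IsSelfAdjoint x →
      Tendsto (fun p => θ (F p) * θ (x * x)) l (𝓝 (θ x * θ x)) ∧
      Tendsto (fun p => θ (x * x) * θ (F p)) l (𝓝 (θ x * θ x)) := by
    intro x hx
    have hy : Tendsto (fun p => G p * x * G p) l (𝓝 x) := by
      have h1 := (hG x).1.sub_const x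
      rw [sub_self] at h1
      have h0 := h1.norm.mul_const 2
      rw [norm_zero, zero_mul] at h0
      have h2 : Tendsto (fun p => (G p * x - x) * G p) l (𝓝 0) := by
        refine squeeze_zero_norm' ?_ h0
        filter_upwards [hFG] with p hp
        exact (norm_mul_le _ _).trans (by gcongr; exact hp.2.2.2.1)
      simpa [sub_mul] using h2.add (hG x).2
    have hlim := ((θ.continuous.tendsto x).comp hy).mul ((θ.continuous.tendsto x).comp hy)
    have hdiff : Tendsto (fun p => θ (x * x) - θ (G p * x * G p * (G p * x * G p))) l (𝓝 0) := by
      have := (θ.continuous.tendsto (x * x)).comp (hy.mul hy)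
      simpa using this.const_sub (θ (x * x))
    have hloc : ∀ᶠ p in l,
        θ (F p) * θ (G p * x * G p * (G p * x * G p)) = θ (G p * x * G p) * θ (G p * x * G p) ∧
        θ (G p * x * G p * (G p * x * G p)) * θ (F p) =
          θ (G p * x * G p) * θ (G p * x * G p) := by
      filter_upwards [hFG] with p hp
      refine local_identity θ hθ hp.1 ?_ ?_
      · have := hx.conjugate (G p)
        rwa [hp.2.1.star_eq] at this
      · rw [← mul_assoc, ← mul_assoc, hp.2.2.2.2]
    constructor
    · have h0 := hdiff.norm.const_mul ‖θ‖
      rw [norm_zero, mul_zero] at h0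
      have h1 : Tendsto (fun p => θ (F p) * (θ (x * x) - θ (G p * x * G p * (G p * x * G p)))) l
          (𝓝 0) := by
        refine squeeze_zero_norm' ?_ h0
        filter_upwards [hbdd] with p hp
        exact (norm_mul_le _ _).trans (by gcongr)
      have h2 := h1.add hlim
      rw [zero_add] at h2
      refine h2.congr' ?_
      filter_upwards [hloc] with p hp
      simp only [Function.comp_apply]
      rw [← hp.1, mul_sub, sub_add_cancel]
    · have h0 := hdiff.norm.mul_const ‖θ‖
      rw [norm_zero, zero_mul] at h0
      have h1 : Tendsto (fun p => (θ (x * x) - θ (G p * x * G p * (G p * x * G p))) * θ (F p)) l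
          (𝓝 0) := by
        refine squeeze_zero_norm' ?_ h0
        filter_upwards [hbdd] with p hp
        exact (norm_mul_le _ _).trans (by gcongr)
      have h2 := h1.add hlim
      rw [zero_add] at h2
      refine h2.congr' ?_
      filter_upwards [hloc] with p hp
      simp only [Function.comp_apply]
      rw [← hp.2, sub_mul, sub_add_cancel]
  -- Convergence is a linear condition on `y = θ a`, and self-adjoint squares span `A`.
  have hex : ∀ y : B, ∃ L, Tendsto (fun p => θ (F p) * y) l (𝓝 L) ∧
      Tendsto (fun p => y * θ (F p)) l (𝓝 L) := by
    let P : Submodule ℂ A :=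
      { carrier := {a | ∃ L, Tendsto (fun p => θ (F p) * θ a) l (𝓝 L) ∧
          Tendsto (fun p => θ a * θ (F p)) l (𝓝 L)}
        add_mem' := by
          rintro a b ⟨L, h1, h2⟩ ⟨M, h3, h4⟩
          refine ⟨L + M, ?_, ?_⟩
          · simpa [mul_add] using h1.add h3
          · simpa [add_mul] using h2.add h4
        zero_mem' := ⟨0, by simp, by simp⟩
        smul_mem' := by
          rintro c a ⟨L, h1, h2⟩
          exact ⟨c • L, by simpa [mul_smul_comm] using h1.const_smul c,
            by simpa [smul_mul_assoc] using h2.const_smul c⟩ }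
    have hP : P = ⊤ := span_sa_squares P fun x hx => ⟨_, hsq x hx⟩
    intro y
    obtain ⟨a, rfl⟩ := hs y
    have : a ∈ P := hP ▸ Submodule.mem_top
    exact this
  choose S hS1 hS2 using hex
  let S' : B →ₗ[ℂ] B :=
    { toFun := S
      map_add' := fun y z => tendsto_nhds_unique (hS1 (y + z))
        (by simpa [mul_add] using (hS1 y).add (hS1 z))
      map_smul' := fun c y => tendsto_nhds_unique (hS1 (c • y))
        (by simpa [mul_smul_comm] using (hS1 y).const_smul c) }
  refine ⟨S'.mkContinuous ‖θ‖ fun y => ?_, fun y z => ?_, fun y z => ?_, fun x hx => ?_⟩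
  · refine le_of_tendsto (hS1 y).norm ?_
    filter_upwards [hFG] with p hp
    refine (norm_mul_le _ _).trans ?_
    gcongr
    exact θ.unit_le_opNorm _ hp.2.2.1
  · have := (hS1 y).mul_const z
    simp only [mul_assoc] at this
    exact tendsto_nhds_unique (hS1 (y * z)) this
  · have := (hS2 z).const_mul y
    simp only [← mul_assoc] at this
    exact tendsto_nhds_unique (hS2 (y * z)) this
  · exact tendsto_nhds_unique (hS1 _) (hsq x hx).1

/-- Polarization extends the square identity from self-adjoint to arbitrary elements. -/
lemma square_identity (θ : A →L[ℂ] B) (S : B →L[ℂ] B)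
    (h : ∀ x, IsSelfAdjoint x → S (θ (x * x)) = θ x * θ x) (z : A) :
    S (θ (z * z)) = θ z * θ z := by
  have pol : ∀ x y : A, IsSelfAdjoint x → IsSelfAdjoint y →
      S (θ (x * y)) + S (θ (y * x)) = θ x * θ y + θ y * θ x := by
    intro x y hx hy
    have h1 := h (x + y) (hx.add hy)
    simp only [add_mul, mul_add, map_add, h x hx, h y hy] at h1
    rw [← sub_eq_zero] at h1 ⊢
    rw [← h1]; abel
  have hx := (realPart z).2
  have hy := (imaginaryPart z).2
  have hz := realPart_add_I_smul_imaginaryPart z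
  set x : A := (realPart z : A)
  set y : A := (imaginaryPart z : A)
  rw [← hz]
  have e := pol x y hx hy
  have hxx := h x hx
  have hyy := h y hy
  simp only [add_mul, mul_add, map_add, smul_mul_assoc, mul_smul_comm, map_smul, hxx, hyy]
  have e' : S (θ (x * y)) = θ x * θ y + θ y * θ x - S (θ (y * x)) := eq_sub_of_add_eq e
  rw [e']
  module

/-- Surjectivity holds since the range contains every square. If `S y = 0` and `S w = y*`, then
`y y* = y S(w) = S(y) w = 0`, which gives injectivity. -/
lemma multiplier_bijective (θ : A →L[ℂ] B) (hs : Function.Surjective θ) (S : B →L[ℂ] B)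
    (hS1 : ∀ y z, S (y * z) = S y * z) (hS2 : ∀ y z, S (y * z) = y * S z)
    (h : ∀ z, S (θ (z * z)) = θ z * θ z) : Function.Bijective S := by
  have hsurj : Function.Surjective S := by
    have : LinearMap.range (S : B →ₗ[ℂ] B) = ⊤ := span_sa_squares _ fun x _ => by
      obtain ⟨z, rfl⟩ := hs x
      exact ⟨_, h z⟩
    exact LinearMap.range_eq_top.1 this
  refine ⟨(injective_iff_map_eq_zero S).2 fun y hy => ?_, hsurj⟩
  obtain ⟨w, hw⟩ := hsurj (star y)
  have : y * star y = 0 := by rw [← hw, ← hS2, hS1, hy, zero_mul]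
  exact CStarRing.mul_star_self_eq_zero_iff y |>.1 this

lemma jordan_of_zpp (θ : A →L[ℂ] B) (hbij : Function.Bijective θ)
    (hθ : ∀ a b : A, IsSelfAdjoint a → IsSelfAdjoint b → a * b = 0 → θ a * θ b = 0) :
    ∃ J : A →L[ℂ] B, Function.Bijective J ∧ ∀ a : A, J (a * a) = J a * J a := by
  obtain ⟨S, hS1, hS2, hsa⟩ := exists_multiplier θ hbij.2 hθ
  have hsq := square_identity θ S hsa
  have hS := multiplier_bijective θ hbij.2 S hS1 hS2 hsq
  let e : B ≃L[ℂ] B := ContinuousLinearEquiv.ofBijective S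
    (LinearMap.ker_eq_bot.2 hS.1) (LinearMap.range_eq_top.2 hS.2)
  have he : ∀ y, e y = S y := fun y => rfl
  refine ⟨(e.symm : B →L[ℂ] B).comp θ, e.symm.bijective.comp hbij, fun a => ?_⟩
  have hSJ : ∀ y, S (e.symm y) = y := fun y => by rw [← he, e.apply_symm_apply]
  -- Compare both sides after applying `S` twice.
  apply hS.1
  apply hS.1
  change S (S (e.symm (θ (a * a)))) = S (S (e.symm (θ a) * e.symm (θ a)))
  rw [hSJ, hsq, hS1, hS2, hSJ]

/-- A Jordan homomorphism preserves zero products of self-adjoint elements. If `cb = bc = 0`, write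
`x = J c`, `y = J b`. From `xy + yx = 0` one gets `x²y + xyx = 0 = xyx + yx²`, and from
`x²y + yx² = 0` it follows that `x²y = 0`. -/
lemma zpp_of_jordan (J : A →L[ℂ] B) (hJ : ∀ a : A, J (a * a) = J a * J a) (a b : A)
    (ha : IsSelfAdjoint a) (hb : IsSelfAdjoint b) (hab : a * b = 0) : J a * J b = 0 := by
  let _ := CStarAlgebra.spectralOrder A
  let _ := CStarAlgebra.spectralOrderedRing A
  have pol : ∀ x y : A, x * y = 0 → y * x = 0 → J x * J y + J y * J x = 0 := by
    intro x y hxy hyx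
    have := hJ (x + y)
    simp only [add_mul, mul_add, map_add, hJ, hxy, hyx, map_zero] at this
    rw [← sub_eq_zero] at this
    rw [← neg_eq_zero, ← this]; abel
  have sq : ∀ c : A, c * b = 0 → b * c = 0 → J (c * c) * J b = 0 := by
    intro c h1 h2
    have p1 := pol c b h1 h2
    have p2 := pol (c * c) b (by rw [mul_assoc, h1, mul_zero]) (by rw [← mul_assoc, h2, zero_mul])
    rw [hJ] at p2 ⊢
    set x := J c
    set y := J b
    have q1 : x * x * y + x * y * x = 0 := by
      have := congrArg (x * ·) p1
      simpa [mul_add, mul_assoc] using this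
    have q2 : x * y * x + y * (x * x) = 0 := by
      have := congrArg (· * x) p1
      simpa [add_mul, mul_assoc] using this
    have q3 : (2 : ℂ) • (x * x * y) = 0 := by
      have : (2 : ℂ) • (x * x * y) = (x * x * y + x * y * x) - (x * y * x + y * (x * x)) +
        (x * x * y + y * (x * x)) := by module
      rw [this, q1, q2, p2]; simp
    exact (smul_eq_zero.1 q3).resolve_left two_ne_zero
  have hba : b * a = (0 : ℝ) • a := by
    have := congrArg star hab
    rw [star_mul, ha.star_eq, hb.star_eq, star_zero] at this
    rw [this, zero_smul]
  have horth := mul_cfcn_of_mul_eq_smul hb ha 0 hba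
  simp only [zero_smul] at horth
  have pos : ∀ k : ℝ → ℝ, 0 ≤ cfcₙ k a → J (cfcₙ k a) * J b = 0 := by
    intro k hk
    have h1 := mul_cfcn_of_mul_eq_smul hb (x := cfcₙ k a) hk.isSelfAdjoint 0
      (by rw [zero_smul]; exact (horth k).1)
    simp only [zero_smul] at h1
    have hs : CFC.sqrt (cfcₙ k a) = cfcₙ Real.sqrt (cfcₙ k a) := CFC.sqrt_eq_real_sqrt _ hk
    have := sq (CFC.sqrt (cfcₙ k a)) (by rw [hs]; exact (h1 _).2) (by rw [hs]; exact (h1 _).1)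
    rwa [CFC.sqrt_mul_sqrt_self _ hk] at this
  have h1 := pos _ (CFC.posPart_nonneg a)
  have h2 := pos _ (CFC.negPart_nonneg a)
  rw [← CFC.posPart_def] at h1
  rw [← CFC.negPart_def] at h2
  rw [← CFC.posPart_sub_negPart a ha, map_sub, sub_mul, h1, h2, sub_zero]
end

/-- Two (not necessarily unital) C*-algebras `A` and `B` are isomorphic
as Jordan algebras (there is a bounded bijective linear map `J : A → B` with
`J(a²) = J(a)²` for all `a`) if and only if there is a bounded bijective linear map
`θ : A → B` sending zero products of self-adjoint elements of `A` to zero products. -/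
theorem jordan_isomorphic_iff_selfAdjoint_zpp_bijection
    {A B : Type*} [NonUnitalCStarAlgebra A] [NonUnitalCStarAlgebra B] :
    (∃ J : A →L[ℂ] B, Function.Bijective J ∧ ∀ a : A, J (a * a) = J a * J a) ↔
      (∃ θ : A →L[ℂ] B, Function.Bijective θ ∧
        ∀ a b : A, IsSelfAdjoint a → IsSelfAdjoint b → a * b = 0 → θ a * θ b = 0) := by
  constructor
  · rintro ⟨J, hbij, hJ⟩
    exact ⟨J, hbij, zpp_of_jordan J hJ⟩
  · rintro ⟨θ, hbij, hθ⟩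
    exact jordan_of_zpp θ hbij hθ
end

section
/- Let A and B be C*-algebras and θ : A → B a surjective bounded (complex-)linear map such that θ(a)θ(b) = 0 whenever a, b are self-adjoint elements of A with ab = 0. Then, regarding B as embedded in its multiplier algebra M(B), there exist an element h of M(B) which is central in M(B) and invertible in M(B), and a surjective bounded linear Jordan homomorphism J : A → B (i.e. J(a²) = J(a)² for all a in A), such that θ(a) = h·J(a) in M(B) for every a in A. -/
/-!
The element `h` plays the role of `θ**(1)`, and `J = h⁻¹ θ`. The argument never passes to the
bidual; it rests on three observations.

*Powers of one self-adjoint element.* For self-adjoint `a` and real functions `p`, `q` vanishing at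
`0`, `θ((xp)(a)) θ(q(a)) = θ(p(a)) θ((xq)(a))` (`shift`). Write the coordinate `x` as
`∑ cᵢ uᵢ` up to an error of size `δ`, with `(uᵢ)` a partition of unity by bumps of width `O(δ)`
and `cᵢ₊₁ - cᵢ = δ`. Since products with disjoint supports are killed, the difference of the two
sides is `δ ∑ (i - j) Φ(uᵢ, uⱼ)` over `|i - j| ≤ 1`, up to `O(δ)`. There `i - j` depends only on
the residues of `i` and `j` mod 3, so the sum collapses to nine terms `Φ(W_r, W_q)`, where
`W_r = ∑_{i ≡ r} uᵢ ≤ 1`. Hence it is bounded independently of `δ` (`balanced`), and `δ → 0`.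

*The limit defining `h`.* The case of low powers gives `θ(a²)θ(a) = θ(a)θ(a²)` and
`θ(a²)² = θ(a)θ(a³)`. Replacing `a` by `e ± a` and letting `e` run through
an approximate unit yields `θ(3e - 2e²) θ(a²) → θ(a)²`, and the same from the right. Since squares
of self-adjoint elements span a C⋆-algebra, `L b = lim θ(3e - 2e²) b = lim b θ(3e - 2e²)` exists for
every `b : B`; it is a bounded map with `L (x y) = L x y = x L y` and `L (θ(a²)) = θ(a)²`
(`exists_limit`, `sq_of_selfAdjoint`).

*Invertibility.* The range of `L` contains all squares of `B`, so `L` is onto; if `L b = 0` then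
`b (L d) = (L b) d = 0` for all `d`, so `b = 0`. Thus `h = (L, L)` is a central invertible double
centralizer, and `L² (J(a²)) = θ(a)² = L² (J(a)²)` gives the Jordan identity.
-/

open scoped MultiplierAlgebra

namespace ZeroProduct

/-! ### A partition of unity on the line -/

/-- The ramp `t ↦ max 0 (min t 1)`, rising from `0` to `1` on `[0, 1]`. -/
noncomputable def ramp : C(ℝ, ℝ) := ⟨fun t => max 0 (min t 1), by fun_prop⟩

lemma ramp_of_nonpos {t : ℝ} (h : t ≤ 0) : ramp t = 0 := by
  change max 0 (min t 1) = 0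
  rw [min_eq_left (by linarith), max_eq_left h]

lemma ramp_of_one_le {t : ℝ} (h : 1 ≤ t) : ramp t = 1 := by
  change max 0 (min t 1) = 1
  rw [min_eq_right h, max_eq_right zero_le_one]

lemma ramp_mono {s t : ℝ} (h : s ≤ t) : ramp s ≤ ramp t := by
  change max 0 (min s 1) ≤ max 0 (min t 1)
  gcongr

lemma ramp_mem (t : ℝ) : 0 ≤ ramp t ∧ ramp t ≤ 1 := by
  change 0 ≤ max 0 (min t 1) ∧ max 0 (min t 1) ≤ 1
  simp

/-- The `i`-th bump of a partition of unity of mesh `δ`: supported within distance `δ` of the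
node `δ i - M`. The partition sums to `1` on `[-M, M]` once enough bumps are taken. -/
noncomputable def tent (M δ : ℝ) (i : ℕ) : C(ℝ, ℝ) :=
  ⟨fun x => ramp ((x + M) / δ + 1 - i) - ramp ((x + M) / δ + 1 - (i + 1)), by fun_prop⟩

lemma tent_apply (M δ : ℝ) (i : ℕ) (x : ℝ) : tent M δ i x =
    ramp ((x + M) / δ + 1 - i) - ramp ((x + M) / δ + 1 - (i + 1)) := rfl

lemma tent_nonneg (M δ : ℝ) (i : ℕ) (x : ℝ) : 0 ≤ tent M δ i x := by
  rw [tent_apply, sub_nonneg]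
  exact ramp_mono (by linarith)

lemma tent_supp {M δ : ℝ} {i : ℕ} {x : ℝ} (h : tent M δ i x ≠ 0) :
    (i : ℝ) < (x + M) / δ + 1 ∧ (x + M) / δ + 1 < i + 2 := by
  rw [tent_apply] at h
  constructor
  · by_contra! h'
    exact h (by rw [ramp_of_nonpos (by linarith), ramp_of_nonpos (by linarith), sub_zero])
  · by_contra! h'
    exact h (by rw [ramp_of_one_le (by linarith), ramp_of_one_le (by linarith), sub_self])

lemma sum_tent (M δ : ℝ) (N : ℕ) (x : ℝ) : ∑ i ∈ Finset.range N, tent M δ i x =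
    ramp ((x + M) / δ + 1) - ramp ((x + M) / δ + 1 - N) := by
  have := Finset.sum_range_sub' (fun i : ℕ => ramp ((x + M) / δ + 1 - i)) N
  simpa [tent_apply] using this

lemma tent_mul_tent (M δ : ℝ) {i j : ℕ} (h : i + 2 ≤ j ∨ j + 2 ≤ i) :
    tent M δ i * tent M δ j = 0 := by
  ext x
  by_contra hne
  have hne' : tent M δ i x * tent M δ j x ≠ 0 := hne
  have h1 := tent_supp (left_ne_zero_of_mul hne')
  have h2 := tent_supp (right_ne_zero_of_mul hne')
  rcases h with h | h
  · have : (i : ℝ) + 2 ≤ j := by exact_mod_cast h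
    linarith
  · have : (j : ℝ) + 2 ≤ i := by exact_mod_cast h
    linarith

/-! ### Moving the coordinate function across a disjointness-preserving pairing -/

/-- The lift of a residue mod 3 to `{0, 1, -1}`, so that `chi (i - j) = i - j` when `|i - j| ≤ 1`. -/
noncomputable def chi (r : ZMod 3) : ℝ := if r = 0 then 0 else if r = 1 then 1 else -1

lemma chi_abs_le (r : ZMod 3) : |chi r| ≤ 1 := by
  unfold chi; split_ifs <;> simp

lemma chi_sub {i j : ℕ} (h : ¬ (i + 2 ≤ j ∨ j + 2 ≤ i)) :
    chi ((i : ZMod 3) - j) = (i : ℝ) - j := by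
  have : i = j ∨ i = j + 1 ∨ j = i + 1 := by omega
  rcases this with rfl | rfl | rfl
  · simp [chi]
  · have : (1 : ZMod 3) ≠ 0 := by decide
    simp [chi]
  · have h0 : (-1 : ZMod 3) ≠ 0 := by decide
    have h1 : (-1 : ZMod 3) ≠ 1 := by decide
    simp [chi, h1]

/-- When `s i * t j` vanishes for `|i - j| ≥ 2`, the weights `i - j` depend only on residues mod 3,
and the double sum splits into nine products. -/
lemma sum_chi {B : Type*} [NonUnitalNormedRing B] [NormedSpace ℝ B] [IsScalarTower ℝ B B]
    [SMulCommClass ℝ B B] (s t : ℕ → B) (N : ℕ)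
    (h0 : ∀ i j, i + 2 ≤ j ∨ j + 2 ≤ i → s i * t j = 0) :
    ∑ i ∈ Finset.range N, ∑ j ∈ Finset.range N, ((i : ℝ) - j) • (s i * t j) =
      ∑ r : ZMod 3, ∑ q : ZMod 3, chi (r - q) •
        ((∑ i ∈ Finset.range N with ((i : ℕ) : ZMod 3) = r, s i) *
          ∑ j ∈ Finset.range N with ((j : ℕ) : ZMod 3) = q, t j) := by
  have h1 : ∀ i j : ℕ, ((i : ℝ) - j) • (s i * t j) =
      chi ((i : ZMod 3) - j) • (s i * t j) := by
    intro i j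
    by_cases h : i + 2 ≤ j ∨ j + 2 ≤ i
    · simp [h0 i j h]
    · rw [chi_sub h]
  simp_rw [h1]
  rw [← Finset.sum_fiberwise (Finset.range N) (fun i : ℕ => (i : ZMod 3))]
  refine Finset.sum_congr rfl fun r _ => ?_
  have h2 : ∀ i : ℕ, ∑ j ∈ Finset.range N, chi ((i : ZMod 3) - j) • (s i * t j) =
      ∑ q : ZMod 3, ∑ j ∈ Finset.range N with ((j : ℕ) : ZMod 3) = q,
        chi ((i : ZMod 3) - q) • (s i * t j) := by
    intro i
    rw [← Finset.sum_fiberwise (Finset.range N) (fun i : ℕ => (i : ZMod 3))]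
    refine Finset.sum_congr rfl fun q _ => Finset.sum_congr rfl fun j hj => ?_
    rw [(Finset.mem_filter.1 hj).2]
  simp_rw [h2]
  rw [Finset.sum_comm]
  refine Finset.sum_congr rfl fun q _ => ?_
  rw [Finset.sum_mul_sum, Finset.smul_sum]
  refine Finset.sum_congr rfl fun i hi => ?_
  rw [Finset.smul_sum, (Finset.mem_filter.1 hi).2]

/-- Two linear maps on `C(ℝ, ℝ)`, bounded for the supremum over `[-M, M]`, whose product kills
disjointly supported functions, allow the coordinate function to be moved from one factor to the
other. -/
theorem balanced {B : Type*} [NonUnitalNormedRing B] [NormedSpace ℝ B] [IsScalarTower ℝ B B]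
    [SMulCommClass ℝ B B] (S T : C(ℝ, ℝ) →ₗ[ℝ] B) (M K : ℝ)
    (hS : ∀ (u : C(ℝ, ℝ)) (c : ℝ), (∀ x, |x| ≤ M → |u x| ≤ c) → ‖S u‖ ≤ K * c)
    (hT : ∀ (u : C(ℝ, ℝ)) (c : ℝ), (∀ x, |x| ≤ M → |u x| ≤ c) → ‖T u‖ ≤ K * c)
    (hST : ∀ u v : C(ℝ, ℝ), u * v = 0 → S u * T v = 0) :
    S (.id ℝ) * T 1 = S 1 * T (.id ℝ) := by
  have hK : 0 ≤ K := by
    simpa using (norm_nonneg _).trans (hS 1 1 (by simp))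
  -- It suffices to bound the difference by a multiple of the mesh `δ`.
  suffices H : ∀ δ : ℝ, 0 < δ → ‖S (.id ℝ) * T 1 - S 1 * T (.id ℝ)‖ ≤ δ * (11 * K ^ 2) by
    rw [← sub_eq_zero, ← norm_le_zero_iff]
    refine le_of_forall_pos_le_add fun ε hε => ?_
    have h1 : 0 < 11 * K ^ 2 + 1 := by positivity
    refine (H (ε / (11 * K ^ 2 + 1)) (by positivity)).trans ?_
    rw [zero_add, div_mul_eq_mul_div, div_le_iff₀ h1]
    nlinarith
  intro δ hδ
  obtain ⟨N, hN⟩ := exists_nat_ge (2 * M / δ + 1)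
  set u := tent M δ with hu
  have hpart : ∀ x, |x| ≤ M → ∑ i ∈ Finset.range N, u i x = 1 := by
    intro x hx
    rw [abs_le] at hx
    have h0 : 0 ≤ (x + M) / δ := div_nonneg (by linarith) hδ.le
    have h1 : (x + M) / δ ≤ 2 * M / δ := by gcongr; linarith
    rw [hu, sum_tent, ramp_of_one_le (by linarith), ramp_of_nonpos (by linarith), sub_zero]
  set U : C(ℝ, ℝ) := ∑ i ∈ Finset.range N, u i with hU
  set V : C(ℝ, ℝ) := ∑ i ∈ Finset.range N, (δ * i - M) • u i with hV
  have hE : ∀ x, |x| ≤ M → |(ContinuousMap.id ℝ - V) x| ≤ δ := by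
    intro x hx
    have h1 : (ContinuousMap.id ℝ - V) x = ∑ i ∈ Finset.range N, (x - (δ * i - M)) * u i x := by
      simp_rw [sub_mul x, Finset.sum_sub_distrib, ← Finset.mul_sum, hpart x hx]
      simp [hV, ContinuousMap.sum_apply]
    rw [h1]
    refine (Finset.abs_sum_le_sum_abs _ _).trans ?_
    have h4 : δ = ∑ i ∈ Finset.range N, δ * u i x := by
      rw [← Finset.mul_sum, hpart x hx, mul_one]
    refine le_of_le_of_eq ?_ h4.symm
    refine Finset.sum_le_sum fun i _ => ?_
    rw [abs_mul, abs_of_nonneg (tent_nonneg M δ i x)]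
    by_cases h0 : u i x = 0
    · rw [h0]; simp
    · gcongr
      · exact tent_nonneg M δ i x
      · have h2 := tent_supp h0
        rw [abs_le]
        have h3 : (x + M) / δ * δ = x + M := div_mul_cancel₀ _ hδ.ne'
        constructor <;> nlinarith
  have hone : ∀ x, |x| ≤ M → |(1 - U) x| ≤ 0 := by
    intro x hx
    simp [hU, ContinuousMap.sum_apply, hpart x hx]
  have hS1 : S 1 = S U := by
    have := hS _ 0 hone
    rwa [mul_zero, norm_le_zero_iff, map_sub, sub_eq_zero] at this
  have hT1 : T 1 = T U := by
    have := hT _ 0 hone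
    rwa [mul_zero, norm_le_zero_iff, map_sub, sub_eq_zero] at this
  have hS1' : ‖S 1‖ ≤ K := by simpa using hS 1 1 (by simp)
  have hT1' : ‖T 1‖ ≤ K := by simpa using hT 1 1 (by simp)
  have hSE := hS _ δ hE
  have hTE := hT _ δ hE
  have hW : ∀ (r : ZMod 3) (x : ℝ), |x| ≤ M →
      |(∑ i ∈ Finset.range N with ((i : ℕ) : ZMod 3) = r, u i) x| ≤ 1 := by
    intro r x hx
    rw [ContinuousMap.sum_apply, abs_of_nonneg (Finset.sum_nonneg fun i _ => tent_nonneg M δ i x),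
      ← hpart x hx]
    exact Finset.sum_le_sum_of_subset_of_nonneg (Finset.filter_subset _ _)
      fun i _ _ => tent_nonneg M δ i x
  have hsplit : S (.id ℝ) * T 1 - S 1 * T (.id ℝ) =
      S (.id ℝ - V) * T 1 - S 1 * T (.id ℝ - V) + (S V * T U - S U * T V) := by
    rw [map_sub, map_sub, sub_mul, mul_sub, hS1, hT1]
    abel
  have hdiff : S V * T U - S U * T V = δ • ∑ i ∈ Finset.range N, ∑ j ∈ Finset.range N,
      ((i : ℝ) - j) • (S (u i) * T (u j)) := by
    simp only [hV, hU, map_sum, map_smul, Finset.sum_mul_sum, ← Finset.sum_sub_distrib,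
      Finset.smul_sum, smul_mul_assoc, mul_smul_comm, ← sub_smul, smul_smul]
    refine Finset.sum_congr rfl fun i _ => Finset.sum_congr rfl fun j _ => ?_
    congr 1
    ring
  have hbound : ‖S V * T U - S U * T V‖ ≤ δ * (9 * K ^ 2) := by
    rw [hdiff, norm_smul, Real.norm_of_nonneg hδ.le]
    gcongr
    rw [sum_chi (fun i => S (u i)) (fun i => T (u i)) N
      fun i j h => hST _ _ (tent_mul_tent M δ h)]
    have : ∀ r q : ZMod 3, ‖chi (r - q) •
        ((∑ i ∈ Finset.range N with ((i : ℕ) : ZMod 3) = r, S (u i)) *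
          ∑ j ∈ Finset.range N with ((j : ℕ) : ZMod 3) = q, T (u j))‖ ≤ K ^ 2 := by
      intro r q
      rw [← map_sum, ← map_sum, norm_smul, Real.norm_eq_abs]
      have h1 := hS _ 1 (hW r)
      have h2 := hT _ 1 (hW q)
      rw [mul_one] at h1 h2
      calc _ ≤ 1 * (K * K) := by
            gcongr
            · exact chi_abs_le _
            · exact (norm_mul_le _ _).trans (by gcongr)
        _ = K ^ 2 := by ring
    refine (norm_sum_le_of_le _ fun r _ => norm_sum_le_of_le _ fun q _ => this r q).trans ?_
    simp
    linarith
  rw [hsplit]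
  calc _ ≤ ‖S (.id ℝ - V)‖ * ‖T 1‖ + ‖S 1‖ * ‖T (.id ℝ - V)‖ + δ * (9 * K ^ 2) := by
        refine (norm_add_le _ _).trans (add_le_add ((norm_sub_le _ _).trans ?_) hbound)
        exact add_le_add (norm_mul_le _ _) (norm_mul_le _ _)
    _ ≤ (K * δ) * K + K * (K * δ) + δ * (9 * K ^ 2) := by gcongr
    _ = δ * (11 * K ^ 2) := by ring

/-! ### Identities for powers and their polarizations -/

section
variable {A B : Type*} [NonUnitalCStarAlgebra A] [NonUnitalCStarAlgebra B]

lemma eq_zero_of_add_self {b : B} (h : b + b = 0) : b = 0 := by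
  have : (2 : ℂ) • b = 0 := by rw [two_smul, h]
  simpa using this

/-- The map `u ↦ θ ((p u)(a))`. The factor `p`, vanishing at `0`, makes `p u` eligible for the
non-unital functional calculus for every `u`. -/
noncomputable def weighted (θ : A →L[ℂ] B) (a : A) (p : C(ℝ, ℝ)) (hp : p 0 = 0) :
    C(ℝ, ℝ) →ₗ[ℝ] B where
  toFun u := θ (cfcₙ (fun x : ℝ => p x * u x) a)
  map_add' u v := by
    rw [← map_add, ← cfcₙ_add (fun x : ℝ => p x * u x) (fun x : ℝ => p x * v x) a
      (by fun_prop) (by simp [hp]) (by fun_prop) (by simp [hp])]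
    simp only [ContinuousMap.add_apply, mul_add]
  map_smul' c u := by
    have h : cfcₙ (fun x : ℝ => p x * (c • u) x) a = c • cfcₙ (fun x : ℝ => p x * u x) a := by
      rw [← cfcₙ_const_mul c (fun x : ℝ => p x * u x) a (by fun_prop) (by simp [hp])]
      refine cfcₙ_congr fun x _ => ?_
      simp only [ContinuousMap.smul_apply, smul_eq_mul]
      ring
    rw [h, RingHom.id_apply, ← Complex.coe_smul, map_smul, Complex.coe_smul]

lemma weighted_bound (θ : A →L[ℂ] B) {a : A} (ha : IsSelfAdjoint a) (p : C(ℝ, ℝ)) (hp : p 0 = 0) (P : ℝ)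
    (hP : ∀ x, |x| ≤ ‖a‖ → |p x| ≤ P) (u : C(ℝ, ℝ)) (c : ℝ)
    (hu : ∀ x, |x| ≤ ‖a‖ → |u x| ≤ c) : ‖weighted θ a p hp u‖ ≤ ‖θ‖ * P * c := by
  rw [mul_assoc]
  refine (θ.le_opNorm _).trans ?_
  gcongr
  refine norm_cfcₙ_le fun x hx => ?_
  have hx' : |x| ≤ ‖a‖ := by
    simpa [cfcₙ_id ℝ a] using norm_apply_le_norm_cfcₙ (id : ℝ → ℝ) a hx
  rw [norm_mul]
  have := (abs_nonneg _).trans (hP x hx')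
  exact mul_le_mul (hP x hx') (hu x hx') (norm_nonneg _) this

theorem shift (θ : A →L[ℂ] B)
    (hθ : ∀ a b : A, IsSelfAdjoint a → IsSelfAdjoint b → a * b = 0 → θ a * θ b = 0)
    {a : A} (ha : IsSelfAdjoint a) (p q : C(ℝ, ℝ)) (hp : p 0 = 0) (hq : q 0 = 0) :
    θ (cfcₙ (fun x : ℝ => p x * x) a) * θ (cfcₙ q a) =
      θ (cfcₙ p a) * θ (cfcₙ (fun x : ℝ => q x * x) a) := by
  have hbd : ∀ r : C(ℝ, ℝ), ∃ R, ∀ x, |x| ≤ ‖a‖ → |r x| ≤ R := by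
    intro r
    obtain ⟨R, hR⟩ := (isCompact_Icc (a := -‖a‖) (b := ‖a‖)).exists_bound_of_continuousOn
      r.continuous.continuousOn
    exact ⟨R, fun x hx => hR x (abs_le.1 hx)⟩
  obtain ⟨P, hP⟩ := hbd p
  obtain ⟨Q, hQ⟩ := hbd q
  have key := balanced (weighted θ a p hp) (weighted θ a q hq) ‖a‖ (‖θ‖ * max P Q)
    (weighted_bound θ ha p hp _ fun x hx => (hP x hx).trans (le_max_left _ _))
    (weighted_bound θ ha q hq _ fun x hx => (hQ x hx).trans (le_max_right _ _))
    (by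
      intro u v huv
      refine hθ _ _ (cfcₙ_predicate _ a) (cfcₙ_predicate _ a) ?_
      rw [← cfcₙ_mul (fun x : ℝ => p x * u x) (fun x : ℝ => q x * v x) a
        (by fun_prop) (by simp [hp]) (by fun_prop) (by simp [hq]), ← cfcₙ_zero ℝ a]
      refine cfcₙ_congr fun x _ => ?_
      have h : u x * v x = 0 := congrArg (fun w : C(ℝ, ℝ) => w x) huv
      simp only [Pi.zero_apply]
      linear_combination p x * q x * h)
  simpa [weighted] using key

variable (θ : A →L[ℂ] B)
    (hθ : ∀ a b : A, IsSelfAdjoint a → IsSelfAdjoint b → a * b = 0 → θ a * θ b = 0)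
include hθ

lemma powers {a : A} (ha : IsSelfAdjoint a) :
    θ (a * a) * θ a = θ a * θ (a * a) ∧ θ (a * a) * θ (a * a) = θ a * θ (a * a * a) := by
  have h1 : cfcₙ (fun x : ℝ => x) a = a := cfcₙ_id' ℝ a
  have h2 : cfcₙ (fun x : ℝ => x * x) a = a * a := by
    rw [cfcₙ_mul (fun x : ℝ => x) (fun x : ℝ => x) a, h1]
  have h3 : cfcₙ (fun x : ℝ => x * x * x) a = a * a * a := by
    rw [cfcₙ_mul (fun x : ℝ => x * x) (fun x : ℝ => x) a, h1, h2]
  have e1 := shift θ hθ ha ⟨fun x => x, by fun_prop⟩ ⟨fun x => x, by fun_prop⟩ rfl rfl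
  have e2 := shift θ hθ ha ⟨fun x => x, by fun_prop⟩ ⟨fun x => x * x, by fun_prop⟩ rfl (by simp)
  simp only [ContinuousMap.coe_mk, h1, h2, h3] at e1 e2
  exact ⟨e1, e2⟩

/-- The part of `θ(x²)θ(x) = θ(x)θ(x²)` at `x = e + a` that is linear in `a`. -/
lemma polar_cubic {e a : A} (he : IsSelfAdjoint e) (ha : IsSelfAdjoint a) :
    θ (e * e) * θ a - θ a * θ (e * e) =
      θ e * θ (e * a + a * e) - θ (e * a + a * e) * θ e := by
  have h0 := (powers θ hθ he).1
  have h1 := (powers θ hθ (he.add ha)).1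
  have h2 := (powers θ hθ (he.sub ha)).1
  have h3 := (powers θ hθ ha).1
  simp only [map_add, map_sub, mul_add, add_mul, mul_sub, sub_mul] at *
  rw [← sub_eq_zero] at *
  apply eq_zero_of_add_self
  linear_combination (norm := abel) h1 - h2 - h3 - h3

/-- The part of `θ(x²)² = θ(x)θ(x³)` at `x = e + a` that is quadratic in `a`. -/
lemma polar_quartic {e a : A} (he : IsSelfAdjoint e) (ha : IsSelfAdjoint a) :
    θ (e * e) * θ (a * a) + θ (a * a) * θ (e * e) + θ (e * a + a * e) * θ (e * a + a * e) =
      θ e * θ (a * a * e + a * e * a + e * a * a) +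
        θ a * θ (a * e * e + e * a * e + e * e * a) := by
  have h0 := (powers θ hθ he).2
  have h1 := (powers θ hθ (he.add ha)).2
  have h2 := (powers θ hθ (he.sub ha)).2
  have h3 := (powers θ hθ ha).2
  simp only [map_add, map_sub, mul_add, add_mul, mul_sub, sub_mul] at *
  rw [← sub_eq_zero] at *
  apply eq_zero_of_add_self
  linear_combination (norm := abel) h1 + h2 - h3 - h3 - h0 - h0
end

/-! ### The limit along an approximate unit -/

section
variable {A B : Type*} [NonUnitalCStarAlgebra A] [NonUnitalCStarAlgebra B]

lemma span_squares (A : Type*) [NonUnitalCStarAlgebra A] :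
    Submodule.span ℂ {x : A | ∃ a, IsSelfAdjoint a ∧ x = a * a} = ⊤ := by
  let _ : PartialOrder A := CStarAlgebra.spectralOrder A
  let _ : StarOrderedRing A := CStarAlgebra.spectralOrderedRing A
  rw [eq_top_iff, ← CStarAlgebra.span_nonneg]
  refine Submodule.span_mono fun x (hx : 0 ≤ x) => ?_
  exact ⟨CFC.sqrt x, (CFC.sqrt_nonneg x).isSelfAdjoint, (CFC.sqrt_mul_sqrt_self x hx).symm⟩

open Filter Topology

lemma tendsto_bdd_mul {ι : Type*} {l : Filter ι} {f k : ι → B} {C : ℝ}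
    (hf : ∀ᶠ e in l, ‖f e‖ ≤ C) (hk : Tendsto k l (𝓝 0)) :
    Tendsto (fun e => f e * k e) l (𝓝 0) :=
  isBoundedUnder_le_mul_tendsto_zero (isBoundedUnder_of_eventually_le hf) hk

lemma tendsto_mul_bdd {ι : Type*} {l : Filter ι} {f k : ι → B} {C : ℝ}
    (hf : ∀ᶠ e in l, ‖f e‖ ≤ C) (hk : Tendsto k l (𝓝 0)) :
    Tendsto (fun e => k e * f e) l (𝓝 0) :=
  hk.zero_mul_isBoundedUnder_le (isBoundedUnder_of_eventually_le hf)

variable {l : Filter A} (hl : l.IsApproximateUnit) (hsa : ∀ᶠ e in l, IsSelfAdjoint e)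
  (hnorm : ∀ᶠ e in l, ‖e‖ ≤ 1)

include hl hnorm in
lemma tendsto_mul_unit {f : A → A} {c : A} (hf : Tendsto f l (𝓝 c)) :
    Tendsto (fun e => f e * e) l (𝓝 c) := by
  have h1 : Tendsto (fun e => f e - c) l (𝓝 0) := by simpa using hf.sub_const c
  have h2 := (tendsto_mul_bdd hnorm h1).add (hl.tendsto_mul_left c)
  simpa [sub_mul] using h2

include hl hnorm in
lemma tendsto_unit_mul {f : A → A} {c : A} (hf : Tendsto f l (𝓝 c)) :
    Tendsto (fun e => e * f e) l (𝓝 c) := by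
  have h1 : Tendsto (fun e => f e - c) l (𝓝 0) := by simpa using hf.sub_const c
  have h2 := (tendsto_bdd_mul hnorm h1).add (hl.tendsto_mul_right c)
  simpa [mul_sub] using h2

variable (θ : A →L[ℂ] B)
    (hθ : ∀ a b : A, IsSelfAdjoint a → IsSelfAdjoint b → a * b = 0 → θ a * θ b = 0)

include hnorm in
lemma eventually_bdd : ∀ᶠ e in l, ‖θ e‖ ≤ ‖θ‖ := by
  filter_upwards [hnorm] with e he
  simpa using θ.le_opNorm_of_le he

include hl in
lemma tendsto_anti (a : A) : Tendsto (fun e => θ (e * a + a * e)) l (𝓝 (θ a + θ a)) := by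
  rw [← map_add]
  exact (θ.continuous.tendsto _).comp ((hl.tendsto_mul_right a).add (hl.tendsto_mul_left a))

include hl hsa hθ in
/-- `[θ(e), θ(a²)] → 0`: polarize with the roles of `e` and `a` exchanged. -/
lemma comm_unit {a : A} (ha : IsSelfAdjoint a) :
    Tendsto (fun e => θ (a * a) * θ e - θ e * θ (a * a)) l (𝓝 0) := by
  have h1 := tendsto_anti hl θ a
  have h2 : Tendsto (fun e => θ a * θ (e * a + a * e) - θ (e * a + a * e) * θ a) l (𝓝 0) := by
    have := (h1.const_mul (θ a)).sub (h1.mul_const (θ a))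
    simpa [mul_add, add_mul] using this
  refine h2.congr' ?_
  filter_upwards [hsa] with e he
  rw [polar_cubic θ hθ ha he, add_comm (e * a)]

include hl hsa hnorm hθ in
/-- `[θ(a²), θ(e²)] → 0`, because the cubic identity makes it asymptotic to
`2 [θ(a²), θ(e)]`. -/
lemma comm_unit_sq {a : A} (ha : IsSelfAdjoint a) :
    Tendsto (fun e => θ (a * a) * θ (e * e) - θ (e * e) * θ (a * a)) l (𝓝 0) := by
  have haa : IsSelfAdjoint (a * a) := by
    simpa [ha.star_eq] using IsSelfAdjoint.star_mul_self a
  have h0 := comm_unit hl hsa θ hθ ha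
  have h1 : Tendsto (fun e => θ (e * (a * a) + (a * a) * e) - (θ (a * a) + θ (a * a))) l (𝓝 0) := by
    simpa using (tendsto_anti hl θ (a * a)).sub_const (θ (a * a) + θ (a * a))
  have hb := eventually_bdd hnorm θ
  have h2 := ((tendsto_mul_bdd hb h1).sub (tendsto_bdd_mul hb h1)).add (h0.add h0)
  simp only [sub_zero, add_zero] at h2
  refine h2.congr' ?_
  filter_upwards [hsa] with e he
  have h3 := polar_cubic θ hθ he haa
  rw [← sub_eq_zero] at h3
  simp only [sub_mul, mul_sub, mul_add, add_mul]
  linear_combination (norm := abel) h3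

include hl hsa hnorm hθ in
/-- In the quartic identity every term except those with `θ(e)` and `θ(e²)` converges to a multiple
of `θ(a)²`; the coefficients `3` and `2` are the ones that identity produces. -/
lemma tendsto_left {a : A} (ha : IsSelfAdjoint a) :
    Tendsto (fun e => ((3 : ℂ) • θ e - (2 : ℂ) • θ (e * e)) * θ (a * a)) l
      (𝓝 (θ a * θ a)) := by
  have h0 := comm_unit_sq hl hsa hnorm θ hθ ha
  have hb := eventually_bdd hnorm θ
  have hX := tendsto_anti hl θ a
  have hLa := hl.tendsto_mul_left a
  have hRa := hl.tendsto_mul_right a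
  have hY : Tendsto (fun e => θ (a * a * e + a * e * a + e * a * a)
      - θ (a * a + a * a + a * a)) l (𝓝 0) := by
    have h1 : Tendsto (fun e => a * a * e + a * e * a + e * a * a) l
        (𝓝 (a * a + a * a + a * a)) :=
      ((hl.tendsto_mul_left (a * a)).add (hLa.mul_const a)).add (hRa.mul_const a)
    simpa only [sub_self, Function.comp_def] using
      (((θ.continuous.tendsto _).comp h1).sub_const (θ (a * a + a * a + a * a)))
  have hZ : Tendsto (fun e => θ (a * e * e + e * a * e + e * e * a)) l (𝓝 (θ (a + a + a))) := by
    have h1 := ((tendsto_mul_unit hl hnorm hLa).add (tendsto_mul_unit hl hnorm hRa)).add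
      (tendsto_unit_mul hl hnorm hRa)
    simp only [← mul_assoc] at h1
    exact (θ.continuous.tendsto _).comp h1
  have h1 := ((h0.add (hX.mul hX)).sub (hZ.const_mul (θ a))).sub (tendsto_bdd_mul hb hY)
  have h2 : 0 + (θ a + θ a) * (θ a + θ a) - θ a * θ (a + a + a) - 0 = θ a * θ a := by
    simp only [map_add, mul_add, add_mul]
    abel
  rw [h2] at h1
  refine h1.congr' ?_
  filter_upwards [hsa] with e he
  have h3 := polar_quartic θ hθ he ha
  rw [← sub_eq_zero] at h3
  have e3 : (3 : ℂ) • θ e = θ e + θ e + θ e := by module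
  rw [e3, two_smul]
  simp only [map_add, sub_mul, mul_sub, mul_add, add_mul] at h3 ⊢
  linear_combination (norm := abel) h3

include hl hsa hnorm hθ in
lemma tendsto_right {a : A} (ha : IsSelfAdjoint a) :
    Tendsto (fun e => θ (a * a) * ((3 : ℂ) • θ e - (2 : ℂ) • θ (e * e))) l
      (𝓝 (θ a * θ a)) := by
  have h1 := ((tendsto_left hl hsa hnorm θ hθ ha).add
    ((comm_unit hl hsa θ hθ ha).const_smul (3 : ℂ))).sub
      ((comm_unit_sq hl hsa hnorm θ hθ ha).const_smul (2 : ℂ))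
  simp only [smul_zero, add_zero, sub_zero] at h1
  refine h1.congr fun e => ?_
  simp only [sub_mul, mul_sub, smul_sub, smul_mul_assoc, mul_smul_comm]
  abel

include hθ in
/-- The multiplier `lim θ(3e - 2e²)`, realised as a single map serving as left and right
multiplication. -/
theorem exists_limit (hsurj : Function.Surjective θ) :
    ∃ L : B →L[ℂ] B, (∀ x y, L (x * y) = L x * y) ∧ (∀ x y, L (x * y) = x * L y) ∧
      ∀ a, IsSelfAdjoint a → L (θ (a * a)) = θ a * θ a := by
  let _ : PartialOrder A := CStarAlgebra.spectralOrder A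
  let _ : StarOrderedRing A := CStarAlgebra.spectralOrderedRing A
  have hinc := CStarAlgebra.increasingApproximateUnit A
  set l := CStarAlgebra.approximateUnit A
  have hl : l.IsApproximateUnit := hinc.toIsApproximateUnit
  have hsa := hinc.eventually_isSelfAdjoint
  have hnorm := hinc.eventually_norm
  have := hl.neBot
  set g : A → B := fun e => (3 : ℂ) • θ e - (2 : ℂ) • θ (e * e) with hg
  have hgb : ∀ᶠ e in l, ‖g e‖ ≤ 5 * ‖θ‖ := by
    filter_upwards [hnorm] with e he
    have h1 : ‖θ e‖ ≤ ‖θ‖ := by simpa using θ.le_opNorm_of_le he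
    have h2 : ‖θ (e * e)‖ ≤ ‖θ‖ := by
      have : ‖e * e‖ ≤ 1 :=
        (norm_mul_le _ _).trans (mul_le_one₀ he (norm_nonneg _) he)
      simpa using θ.le_opNorm_of_le this
    refine (norm_sub_le _ _).trans ?_
    rw [norm_smul, norm_smul]
    norm_num
    linarith
  have hex : ∀ b : B, ∃ c, Tendsto (fun e => g e * b) l (𝓝 c) ∧
      Tendsto (fun e => b * g e) l (𝓝 c) := by
    intro b
    obtain ⟨x, rfl⟩ := hsurj b
    have hx : x ∈ Submodule.span ℂ {x : A | ∃ a, IsSelfAdjoint a ∧ x = a * a} := by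
      rw [span_squares]; trivial
    induction hx using Submodule.span_induction with
    | mem x hx =>
      obtain ⟨a, ha, rfl⟩ := hx
      exact ⟨_, tendsto_left hl hsa hnorm θ hθ ha, tendsto_right hl hsa hnorm θ hθ ha⟩
    | zero => exact ⟨0, by simp, by simp⟩
    | add x y _ _ hx hy =>
      obtain ⟨c, hc, hc'⟩ := hx
      obtain ⟨d, hd, hd'⟩ := hy
      exact ⟨c + d, by simpa [mul_add] using hc.add hd, by simpa [add_mul] using hc'.add hd'⟩
    | smul r x _ hx =>
      obtain ⟨c, hc, hc'⟩ := hx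
      exact ⟨r • c, by simpa [mul_smul_comm] using hc.const_smul r,
        by simpa [smul_mul_assoc] using hc'.const_smul r⟩
  choose L hL hR using hex
  let L' : B →ₗ[ℂ] B :=
    { toFun := L
      map_add' := fun b c => tendsto_nhds_unique (hL (b + c)) <| by
        simpa [mul_add] using (hL b).add (hL c)
      map_smul' := fun r b => tendsto_nhds_unique (hL (r • b)) <| by
        simpa [mul_smul_comm] using (hL b).const_smul r }
  refine ⟨L'.mkContinuous (5 * ‖θ‖) fun b => ?_, fun x y => ?_, fun x y => ?_, fun a ha => ?_⟩
  · refine le_of_tendsto (hL b).norm ?_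
    filter_upwards [hgb] with e he
    exact (norm_mul_le _ _).trans (by gcongr)
  · refine tendsto_nhds_unique (hL (x * y)) ?_
    simpa only [mul_assoc] using! (hL x).mul_const y
  · refine tendsto_nhds_unique (hR (x * y)) ?_
    simpa only [mul_assoc] using! (hR y).const_mul x
  · exact tendsto_nhds_unique (hL _) (tendsto_left hl hsa hnorm θ hθ ha)

omit hθ in
lemma sq_of_selfAdjoint (L : B →L[ℂ] B)
    (hL : ∀ a, IsSelfAdjoint a → L (θ (a * a)) = θ a * θ a) (a : A) :
    L (θ (a * a)) = θ a * θ a := by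
  have hpol : ∀ x y : A, IsSelfAdjoint x → IsSelfAdjoint y →
      L (θ (x * y)) + L (θ (y * x)) = θ x * θ y + θ y * θ x := by
    intro x y hx hy
    have h1 := hL _ (hx.add hy)
    have h2 := hL x hx
    have h3 := hL y hy
    simp only [map_add, mul_add, add_mul] at h1
    linear_combination (norm := abel) h1 - h2 - h3
  have h2 := hL _ (realPart a).2
  have h3 := hL _ (imaginaryPart a).2
  have h1 := hpol _ _ (realPart a).2 (imaginaryPart a).2
  have hI : ∀ z : B, Complex.I • Complex.I • z = -z := fun z => by
    rw [smul_smul, Complex.I_mul_I, neg_one_smul]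
  rw [← realPart_add_I_smul_imaginaryPart a]
  simp only [map_add, map_smul, mul_add, add_mul, smul_mul_assoc, mul_smul_comm,
    smul_add, hI, map_neg]
  linear_combination (norm := module) h2 - h3 + Complex.I • h1

end

end ZeroProduct

open ZeroProduct

/-- Let `A`, `B` be (not necessarily unital) C*-algebras and `θ : A → B`
a surjective bounded linear map sending zero products of self-adjoint elements to zero
products.  Then, regarding `B` inside its multiplier algebra `M(B) = 𝓜(ℂ, B)`, there are
a central invertible element `h` of `M(B)` and a surjective bounded linear Jordan
homomorphism `J : A → B` with `θ a = h * J a` in `M(B)` for all `a`. -/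
theorem zpp_selfAdjoint_surjective_factors_jordan
    {A B : Type*} [NonUnitalCStarAlgebra A] [NonUnitalCStarAlgebra B]
    (θ : A →L[ℂ] B) (hsurj : Function.Surjective θ)
    (hθ : ∀ a b : A, IsSelfAdjoint a → IsSelfAdjoint b → a * b = 0 → θ a * θ b = 0) :
    ∃ h : 𝓜(ℂ, B), (∀ m : 𝓜(ℂ, B), h * m = m * h) ∧ IsUnit h ∧
      ∃ J : A →L[ℂ] B, Function.Surjective J ∧ (∀ a : A, J (a * a) = J a * J a) ∧
        ∀ a : A, (θ a : 𝓜(ℂ, B)) = h * (J a : 𝓜(ℂ, B)) := by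
  obtain ⟨L, hL₁, hL₂, hLsa⟩ := exists_limit θ hθ hsurj
  have hLsq := sq_of_selfAdjoint θ L hLsa
  have hLsurj : Function.Surjective L := by
    suffices H : L.toLinearMap.range = ⊤ from LinearMap.range_eq_top.1 H
    rw [eq_top_iff, ← span_squares B, Submodule.span_le]
    rintro _ ⟨b, -, rfl⟩
    obtain ⟨a, rfl⟩ := hsurj b
    exact ⟨_, hLsq a⟩
  -- `b * L d = L b * d`, and `L` is onto, so `L b = 0` makes `b` annihilate `B`.
  have hLinj : Function.Injective L := by
    refine (injective_iff_map_eq_zero L).2 fun b hb => CStarRing.mul_star_self_eq_zero_iff b |>.1 ?_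
    obtain ⟨d, hd⟩ := hLsurj (star b)
    rw [← hd, ← hL₂, hL₁, hb, zero_mul]
  let E : B ≃L[ℂ] B := ContinuousLinearEquiv.ofBijective L
    (LinearMap.ker_eq_bot.2 hLinj) (LinearMap.range_eq_top.2 hLsurj)
  have hE : ∀ b, L (E.symm b) = b := fun b => E.apply_symm_apply b
  have hE' : ∀ b, E.symm (L b) = b := fun b => E.symm_apply_apply b
  let h : 𝓜(ℂ, B) := ⟨(L, L), fun x y => by rw [← hL₁, hL₂]⟩
  let k : 𝓜(ℂ, B) := ⟨((E.symm : B →L[ℂ] B), (E.symm : B →L[ℂ] B)), fun x y => by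
    apply hLinj
    change L (E.symm x * y) = L (x * E.symm y)
    rw [hL₁, hL₂, hE, hE]⟩
  have hcent : ∀ m : 𝓜(ℂ, B), h * m = m * h := by
    intro m
    apply DoubleCentralizer.ext
    refine Prod.ext (ContinuousLinearMap.ext fun b => ?_) (ContinuousLinearMap.ext fun b => ?_)
    · change L (m.fst b) = m.fst (L b)
      refine sub_eq_zero.1 (CStarRing.star_mul_self_eq_zero_iff _ |>.1 ?_)
      set c := star (L (m.fst b) - m.fst (L b))
      rw [mul_sub, ← m.central, ← hL₂, ← hL₂, ← m.central, sub_self]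
    · change m.snd (L b) = L (m.snd b)
      refine sub_eq_zero.1 (CStarRing.mul_star_self_eq_zero_iff _ |>.1 ?_)
      set c := star (m.snd (L b) - L (m.snd b))
      rw [sub_mul, m.central, ← hL₁, ← hL₁, m.central, sub_self]
  have hhk : h * k = 1 := by
    apply DoubleCentralizer.ext
    exact Prod.ext (ContinuousLinearMap.ext fun b => hE b) (ContinuousLinearMap.ext fun b => hE' b)
  have hkh : k * h = 1 := by rw [← hcent, hhk]
  refine ⟨h, hcent, ⟨⟨h, k, hhk, hkh⟩, rfl⟩, (E.symm : B →L[ℂ] B).comp θ, ?_, fun a => ?_,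
    fun a => ?_⟩
  · exact E.symm.surjective.comp hsurj
  -- Applying `L` twice absorbs both inverse factors in `J a * J a`.
  · apply hLinj
    apply hLinj
    change L (L (E.symm (θ (a * a)))) = L (L (E.symm (θ a) * E.symm (θ a)))
    rw [hE, hLsq, hL₁, hL₂, hE]
  · apply DoubleCentralizer.ext
    refine Prod.ext (ContinuousLinearMap.ext fun b => ?_) (ContinuousLinearMap.ext fun b => ?_)
    · change θ a * b = L (E.symm (θ a) * b)
      rw [hL₁, hE]
    · change b * θ a = L b * E.symm (θ a)
      rw [← hL₁, hL₂, hE]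
end
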